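/- Let k ≥ 2 be an integer and let G be a 2-connected graph containing a triangle. If G has minimum degree at least k and at least k+2 vertices, then G contains k cycles of consecutive lengths, i.e., there exists an integer m such that G contains cycles of lengths m, m+1, ..., m+k-1. -/

import Mathlib

open SimpleGraph

/-- `G` is `k`-connected: more than `k` vertices, and deleting any set of fewer than
`k` vertices leaves a connected graph. -/
def KConnected {V : Type*} (G : SimpleGraph V) (k : ℕ) : Prop :=
  k < Nat.card V ∧ ∀ S : Set V, S.Finite → S.ncard < k → (G.induce Sᶜ).Connected

/-- `G + xy`: the graph `G` with the edge `xy` added (equal to `G` if already present). -/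
def AddEdge {V : Type*} (G : SimpleGraph V) (x y : V) : SimpleGraph V :=
  G ⊔ SimpleGraph.fromEdgeSet {s(x, y)}

/-- `G` has a cycle of length `n`. -/
def HasCycleLength {V : Type*} (G : SimpleGraph V) (n : ℕ) : Prop :=
  ∃ (v : V) (c : G.Walk v v), c.IsCycle ∧ c.length = n

/-- `G` contains `k` cycles of consecutive lengths. -/
def HasConsecCycles {V : Type*} (G : SimpleGraph V) (k : ℕ) : Prop :=
  ∃ m : ℕ, ∀ i < k, HasCycleLength G (m + i)

section
open scoped Classical
variable {V : Type*} {G : SimpleGraph V}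

/-- A path from `u` to `v` with `n` edges and all vertices in `C`. -/
inductive PathIn (G : SimpleGraph V) : Finset V → V → V → ℕ → Prop
  | nil {C : Finset V} {v : V} : v ∈ C → PathIn G C v v 0
  | cons {C : Finset V} {u w v : V} {n : ℕ} :
      u ∈ C → G.Adj u w → PathIn G (C.erase u) w v n → PathIn G C u v (n + 1)

namespace PathIn

theorem mono {C D : Finset V} {u v : V} {n : ℕ} (h : PathIn G C u v n) (hCD : C ⊆ D) :
    PathIn G D u v n := by
  induction h generalizing D with
  | nil h => exact .nil (hCD h)
  | cons h a _ ih => exact .cons (hCD h) a (ih (Finset.erase_subset_erase _ hCD))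

theorem left_mem {C : Finset V} {u v : V} {n : ℕ} (h : PathIn G C u v n) : u ∈ C := by
  cases h <;> assumption

theorem append {C D : Finset V} {u v w t : V} {n r : ℕ} (h : PathIn G C u v n)
    (a : G.Adj v w) (h' : PathIn G D w t r) (hd : Disjoint C D) :
    PathIn G (C ∪ D) u t (n + r + 1) := by
  induction h with
  | @nil C v hv =>
    rw [Nat.zero_add]
    refine .cons (Finset.mem_union_left _ hv) a (h'.mono fun x hx => ?_)
    have : x ≠ v := fun e => Finset.disjoint_left.1 hd hv (e ▸ hx)
    simp [this, hx]
  | @cons C u w' v n hu b p ih =>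
    have := ih a (hd.mono_left (Finset.erase_subset _ _))
    rw [show n + 1 + r + 1 = (n + r + 1) + 1 by omega]
    refine .cons (Finset.mem_union_left _ hu) b (this.mono fun x hx => ?_)
    rcases Finset.mem_union.1 hx with hx | hx
    · simp only [Finset.mem_erase] at hx ⊢
      exact ⟨hx.1, Finset.mem_union_left _ hx.2⟩
    · have : x ≠ u := fun e => Finset.disjoint_left.1 hd hu (e ▸ hx)
      simp [this, hx]

theorem symm {C : Finset V} {u v : V} {n : ℕ} (h : PathIn G C u v n) : PathIn G C v u n := by
  induction h with
  | nil h => exact .nil h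
  | @cons C u w v n hu a p ih =>
    have := ih.append a.symm (PathIn.nil (G := G) (Finset.mem_singleton_self u))
      (Finset.disjoint_singleton_right.2 (Finset.notMem_erase u C))
    exact this.mono (Finset.union_subset (Finset.erase_subset _ _)
      (Finset.singleton_subset_iff.2 hu))

theorem step {C : Finset V} {v u w : V} {n : ℕ} (h : PathIn G C v u n) (a : G.Adj u w)
    (hw : w ∈ C) : ∃ m, PathIn G C v w m := by
  induction h with
  | @nil C v hv =>
    exact ⟨1, .cons hv a (.nil (Finset.mem_erase.2 ⟨a.ne', hw⟩))⟩
  | @cons C v b u n hv hab p ih =>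
    by_cases e : w = v
    · subst e; exact ⟨0, .nil hv⟩
    · obtain ⟨m, hm⟩ := ih a (Finset.mem_erase.2 ⟨e, hw⟩)
      exact ⟨m + 1, .cons hv hab hm⟩

theorem mem_of_closed {C M : Finset V} {v w : V} {n : ℕ} (h : PathIn G C v w n) (hv : v ∈ M)
    (hM : ∀ u ∈ M, ∀ w ∈ C, G.Adj u w → w ∈ M) : w ∈ M := by
  induction h with
  | nil h => exact hv
  | @cons C v b u n hvC hab p ih =>
    exact ih (hM v hv b (Finset.mem_of_mem_erase p.left_mem) hab)
      fun u hu w hw => hM u hu w (Finset.mem_of_mem_erase hw)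

theorem exists_walk {C : Finset V} {u v : V} {n : ℕ} (h : PathIn G C u v n) :
    ∃ p : G.Walk u v, p.IsPath ∧ (∀ w ∈ p.support, w ∈ C) ∧ p.length = n := by
  induction h with
  | nil h => exact ⟨.nil, by simp, by simpa using h, rfl⟩
  | @cons C u w v n hu a p ih =>
    obtain ⟨q, hq, hs, hl⟩ := ih
    refine ⟨.cons a q, ?_, ?_, by simp [hl]⟩
    · rw [SimpleGraph.Walk.cons_isPath_iff]
      exact ⟨hq, fun h => Finset.notMem_erase u C (hs u h)⟩
    · intro x hx
      rw [SimpleGraph.Walk.support_cons, List.mem_cons] at hx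
      rcases hx with rfl | hx
      · exact hu
      · exact Finset.mem_of_mem_erase (hs x hx)

end PathIn

/-- `C` induces a connected graph: no proper nonempty part of `C` is closed under adjacency. -/
def ConnIn (G : SimpleGraph V) (C : Finset V) : Prop :=
  C.Nonempty ∧ ∀ M ⊆ C, M.Nonempty → (∀ u ∈ M, ∀ w ∈ C, G.Adj u w → w ∈ M) → C ⊆ M

/-- The component of `v` in the graph induced on `C`. -/
noncomputable def compIn (G : SimpleGraph V) (C : Finset V) (v : V) : Finset V :=
  C.filter fun w => ∃ n, PathIn G C v w n

theorem compIn_subset {C : Finset V} {v : V} : compIn G C v ⊆ C := Finset.filter_subset _ _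

theorem self_mem_compIn {C : Finset V} {v : V} (h : v ∈ C) : v ∈ compIn G C v :=
  Finset.mem_filter.2 ⟨h, 0, .nil h⟩

theorem compIn_closed {C : Finset V} {v u w : V} (hu : u ∈ compIn G C v) (hw : w ∈ C)
    (a : G.Adj u w) : w ∈ compIn G C v := by
  obtain ⟨_, n, hn⟩ := Finset.mem_filter.1 hu
  exact Finset.mem_filter.2 ⟨hw, hn.step a hw⟩

theorem compIn_subset_of_closed {C M : Finset V} {v : V} (hv : v ∈ M)
    (hM : ∀ u ∈ M, ∀ w ∈ C, G.Adj u w → w ∈ M) : compIn G C v ⊆ M := by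
  intro w hw
  obtain ⟨_, n, hn⟩ := Finset.mem_filter.1 hw
  exact hn.mem_of_closed hv hM

theorem connIn_compIn {C : Finset V} {v : V} (h : v ∈ C) : ConnIn G (compIn G C v) := by
  refine ⟨⟨v, self_mem_compIn h⟩, fun M hM ⟨m, hm⟩ hcl => ?_⟩
  by_cases hv : v ∈ M
  · exact compIn_subset_of_closed hv fun u hu w hw a =>
      hcl u hu w (compIn_closed (hM hu) hw a) a
  · have : compIn G C v ⊆ compIn G C v \ M := by
      refine compIn_subset_of_closed (Finset.mem_sdiff.2 ⟨self_mem_compIn h, hv⟩) ?_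
      intro u hu w hw a
      rw [Finset.mem_sdiff] at hu ⊢
      exact ⟨compIn_closed hu.1 hw a, fun hwM => hu.2 (hcl w hwM u hu.1 a.symm)⟩
    exact absurd hm (Finset.mem_sdiff.1 (this (hM hm))).2

theorem ConnIn.exists_path {C : Finset V} (h : ConnIn G C) {u v : V} (hu : u ∈ C) (hv : v ∈ C) :
    ∃ n, PathIn G C u v n := by
  have := h.2 (compIn G C u) compIn_subset ⟨u, self_mem_compIn hu⟩
    fun a ha w hw => compIn_closed ha hw
  exact (Finset.mem_filter.1 (this hv)).2

/-- Some path inside `C` with `n` edges leads from `X` to `Y`. -/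
def Link (G : SimpleGraph V) (C X Y : Finset V) (n : ℕ) : Prop :=
  ∃ u ∈ X, ∃ v ∈ Y, PathIn G C u v n

theorem Link.symm {C X Y : Finset V} {n : ℕ} : Link G C X Y n → Link G C Y X n :=
  fun ⟨u, hu, v, hv, h⟩ => ⟨v, hv, u, hu, h.symm⟩

theorem Link.mono {C D X X' Y Y' : Finset V} {n : ℕ} (h : Link G C X Y n) (hC : C ⊆ D)
    (hX : X ⊆ X') (hY : Y ⊆ Y') : Link G D X' Y' n := by
  obtain ⟨u, hu, v, hv, p⟩ := h
  exact ⟨u, hX hu, v, hY hv, p.mono hC⟩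

theorem Link.prepend {H D X E S T : Finset V} {t s : ℕ} (hE : ∀ e ∈ E, Link G H X {e} t)
    (h : Link G D S T s) (hS : ∀ u ∈ S, ∃ e ∈ E, G.Adj e u) (hd : Disjoint H D) :
    Link G (H ∪ D) X T (t + s + 1) := by
  obtain ⟨u, hu, v, hv, p⟩ := h
  obtain ⟨e, he, a⟩ := hS u hu
  obtain ⟨x, hx, e', he', q⟩ := hE e he
  rw [Finset.mem_singleton] at he'
  subst he'
  exact ⟨x, hx, v, hv, q.append a p hd⟩

theorem Link.append {H D X Y S : Finset V} {c : V} {t s : ℕ} (h : Link G D X S s)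
    (hc : Link G H {c} Y t) (hS : ∀ u ∈ S, G.Adj u c) (hd : Disjoint D H) :
    Link G (D ∪ H) X Y (s + t + 1) := by
  have := Link.prepend (E := {c}) (t := t) (H := H) (X := Y) (fun e he => by
    rw [Finset.mem_singleton] at he; subst he; exact hc.symm) h.symm
    (fun u hu => ⟨c, Finset.mem_singleton_self c, (hS u hu).symm⟩) hd.symm
  rw [Finset.union_comm, add_comm s t]
  exact this.symm

/-- `k` increasing values of `P` with successive gaps at most `2`. -/
def Chain (k : ℕ) (P : ℕ → Prop) : Prop :=
  ∃ f : ℕ → ℕ, (∀ i < k, P (f i)) ∧ ∀ i, i + 1 < k → f i < f (i + 1) ∧ f (i + 1) ≤ f i + 2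

theorem Chain.mono {k : ℕ} {P Q : ℕ → Prop} (h : Chain k P) (hPQ : ∀ n, P n → Q n) :
    Chain k Q := by
  obtain ⟨f, h1, h2⟩ := h
  exact ⟨f, fun i hi => hPQ _ (h1 i hi), h2⟩

theorem Chain.le {k l : ℕ} {P : ℕ → Prop} (h : Chain k P) (hl : l ≤ k) : Chain l P := by
  obtain ⟨f, h1, h2⟩ := h
  exact ⟨f, fun i hi => h1 i (by omega), fun i hi => h2 i (by omega)⟩

theorem Chain.one {P : ℕ → Prop} {n : ℕ} (h : P n) : Chain 1 P :=
  ⟨fun _ => n, fun _ _ => h, fun _ hi => by omega⟩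


theorem Chain.add {a b k r : ℕ} {P Q R : ℕ → Prop} (hP : Chain a P) (hQ : Chain b Q)
    (ha : 1 ≤ a) (hb : 1 ≤ b) (hk : k + 1 ≤ a + b)
    (hR : ∀ t s, P t → Q s → R (t + s + r)) : Chain k R := by
  obtain ⟨f, f1, f2⟩ := hP
  obtain ⟨g, g1, g2⟩ := hQ
  refine ⟨fun i => if i < a then f i + g 0 + r else f (a - 1) + g (i - (a - 1)) + r, ?_, ?_⟩
  · intro i hi
    dsimp only
    split_ifs with h
    · exact hR _ _ (f1 i h) (g1 0 (by omega))
    · exact hR _ _ (f1 _ (by omega)) (g1 _ (by omega))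
  · intro i hi
    dsimp only
    split_ifs with h h' h'
    · have := f2 i h'; omega
    · have e : i = a - 1 := by omega
      have := g2 0 (by omega)
      rw [show i + 1 - (a - 1) = 0 + 1 by omega, e]
      omega
    · omega
    · have := g2 (i - (a - 1)) (by omega)
      rw [show i + 1 - (a - 1) = i - (a - 1) + 1 by omega]
      omega

/-- The number of neighbours of `v` in `D`. -/
noncomputable def dg (G : SimpleGraph V) (v : V) (D : Finset V) : ℕ := (D.filter (G.Adj v)).card

/-- The indicator function of `X`. -/
noncomputable def ind (X : Finset V) (v : V) : ℕ := if v ∈ X then 1 else 0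

/-- The vertices of `D` with a neighbour in `E`. -/
noncomputable def nbs (G : SimpleGraph V) (E D : Finset V) : Finset V :=
  D.filter fun v => ∃ e ∈ E, G.Adj e v

theorem ind_le_one {X : Finset V} {v : V} : ind X v ≤ 1 := by unfold ind; split_ifs <;> simp

theorem ind_of_mem {X : Finset V} {v : V} (h : v ∈ X) : ind X v = 1 := if_pos h

theorem ind_of_notMem {X : Finset V} {v : V} (h : v ∉ X) : ind X v = 0 := if_neg h

theorem ind_congr {X Y : Finset V} {v : V} (h : v ∈ X ↔ v ∈ Y) : ind X v = ind Y v := by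
  unfold ind; simp [h]

theorem mem_nbs {E D : Finset V} {v : V} : v ∈ nbs G E D ↔ v ∈ D ∧ ∃ e ∈ E, G.Adj e v :=
  Finset.mem_filter

theorem nbs_subset {E D : Finset V} : nbs G E D ⊆ D := Finset.filter_subset _ _

theorem dg_mono {C D : Finset V} {v : V} (h : ∀ w ∈ C, G.Adj v w → w ∈ D) :
    dg G v C ≤ dg G v D := by
  refine Finset.card_le_card fun w hw => ?_
  rw [Finset.mem_filter] at hw ⊢
  exact ⟨h w hw.1 hw.2, hw.2⟩

theorem dg_le_add {C D E : Finset V} {v : V} (h : ∀ w ∈ C, G.Adj v w → w ∈ D ∨ w ∈ E) :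
    dg G v C ≤ dg G v D + dg G v E := by
  refine le_trans (Finset.card_le_card fun w hw => ?_) (Finset.card_union_le _ _)
  rw [Finset.mem_filter] at hw
  rw [Finset.mem_union, Finset.mem_filter, Finset.mem_filter]
  exact (h w hw.1 hw.2).imp (⟨·, hw.2⟩) (⟨·, hw.2⟩)

theorem dg_le_card {C : Finset V} {v : V} : dg G v C ≤ C.card := Finset.card_filter_le _ _

theorem dg_singleton {v a : V} : dg G v {a} = if G.Adj v a then 1 else 0 := by
  unfold dg
  rw [Finset.filter_singleton]
  split_ifs <;> simp

/-- `M` is a nonempty part of `C - c` closed under adjacency in `C - c`. -/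
def IsLobe (G : SimpleGraph V) (C : Finset V) (c : V) (M : Finset V) : Prop :=
  M ⊆ C ∧ c ∉ M ∧ M.Nonempty ∧ ∀ u ∈ M, ∀ w ∈ C, G.Adj u w → w ∈ M ∨ w = c

/-- A lobe at `c` which avoids both `S` and `T`. -/
def IsBad (G : SimpleGraph V) (D S T : Finset V) (c : V) (M : Finset V) : Prop :=
  IsLobe G D c M ∧ ∀ u ∈ M, u ∉ S ∧ u ∉ T

/-- A connected set with two attachment sets such that adding a new vertex joined to all
attachments makes it `2`-connected, every vertex except possibly `z` having large degree. -/
structure Inst (G : SimpleGraph V) (k : ℕ) (z : V) (C X Y : Finset V) : Prop where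
  conn : ConnIn G C
  subX : X ⊆ C
  subY : Y ⊆ C
  neX : X.Nonempty
  neY : Y.Nonempty
  lobe : ∀ c ∈ C, ∀ M, ¬ IsBad G C X Y c M
  deg : ∀ v ∈ C, v ≠ z → k + 1 ≤ dg G v C + ind X v + ind Y v
  nz : ∃ v ∈ C, v ≠ z

/-- All instances on fewer than `n` vertices have chains of path lengths. -/
def IHyp (G : SimpleGraph V) (n : ℕ) : Prop :=
  ∀ k z C X Y, C.card < n → Inst G k z C X Y → Chain k (Link G C X Y)

theorem ConnIn.exists_link {D S T : Finset V} (h : ConnIn G D) (hS : S ⊆ D) (hT : T ⊆ D)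
    (nS : S.Nonempty) (nT : T.Nonempty) : ∃ s, Link G D S T s := by
  obtain ⟨u, hu⟩ := nS
  obtain ⟨v, hv⟩ := nT
  obtain ⟨n, hn⟩ := h.exists_path (hS hu) (hT hv)
  exact ⟨n, u, hu, v, hv, hn⟩

theorem ConnIn.sdiff_lobe {D M : Finset V} {c : V} (h : ConnIn G D) (hc : c ∈ D)
    (hM : IsLobe G D c M) : ConnIn G (D \ M) := by
  obtain ⟨hMD, hcM, -, hcl⟩ := hM
  refine ⟨⟨c, Finset.mem_sdiff.2 ⟨hc, hcM⟩⟩, fun N hN hne hNc => ?_⟩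
  have key : ∀ u ∈ N, u ≠ c → ∀ w ∈ D, G.Adj u w → w ∈ N := by
    intro u hu huc w hw a
    refine hNc u hu w (Finset.mem_sdiff.2 ⟨hw, fun hwM => ?_⟩) a
    have hu' := Finset.mem_sdiff.1 (hN hu)
    rcases hcl w hwM u hu'.1 a.symm with h | h
    · exact hu'.2 h
    · exact huc h
  by_cases hcN : c ∈ N
  · have := h.2 (N ∪ M) (Finset.union_subset (hN.trans Finset.sdiff_subset) hMD)
      (hne.mono Finset.subset_union_left) (by
        intro u hu w hw a
        rw [Finset.mem_union] at hu ⊢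
        rcases hu with hu | hu
        · by_cases hwM : w ∈ M
          · exact .inr hwM
          · exact .inl (hNc u hu w (Finset.mem_sdiff.2 ⟨hw, hwM⟩) a)
        · rcases hcl u hu w hw a with h | h
          · exact .inr h
          · exact .inl (h ▸ hcN))
    intro x hx
    rw [Finset.mem_sdiff] at hx
    exact (Finset.mem_union.1 (this hx.1)).resolve_right hx.2
  · have := h.2 N (hN.trans Finset.sdiff_subset) hne fun u hu w hw a =>
      key u hu (fun e => hcN (e ▸ hu)) w hw a
    exact absurd (this hc) hcN

theorem IsLobe.dg_sdiff {D M : Finset V} {c v : V} (hM : IsLobe G D c M) (hv : v ∈ D \ M)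
    (hvc : v ≠ c) : dg G v D ≤ dg G v (D \ M) := by
  refine dg_mono fun w hw a => Finset.mem_sdiff.2 ⟨hw, fun hwM => ?_⟩
  have hv' := Finset.mem_sdiff.1 hv
  rcases hM.2.2.2 w hwM v hv'.1 a.symm with h | h
  · exact hv'.2 h
  · exact hvc h

/-- Prefix a chain of path lengths through a smaller set, removing the parts of that set which
hang off a single vertex. -/
theorem extend {n k L r : ℕ} {z : V} {D S T : Finset V} {P Q : ℕ → Prop} (ih : IHyp G n)
    (hn : D.card < n) (hD : ConnIn G D) (hS : S ⊆ D) (hT : T ⊆ D) (nS : S.Nonempty)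
    (nT : T.Nonempty) (nz : ∃ v ∈ D, v ≠ z)
    (hbad : ∀ c ∈ D, ∀ M, IsBad G D S T c M → z ∈ M)
    (hdeg : ∀ v ∈ D, v ≠ z → k + 2 ≤ dg G v D + ind S v + ind T v + L)
    (hL : 1 ≤ L) (hP : Chain L P) (hc : ∀ t s, P t → Link G D S T s → Q (t + s + r)) :
    Chain k Q ∨ ∃ c ∈ D, ∃ M, IsBad G D S T c M ∧ z ∈ M ∧ D = insert c M := by
  by_cases hk : k ≤ L
  · obtain ⟨s, hs⟩ := hD.exists_link hS hT nS nT
    exact .inl (hP.add (Chain.one hs) hL le_rfl (by omega) hc)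
  have fin : ∀ D' ⊆ D, ∀ z', Inst G (k + 1 - L) z' D' S T → Chain k Q := fun D' hD' z' hI =>
    hP.add (ih _ _ _ _ _ (lt_of_le_of_lt (Finset.card_le_card hD') hn) hI) hL (by omega)
      (by omega) fun t s ht hs => hc t s ht (hs.mono hD' subset_rfl subset_rfl)
  by_cases hb : ∃ M, ∃ c ∈ D, IsBad G D S T c M
  · obtain ⟨M, hM, hmax⟩ := Finset.exists_max_image
      (D.powerset.filter fun M => ∃ c ∈ D, IsBad G D S T c M) Finset.card (by
        obtain ⟨M, c, hc, hM⟩ := hb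
        exact ⟨M, Finset.mem_filter.2 ⟨Finset.mem_powerset.2 hM.1.1, c, hc, hM⟩⟩)
    obtain ⟨-, c, hcD, hM⟩ := Finset.mem_filter.1 hM
    have hzM := hbad c hcD M hM
    obtain ⟨hlobe, hav⟩ := hM
    have hcD' : c ∈ D \ M := Finset.mem_sdiff.2 ⟨hcD, hlobe.2.1⟩
    by_cases ht : ∃ v ∈ D \ M, v ≠ c
    · refine .inl (fin (D \ M) Finset.sdiff_subset c
        ⟨hD.sdiff_lobe hcD hlobe, ?_, ?_, nS, nT, ?_, ?_, ht⟩)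
      · exact fun x hx => Finset.mem_sdiff.2 ⟨hS hx, fun h => (hav x h).1 hx⟩
      · exact fun x hx => Finset.mem_sdiff.2 ⟨hT hx, fun h => (hav x h).2 hx⟩
      · rintro c2 hc2 M2 ⟨⟨h1, h2, h3, h4⟩, h5⟩
        have hc2' := Finset.mem_sdiff.1 hc2
        by_cases hcM2 : c ∈ M2
        · have hbd : IsBad G D S T c2 (M2 ∪ M) := by
            refine ⟨⟨Finset.union_subset (h1.trans Finset.sdiff_subset) hlobe.1, ?_,
              h3.mono Finset.subset_union_left, ?_⟩, ?_⟩
            · rw [Finset.mem_union]; exact fun h => h.elim h2 hc2'.2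
            · intro u hu w hw a
              rw [Finset.mem_union] at hu ⊢
              by_cases hwM : w ∈ M
              · exact .inl (.inr hwM)
              rcases hu with hu | hu
              · exact (h4 u hu w (Finset.mem_sdiff.2 ⟨hw, hwM⟩) a).imp_left .inl
              · rcases hlobe.2.2.2 u hu w hw a with h | h
                · exact absurd h hwM
                · exact .inl (.inl (h ▸ hcM2))
            · intro u hu
              rcases Finset.mem_union.1 hu with hu | hu
              exacts [h5 u hu, hav u hu]
          have := hmax (M2 ∪ M) (Finset.mem_filter.2
            ⟨Finset.mem_powerset.2 hbd.1.1, c2, hc2'.1, hbd⟩)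
          have hlt : M.card < (M2 ∪ M).card :=
            Finset.card_lt_card ⟨Finset.subset_union_right, fun h =>
              hlobe.2.1 (h (Finset.mem_union_left _ hcM2))⟩
          omega
        · have hbd : IsBad G D S T c2 M2 := by
            refine ⟨⟨h1.trans Finset.sdiff_subset, h2, h3, fun u hu w hw a => ?_⟩, h5⟩
            refine h4 u hu w (Finset.mem_sdiff.2 ⟨hw, fun hwM => ?_⟩) a
            have hu' := Finset.mem_sdiff.1 (h1 hu)
            rcases hlobe.2.2.2 w hwM u hu'.1 a.symm with h | h
            · exact hu'.2 h
            · exact hcM2 (h ▸ hu)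
          exact (Finset.mem_sdiff.1 (h1 (hbad c2 hc2'.1 M2 hbd))).2 hzM
      · intro v hv hvc
        have hv' := Finset.mem_sdiff.1 hv
        have := hdeg v hv'.1 fun e => hv'.2 (e ▸ hzM)
        have := hlobe.dg_sdiff hv hvc
        omega
    · push Not at ht
      refine .inr ⟨c, hcD, M, ⟨hlobe, hav⟩, hzM, ?_⟩
      ext x
      rw [Finset.mem_insert]
      constructor
      · intro hx
        by_cases hxM : x ∈ M
        · exact .inr hxM
        · exact .inl (ht x (Finset.mem_sdiff.2 ⟨hx, hxM⟩))
      · rintro (rfl | hx)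
        exacts [hcD, hlobe.1 hx]
  · refine .inl (fin D subset_rfl z ⟨hD, hS, hT, nS, nT, fun c hc M hM => hb ⟨M, c, hc, hM⟩,
      fun v hv hvz => ?_, nz⟩)
    have := hdeg v hv hvz
    omega

theorem extend_of_no_bad {n k L r : ℕ} {z : V} {D S T : Finset V} {P Q : ℕ → Prop}
    (ih : IHyp G n) (hn : D.card < n) (hD : ConnIn G D) (hS : S ⊆ D) (hT : T ⊆ D)
    (nS : S.Nonempty) (nT : T.Nonempty) (nz : ∃ v ∈ D, v ≠ z)
    (hbad : ∀ c ∈ D, ∀ M, ¬ IsBad G D S T c M)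
    (hdeg : ∀ v ∈ D, v ≠ z → k + 2 ≤ dg G v D + ind S v + ind T v + L)
    (hL : 1 ≤ L) (hP : Chain L P) (hc : ∀ t s, P t → Link G D S T s → Q (t + s + r)) :
    Chain k Q := by
  refine (extend ih hn hD hS hT nS nT nz (fun c hc M hM => absurd hM (hbad c hc M)) hdeg hL hP
    hc).elim id ?_
  rintro ⟨c, hc, M, hM, -⟩
  exact absurd hM (hbad c hc M)

theorem Chain.interval {k a : ℕ} {P : ℕ → Prop} (h : ∀ i < k, P (a + i)) : Chain k P :=
  ⟨fun i => a + i, h, fun i _ => by dsimp only; omega⟩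

theorem Chain.evens {k a : ℕ} {P : ℕ → Prop} (h : ∀ i < k, P (a + 2 * i)) : Chain k P :=
  ⟨fun i => a + 2 * i, h, fun i _ => by dsimp only; omega⟩

theorem IsBad.symm {D S T M : Finset V} {c : V} (h : IsBad G D S T c M) : IsBad G D T S c M :=
  ⟨h.1, fun u hu => (h.2 u hu).symm⟩

theorem Inst.symm {k : ℕ} {z : V} {C X Y : Finset V} (h : Inst G k z C X Y) :
    Inst G k z C Y X :=
  ⟨h.conn, h.subY, h.subX, h.neY, h.neX, fun c hc M hM => h.lobe c hc M hM.symm,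
    fun v hv hz => by have := h.deg v hv hz; omega, h.nz⟩

theorem Chain.link_symm {k : ℕ} {C X Y : Finset V} (h : Chain k (Link G C Y X)) :
    Chain k (Link G C X Y) := h.mono fun _ => Link.symm

/-- A set with two attachment sets of size at least two, both meeting every lobe, and an
exceptional vertex `z` outside the attachment sets. -/
structure Red (G : SimpleGraph V) (k : ℕ) (z : V) (C X Y : Finset V) : Prop where
  conn : ConnIn G C
  subX : X ⊆ C
  subY : Y ⊆ C
  zX : z ∉ X
  zY : z ∉ Y
  cardX : 2 ≤ X.card
  cardY : 2 ≤ Y.card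
  lX : ∀ c ∈ C, ∀ M, IsLobe G C c M → ∃ u ∈ M, u ∈ X
  lY : ∀ c ∈ C, ∀ M, IsLobe G C c M → ∃ u ∈ M, u ∈ Y
  deg : ∀ v ∈ C, v ≠ z → k + 1 ≤ dg G v C + ind X v + ind Y v

theorem Red.symm {k : ℕ} {z : V} {C X Y : Finset V} (h : Red G k z C X Y) : Red G k z C Y X :=
  ⟨h.conn, h.subY, h.subX, h.zY, h.zX, h.cardY, h.cardX, h.lY, h.lX,
    fun v hv hz => by have := h.deg v hv hz; omega⟩

theorem ConnIn.exists_adj {C M : Finset V} (h : ConnIn G C) (hM : M ⊆ C) (hne : M.Nonempty)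
    {x : V} (hx : x ∈ C) (hxM : x ∉ M) : ∃ u ∈ M, ∃ w ∈ C, w ∉ M ∧ G.Adj u w := by
  by_contra! hcon
  exact hxM (h.2 M hM hne (fun u hu w hw a => by
    by_contra hwM; exact hcon u hu w hw hwM a) hx)

theorem comp_adj {C H : Finset V} {v u w : V} (hu : u ∈ compIn G (C \ H) v) (hw : w ∈ C)
    (a : G.Adj u w) : w ∈ compIn G (C \ H) v ∨ w ∈ H := by
  by_cases h : w ∈ H
  · exact .inr h
  · exact .inl (compIn_closed hu (Finset.mem_sdiff.2 ⟨hw, h⟩) a)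

theorem comp_mem {C H : Finset V} {v u : V} (hu : u ∈ compIn G (C \ H) v) : u ∈ C ∧ u ∉ H :=
  Finset.mem_sdiff.1 (compIn_subset hu)

theorem comp_subset {C H : Finset V} {v : V} : compIn G (C \ H) v ⊆ C :=
  fun _ hx => (comp_mem hx).1

theorem isLobe_comp {C : Finset V} {c v : V} (hv : v ∈ C) (hvc : v ≠ c) :
    IsLobe G C c (compIn G (C \ {c}) v) :=
  ⟨comp_subset, fun h => (comp_mem h).2 (Finset.mem_singleton_self c),
    ⟨v, self_mem_compIn (by simp [hv, hvc])⟩, fun _ hu _ hw a =>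
      (comp_adj hu hw a).imp_right Finset.mem_singleton.1⟩

theorem IsLobe.comp_subset {C M : Finset V} {c v : V} (h : IsLobe G C c M) (hv : v ∈ M) :
    compIn G (C \ {c}) v ⊆ M :=
  compIn_subset_of_closed hv fun u hu w hw a => by
    rw [Finset.mem_sdiff, Finset.mem_singleton] at hw
    exact (h.2.2.2 u hu w hw.1 a).resolve_right hw.2

theorem IsLobe.nbs_nonempty {C M : Finset V} {c : V} (h : IsLobe G C c M) (hC : ConnIn G C)
    (hc : c ∈ C) : (nbs G {c} M).Nonempty := by
  obtain ⟨u, hu, w, hw, hwM, a⟩ := hC.exists_adj h.1 h.2.2.1 hc h.2.1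
  have := (h.2.2.2 u hu w hw a).resolve_left hwM
  subst this
  exact ⟨u, mem_nbs.2 ⟨hu, w, Finset.mem_singleton_self w, a.symm⟩⟩

theorem IsLobe.dg_le {C M : Finset V} {c v : V} (h : IsLobe G C c M) (hv : v ∈ M) :
    dg G v C ≤ dg G v M + ind (nbs G {c} M) v := by
  have := dg_le_add (G := G) (C := C) (D := M) (E := {c}) (v := v) fun w hw a =>
    (h.2.2.2 v hv w hw a).imp_right Finset.mem_singleton.2
  rw [dg_singleton] at this
  refine this.trans ?_
  split_ifs with a
  · rw [ind_of_mem (mem_nbs.2 ⟨hv, c, Finset.mem_singleton_self c, a.symm⟩)]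
  · omega

/-- A lobe of a lobe avoiding the neighbours of the cut vertex is a lobe. -/
theorem IsLobe.trans {C M N : Finset V} {c d : V} (h : IsLobe G C c M) (hN : IsLobe G M d N)
    (hav : ∀ u ∈ N, u ∉ nbs G {c} M) : IsLobe G C d N := by
  refine ⟨hN.1.trans h.1, hN.2.1, hN.2.2.1, fun u hu w hw a => ?_⟩
  rcases h.2.2.2 u (hN.1 hu) w hw a with h' | h'
  · exact hN.2.2.2 u hu w h' a
  · subst h'
    exact absurd (mem_nbs.2 ⟨hN.1 hu, w, Finset.mem_singleton_self w, a.symm⟩) (hav u hu)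

theorem link_singleton {c : V} : Link G {c} {c} {c} 0 :=
  ⟨c, Finset.mem_singleton_self c, c, Finset.mem_singleton_self c,
    .nil (Finset.mem_singleton_self c)⟩

theorem adj_of_mem_nbs_singleton {c u : V} {D : Finset V} (h : u ∈ nbs G {c} D) : G.Adj c u := by
  obtain ⟨-, e, he, a⟩ := mem_nbs.1 h
  rwa [Finset.mem_singleton.1 he] at a

theorem Inst.chain_of_singleton {k n : ℕ} {z w : V} {C X : Finset V} (ih : IHyp G n)
    (hn : C.card = n) (h : Inst G k z C X {w}) : Chain k (Link G C X {w}) := by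
  have hw : w ∈ C := h.subY (Finset.mem_singleton_self w)
  by_cases hv : ∃ v ∈ C, v ≠ w ∧ v ≠ z
  · obtain ⟨v, hv, hvw, hvz⟩ := hv
    have hl := isLobe_comp (G := G) hv hvw
    have hvD : v ∈ compIn G (C \ {w}) v := self_mem_compIn (by simp [hv, hvw])
    have hDc : ConnIn G (compIn G (C \ {w}) v) := connIn_compIn (by simp [hv, hvw])
    set D := compIn G (C \ {w}) v with hD
    have nobad : ∀ c ∈ D, ∀ M, ¬ IsBad G D (X ∩ D) (nbs G {w} D) c M := by
      intro c hc M hM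
      refine h.lobe c (hl.1 hc) M ⟨hl.trans hM.1 fun u hu => (hM.2 u hu).2, fun u hu => ⟨?_, ?_⟩⟩
      · exact fun hx => (hM.2 u hu).1 (Finset.mem_inter.2 ⟨hx, hM.1.1 hu⟩)
      · rw [Finset.mem_singleton]
        exact fun e => hl.2.1 (e ▸ hM.1.1 hu)
    refine extend_of_no_bad (n := n) (k := k) (L := 1) (r := 1) (z := z) (D := D) (S := X ∩ D)
      (T := nbs G {w} D) (P := fun t => t = 0) (Q := Link G C X {w}) ih
      (hn ▸ Finset.card_lt_card ⟨hl.1, fun hs => hl.2.1 (hs hw)⟩) hDc Finset.inter_subset_right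
      nbs_subset ?_ (hl.nbs_nonempty h.conn hw) ⟨v, hvD, hvz⟩
      nobad ?_ le_rfl (Chain.one rfl) ?_
    · by_contra hne
      refine h.lobe w hw D ⟨hl, fun u hu => ⟨fun hx => hne ⟨u, Finset.mem_inter.2 ⟨hx, hu⟩⟩, ?_⟩⟩
      rw [Finset.mem_singleton]
      exact fun e => hl.2.1 (e ▸ hu)
    · intro v hv hvz
      have h1 := h.deg v (hl.1 hv) hvz
      have h2 := hl.dg_le hv
      have h3 : ind {w} v = 0 := ind_of_notMem (by
        rw [Finset.mem_singleton]; exact fun e => hl.2.1 (e ▸ hv))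
      have h4 : ind X v = ind (X ∩ D) v := ind_congr (by simp [hv])
      omega
    · rintro t s rfl hs
      have := hs.append link_singleton (fun u hu => (adj_of_mem_nbs_singleton hu).symm)
        (Finset.disjoint_singleton_right.2 hl.2.1)
      rw [show 0 + s + 1 = s + 0 + 1 by omega]
      exact this.mono (Finset.union_subset hl.1 (Finset.singleton_subset_iff.2 hw))
        Finset.inter_subset_left subset_rfl
  · push Not at hv
    have hz : w ≠ z := by
      obtain ⟨v, hvC, hvz⟩ := h.nz
      by_contra e
      exact hvz (hv v hvC fun e' => hvz (e'.trans e))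
    have hdeg := h.deg w hw hz
    rw [ind_of_mem (Finset.mem_singleton_self w)] at hdeg
    have hiX := ind_le_one (X := X) (v := w)
    have h0 : w ∈ X → Link G C X {w} 0 := fun hx =>
      ⟨w, hx, w, Finset.mem_singleton_self w, .nil hw⟩
    by_cases hzC : z ∈ C
    · have hl : IsLobe G C w {z} := by
        refine ⟨by simpa using hzC, by simpa using hz, by simp, fun u hu x hx a => ?_⟩
        by_cases hxw : x = w
        · exact .inr hxw
        · exact .inl (by rw [hv x hx hxw]; simp)
      have hzX : z ∈ X := by
        by_contra hzX
        refine h.lobe w hw {z} ⟨hl, fun u hu => ?_⟩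
        rw [Finset.mem_singleton] at hu
        subst hu
        simp [hzX, hz.symm]
      obtain ⟨u, hu⟩ := hl.nbs_nonempty h.conn hw
      have a := adj_of_mem_nbs_singleton hu
      rw [Finset.mem_singleton.1 (nbs_subset hu)] at a
      have h1 : Link G C X {w} 1 := ⟨z, hzX, w, Finset.mem_singleton_self w,
        .cons hzC a.symm (.nil (Finset.mem_erase.2 ⟨hz, hw⟩))⟩
      have hdg : dg G w C ≤ 1 := by
        have := dg_le_card (G := G) (C := {z}) (v := w)
        have := dg_mono (G := G) (C := C) (D := {z}) (v := w) fun x hx a => by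
          rw [hv x hx a.ne']; simp
        simp at *; omega
      by_cases hwX : w ∈ X
      · refine Chain.le (k := 2) ?_ (by omega)
        refine Chain.interval (a := 0) fun i hi => ?_
        interval_cases i
        exacts [h0 hwX, h1]
      · rw [ind_of_notMem hwX] at hdeg
        exact (Chain.one h1).le (by omega)
    · have hall : ∀ x ∈ C, x = w := fun x hx => by
        by_contra hxw
        exact hzC (hv x hx hxw ▸ hx)
      obtain ⟨x, hx⟩ := h.neX
      have := hall x (h.subX hx)
      subst this
      have hdg : dg G x C = 0 := by
        have := dg_mono (G := G) (C := C) (D := ∅) (v := x) fun y hy a =>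
          absurd (hall y hy) a.ne'
        have := dg_le_card (G := G) (C := ∅) (v := x)
        simp at *; omega
      exact (Chain.one (h0 hx)).le (by omega)

theorem exists_mem_ne_of_two_le {X : Finset V} (h : 2 ≤ X.card) (z : V) : ∃ x ∈ X, x ≠ z := by
  obtain ⟨x, hx, hxz⟩ := Finset.exists_mem_ne (show 1 < X.card by omega) z
  exact ⟨x, hx, hxz⟩

theorem Inst.chain_of_lobe {k n : ℕ} {z c : V} {C X Y M : Finset V} (ih : IHyp G n)
    (hn : C.card = n) (h : Inst G k z C X Y) (hX : 2 ≤ X.card) (hc : c ∈ C)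
    (hl : IsLobe G C c M) (hM : ConnIn G M) (hav : ∀ u ∈ M, u ≠ z → u ∉ X ∧ u ∉ Y)
    (hz : z ∈ M) (hzY : z ∈ Y) (hne : ∃ v ∈ M, v ≠ z) : Chain k (Link G C X Y) := by
  obtain ⟨x, hxX, hxz⟩ := exists_mem_ne_of_two_le hX z
  have hxM : x ∈ C \ M := Finset.mem_sdiff.2 ⟨h.subX hxX, fun hm => (hav x hm hxz).1 hxX⟩
  obtain ⟨t, ht⟩ := (h.conn.sdiff_lobe hc hl).exists_path hxM (Finset.mem_sdiff.2 ⟨hc, hl.2.1⟩)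
  have nobad : ∀ d ∈ M, ∀ N, ¬ IsBad G M (nbs G {c} M) {z} d N := by
    intro d hd N hN
    refine h.lobe d (hl.1 hd) N ⟨hl.trans hN.1 fun u hu => (hN.2 u hu).1, fun u hu => ?_⟩
    exact hav u (hN.1.1 hu) fun e => (hN.2 u hu).2 (by simp [e])
  refine extend_of_no_bad (n := n) (k := k) (L := 1) (r := 1) (z := z) (D := M) (S := nbs G {c} M)
    (T := {z}) (P := fun s => s = t) (Q := Link G C X Y) ih
    (hn ▸ Finset.card_lt_card ⟨hl.1, fun hs => hl.2.1 (hs hc)⟩) hM nbs_subset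
    (by simpa using hz) (hl.nbs_nonempty h.conn hc) (by simp) hne
    nobad ?_ le_rfl (Chain.one rfl) ?_
  · intro v hv hvz
    have h1 := h.deg v (hl.1 hv) hvz
    have h2 := hl.dg_le hv
    rw [ind_of_notMem (hav v hv hvz).1, ind_of_notMem (hav v hv hvz).2] at h1
    omega
  · rintro t s rfl hs
    have := Link.prepend (G := G) (H := C \ M) (X := X) (E := {c}) (t := t) (fun e he => by
      rw [Finset.mem_singleton] at he; subst he
      exact ⟨x, hxX, e, by simp, ht⟩) hs
      (fun u hu => ⟨c, by simp, adj_of_mem_nbs_singleton hu⟩) Finset.sdiff_disjoint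
    exact this.mono (Finset.union_subset Finset.sdiff_subset hl.1) subset_rfl
      (by simpa using hzY)

theorem Inst.chain_or_lobe {k n : ℕ} {z : V} {C X Y : Finset V} (ih : IHyp G n)
    (hn : C.card = n) (h : Inst G k z C X Y) (hX : 2 ≤ X.card) (hY : 2 ≤ Y.card) :
    Chain k (Link G C X Y) ∨
      ∀ c ∈ C, ∀ M, IsLobe G C c M → ∃ u ∈ M, u ≠ z ∧ (u ∈ X ∨ u ∈ Y) := by
  by_cases hch : Chain k (Link G C X Y)
  · exact .inl hch
  have big : ∀ c ∈ C, ∀ M, IsLobe G C c M → (∃ v ∈ M, v ≠ z) →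
      ∃ u ∈ M, u ≠ z ∧ (u ∈ X ∨ u ∈ Y) := by
    rintro c hc M hl ⟨v, hv, hvz⟩
    by_contra! hav
    have hzM : z ∈ M ∧ (z ∈ X ∨ z ∈ Y) := by
      by_contra hcon
      refine h.lobe c hc M ⟨hl, fun u hu => ?_⟩
      by_cases huz : u = z
      · subst huz; tauto
      · exact hav u hu huz
    have hcM : z ∈ C ∧ z ≠ c := ⟨hl.1 hzM.1, fun e => hl.2.1 (e ▸ hzM.1)⟩
    have hM : M ⊆ compIn G (C \ {c}) z := by
      intro x hx
      by_contra hxn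
      refine h.lobe c hc (compIn G (C \ {c}) x) ⟨isLobe_comp (hl.1 hx) fun e => hl.2.1 (e ▸ hx),
        fun u hu => hav u (hl.comp_subset hx hu) ?_⟩
      rintro rfl
      have : compIn G (C \ {c}) x ⊆ (C \ {c}) \ compIn G (C \ {c}) u := by
        refine compIn_subset_of_closed (Finset.mem_sdiff.2 ⟨by simp [hl.1 hx, show x ≠ c from
          fun e => hl.2.1 (e ▸ hx)], hxn⟩) fun a ha b hb hab => ?_
        rw [Finset.mem_sdiff] at ha ⊢
        exact ⟨hb, fun hb' => ha.2 (compIn_closed hb' ha.1 hab.symm)⟩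
      exact (Finset.mem_sdiff.1 (this hu)).2 (self_mem_compIn (by simp [hcM]))
    have hMe := (hl.comp_subset hzM.1).antisymm hM
    have hMc : ConnIn G M := hMe ▸ connIn_compIn (by simp [hcM])
    rcases hzM.2 with hz | hz
    · exact hch (h.symm.chain_of_lobe ih hn hY hc hl hMc (fun u hu e => (hav u hu e).symm)
        hzM.1 hz ⟨v, hv, hvz⟩).link_symm
    · exact hch (h.chain_of_lobe ih hn hX hc hl hMc hav hzM.1 hz ⟨v, hv, hvz⟩)
  refine .inr fun c hc M hl => ?_
  by_cases hv : ∃ v ∈ M, v ≠ z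
  · exact big c hc M hl hv
  exfalso
  push Not at hv
  have hMz : M = {z} := Finset.eq_singleton_iff_nonempty_unique_mem.2 ⟨hl.2.2.1, hv⟩
  subst hMz
  have hzC : z ∈ C := hl.1 (by simp)
  have hcz : c ≠ z := by simpa using hl.2.1
  apply hch
  by_cases hnz : ∃ v ∈ C \ {z}, v ≠ c
  · have hI : Inst G k c (C \ {z}) (X \ {z}) (Y \ {z}) := by
      refine ⟨h.conn.sdiff_lobe hc hl, Finset.sdiff_subset_sdiff h.subX subset_rfl,
        Finset.sdiff_subset_sdiff h.subY subset_rfl, ?_, ?_, ?_, ?_, hnz⟩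
      · obtain ⟨x, hx, hxz⟩ := exists_mem_ne_of_two_le hX z
        exact ⟨x, by simp [hx, hxz]⟩
      · obtain ⟨x, hx, hxz⟩ := exists_mem_ne_of_two_le hY z
        exact ⟨x, by simp [hx, hxz]⟩
      · rintro d hd N ⟨⟨h1, h2, h3, h4⟩, h5⟩
        simp only [Finset.mem_sdiff, Finset.mem_singleton] at hd h4 h5
        by_cases hcN : c ∈ N
        · suffices hlN : IsLobe G C d (insert z N) by
            obtain ⟨u, hu, huz, hu'⟩ := big d hd.1 (insert z N) hlN ⟨c, by simp [hcN], hcz⟩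
            have := h5 u ((Finset.mem_insert.1 hu).resolve_left huz)
            tauto
          refine ⟨?_, ?_, ?_, ?_⟩
          · exact Finset.insert_subset hzC (h1.trans Finset.sdiff_subset)
          · rw [Finset.mem_insert]; exact fun h => h.elim hd.2 h2
          · exact ⟨z, by simp⟩
          · intro u hu w hw a
            rw [Finset.mem_insert] at hu ⊢
            rcases hu with rfl | hu
            · rcases hl.2.2.2 u (by simp) w hw a with h' | rfl
              · exact .inl (.inl (by simpa using h'))
              · exact .inl (.inr hcN)
            · by_cases hwz : w = z
              · exact .inl (.inl hwz)
              · exact (h4 u hu w ⟨hw, hwz⟩ a).imp_left .inr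
        · refine h.lobe d hd.1 N ⟨⟨h1.trans Finset.sdiff_subset, h2, h3, fun u hu w hw a => ?_⟩,
            fun u hu => ?_⟩
          · refine h4 u hu w ⟨hw, ?_⟩ a
            rintro rfl
            have hu' := Finset.mem_sdiff.1 (h1 hu)
            rcases hl.2.2.2 w (by simp) u hu'.1 a.symm with h | rfl
            · exact hu'.2 h
            · exact hcN hu
          · have hu' := Finset.mem_sdiff.1 (h1 hu)
            have := h5 u hu
            simp at hu'
            tauto
      · intro v hv hvc
        have hv' := Finset.mem_sdiff.1 hv
        have h1 := h.deg v hv'.1 (by simpa using hv'.2)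
        have h2 := hl.dg_sdiff hv hvc
        rw [ind_congr (show v ∈ X ↔ v ∈ X \ {z} by simp at hv' ⊢; tauto),
          ind_congr (show v ∈ Y ↔ v ∈ Y \ {z} by simp at hv' ⊢; tauto)] at h1
        omega
    exact (ih _ _ _ _ _ (hn ▸ Finset.card_lt_card ⟨Finset.sdiff_subset, fun hs => by
      simpa using hs hzC⟩) hI).mono fun m hm => hm.mono Finset.sdiff_subset Finset.sdiff_subset
        Finset.sdiff_subset
  · push Not at hnz
    have hC : C ⊆ {z, c} := fun x hx => by
      by_cases hxz : x = z
      · simp [hxz]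
      · simp [hnz x (by simp [hx, hxz])]
    have hzc : ({z, c} : Finset V).card = 2 := Finset.card_pair hcz.symm
    have hXe := Finset.eq_of_subset_of_card_le (h.subX.trans hC) (by omega)
    have hYe := Finset.eq_of_subset_of_card_le (h.subY.trans hC) (by omega)
    have hdeg := h.deg c hc hcz
    have h1 := ind_le_one (X := X) (v := c)
    have h2 := ind_le_one (X := Y) (v := c)
    have hdg : dg G c C ≤ 1 := by
      have := dg_le_card (G := G) (C := {z}) (v := c)
      have := dg_mono (G := G) (C := C) (D := {z}) (v := c) fun x hx a => by
        have := hC hx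
        simp [a.ne'] at this
        simp [this]
      simp at *; omega
    obtain ⟨u, hu⟩ := hl.nbs_nonempty h.conn hc
    have a := adj_of_mem_nbs_singleton hu
    rw [Finset.mem_singleton.1 (nbs_subset hu)] at a
    refine Chain.le (k := 2) (Chain.interval (a := 0) fun i hi => ?_) (by omega)
    interval_cases i
    · exact ⟨c, by simp [hXe], c, by simp [hYe], .nil hc⟩
    · exact ⟨z, by simp [hXe], c, by simp [hYe],
        .cons hzC a.symm (.nil (Finset.mem_erase.2 ⟨hcz, hc⟩))⟩

theorem Inst.chain_or_lobe_right {k n : ℕ} {z : V} {C X Y : Finset V} (ih : IHyp G n)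
    (hn : C.card = n) (h : Inst G k z C X Y) (hY : 2 ≤ Y.card)
    (hA : ∀ c ∈ C, ∀ M, IsLobe G C c M → ∃ u ∈ M, u ≠ z ∧ (u ∈ X ∨ u ∈ Y)) :
    Chain k (Link G C X Y) ∨ ∀ c ∈ C, ∀ M, IsLobe G C c M → ∃ u ∈ M, u ∈ Y \ {z} := by
  by_cases hch : Chain k (Link G C X Y)
  · exact .inl hch
  refine .inr fun c hc M hl => ?_
  by_contra! hcon
  obtain ⟨u, hu, huz, huXY⟩ := hA c hc M hl
  have hvC : u ∈ C \ {c} := by simp [hl.1 hu, show u ≠ c from fun e => hl.2.1 (e ▸ hu)]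
  have hlD := isLobe_comp (G := G) (hl.1 hu) (c := c) fun e => hl.2.1 (e ▸ hu)
  have hDM := hl.comp_subset hu
  have huD : u ∈ compIn G (C \ {c}) u := self_mem_compIn hvC
  have hDc : ConnIn G (compIn G (C \ {c}) u) := connIn_compIn hvC
  set D := compIn G (C \ {c}) u with hD
  have hY' : ∀ v ∈ D, v ≠ z → v ∉ Y := fun v hv hvz hvY =>
    hcon v (hDM hv) (by simp [hvY, hvz])
  obtain ⟨y, hyY, hyz⟩ := exists_mem_ne_of_two_le hY z
  have hyD : y ∈ C \ D := Finset.mem_sdiff.2 ⟨h.subY hyY, fun hm => hY' y hm hyz hyY⟩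
  obtain ⟨t, ht⟩ := (h.conn.sdiff_lobe hc hlD).exists_path
    (Finset.mem_sdiff.2 ⟨hc, hlD.2.1⟩) hyD
  have nobad : ∀ d ∈ D, ∀ N, ¬ IsBad G D (X ∩ D) (nbs G {c} D) d N := by
    intro d hd N hN
    obtain ⟨v, hv, hvz, hvXY⟩ := hA d (hlD.1 hd) N (hlD.trans hN.1 fun u hu => (hN.2 u hu).2)
    rcases hvXY with hx | hy
    · exact (hN.2 v hv).1 (Finset.mem_inter.2 ⟨hx, hN.1.1 hv⟩)
    · exact hY' v (hN.1.1 hv) hvz hy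
  refine hch (extend_of_no_bad (n := n) (k := k) (L := 1) (r := t + 1) (z := z) (D := D)
    (S := X ∩ D)
    (T := nbs G {c} D) (P := fun s => s = 0) (Q := Link G C X Y) ih
    (hn ▸ Finset.card_lt_card ⟨hlD.1, fun hs => hlD.2.1 (hs hc)⟩) hDc Finset.inter_subset_right
    nbs_subset ⟨u, Finset.mem_inter.2 ⟨huXY.resolve_right (hY' u huD huz), huD⟩⟩
    (hlD.nbs_nonempty h.conn hc) ⟨u, huD, huz⟩
    nobad ?_ le_rfl (Chain.one rfl) ?_)
  · intro v hv hvz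
    have h1 := h.deg v (hlD.1 hv) hvz
    have h2 := hlD.dg_le hv
    have h3 := ind_of_notMem (hY' v hv hvz)
    have h4 : ind X v = ind (X ∩ D) v := ind_congr (by simp [hv])
    omega
  · rintro _ s rfl hs
    have := hs.append (H := C \ D) (Y := Y) (c := c) (t := t) ⟨c, by simp, y, hyY, ht⟩
      (fun u hu => (adj_of_mem_nbs_singleton hu).symm) Finset.disjoint_sdiff
    rw [show 0 + s + (t + 1) = s + t + 1 by omega]
    exact this.mono (Finset.union_subset hlD.1 Finset.sdiff_subset) Finset.inter_subset_left
      subset_rfl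

theorem Inst.chain_of_red {k n : ℕ} {z : V} {C X Y : Finset V} (ih : IHyp G n)
    (hn : C.card = n) (h : Inst G k z C X Y)
    (hred : ∀ k z C X Y, C.card = n → Red G k z C X Y → Chain k (Link G C X Y)) :
    Chain k (Link G C X Y) := by
  have small : ∀ X Y, Inst G k z C X Y → ¬ 2 ≤ Y.card → Chain k (Link G C X Y) := by
    intro X Y h hY
    have := h.neY.card_pos
    obtain ⟨w, rfl⟩ := Finset.card_eq_one.1 (show Y.card = 1 by omega)
    exact h.chain_of_singleton ih hn
  by_contra hch
  have hY : 2 ≤ Y.card := by_contra fun hY => hch (small X Y h hY)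
  have hX : 2 ≤ X.card := by_contra fun hX => hch (small Y X h.symm hX).link_symm
  have hA := (h.chain_or_lobe ih hn hX hY).resolve_left hch
  have hlY := (h.chain_or_lobe_right ih hn hY hA).resolve_left hch
  have hlX := (h.symm.chain_or_lobe_right ih hn hX fun c hc M hM => by
    obtain ⟨u, h1, h2, h3⟩ := hA c hc M hM
    exact ⟨u, h1, h2, h3.symm⟩).resolve_left fun h => hch h.link_symm
  obtain ⟨x, hxX, hxz⟩ := exists_mem_ne_of_two_le hX z
  obtain ⟨y, hyY, hyz⟩ := exists_mem_ne_of_two_le hY z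
  have hdeg : ∀ v ∈ C, v ≠ z → k + 1 ≤ dg G v C + ind (X \ {z}) v + ind (Y \ {z}) v := by
    intro v hv hvz
    have := h.deg v hv hvz
    rwa [ind_congr (show v ∈ X ↔ v ∈ X \ {z} by simp [hvz]),
      ind_congr (show v ∈ Y ↔ v ∈ Y \ {z} by simp [hvz])] at this
  have hI : Inst G k z C (X \ {z}) (Y \ {z}) :=
    ⟨h.conn, Finset.sdiff_subset.trans h.subX, Finset.sdiff_subset.trans h.subY,
      ⟨x, by simp [hxX, hxz]⟩, ⟨y, by simp [hyY, hyz]⟩, fun c hc M hM => by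
        obtain ⟨u, hu, huX⟩ := hlX c hc M hM.1
        exact (hM.2 u hu).1 huX, hdeg, h.nz⟩
  have hch' : ¬ Chain k (Link G C (X \ {z}) (Y \ {z})) := fun h' =>
    hch (h'.mono fun m hm => hm.mono subset_rfl Finset.sdiff_subset Finset.sdiff_subset)
  refine hch' (hred k z C _ _ hn ⟨h.conn, hI.subX, hI.subY, by simp, by simp, ?_, ?_, hlX, hlY,
    hdeg⟩)
  · exact by_contra fun hX => hch' (small _ _ hI.symm hX).link_symm
  · exact by_contra fun hY => hch' (small _ _ hI hY)

theorem Red.chain_or_pendant {k n r : ℕ} {z a : V} {C X Y M T : Finset V} (ih : IHyp G n)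
    (hn : C.card = n) (h : Red G k z C X Y) (ha : a ∈ C) (hM : M ⊆ C) (haM : a ∉ M)
    (hz : z ∉ M) (hT : T ⊆ M) (nT : T.Nonempty)
    (hexit : ∀ u ∈ M, ∀ w ∈ C, G.Adj u w → w ∈ M ∨ w = a ∨ u ∈ T)
    (hdeg : ∀ v ∈ M, dg G v C + ind Y v ≤ dg G v (insert a M) + ind T v)
    (hconn : ConnIn G (insert a M)) (hX : (∃ x ∈ M, x ∈ X) ∨ a ∈ X)
    (hsuf : ∀ s, Link G (insert a M) X T s → Link G C X Y (s + r))
    (hC : ∃ x ∈ C, x ∉ insert a M) :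
    Chain k (Link G C X Y) ∨ a ∉ X ∧ ∃ c ∈ M, c ∈ X ∧ c ∈ T ∧
      ∀ u ∈ M, u ≠ c → u ∉ X ∧ u ∉ T := by
  have hDC : insert a M ⊆ C := Finset.insert_subset ha hM
  obtain ⟨x, hx, hxD⟩ := hC
  refine (extend (n := n) (k := k) (L := 1) (r := r) (z := a) (D := insert a M)
    (S := X ∩ insert a M) (T := T) (P := fun s => s = 0) (Q := Link G C X Y) ih
    (hn ▸ Finset.card_lt_card ⟨hDC, fun hs => hxD (hs hx)⟩) hconn Finset.inter_subset_right
    (hT.trans (Finset.subset_insert _ _)) ?_ nT ?_ ?_ ?_ le_rfl (Chain.one rfl) ?_).imp_right ?_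
  · rcases hX with ⟨y, hy, hyX⟩ | haX
    · exact ⟨y, by simp [hy, hyX]⟩
    · exact ⟨a, by simp [haX]⟩
  · obtain ⟨t, ht⟩ := nT
    exact ⟨t, by simp [hT ht], fun e => haM (e ▸ hT ht)⟩
  · rintro c hc N ⟨⟨h1, h2, h3, h4⟩, h5⟩
    by_contra haN
    obtain ⟨u, hu, huX⟩ := h.lX c (hDC hc) N ⟨h1.trans hDC, h2, h3, fun u hu w hw b => by
      have huM : u ∈ M := (Finset.mem_insert.1 (h1 hu)).resolve_left fun e => haN (e ▸ hu)
      refine h4 u hu w ?_ b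
      rw [Finset.mem_insert]
      rcases hexit u huM w hw b with h' | h' | h'
      exacts [.inr h', .inl h', absurd h' (h5 u hu).2]⟩
    exact (h5 u hu).1 (Finset.mem_inter.2 ⟨huX, h1 hu⟩)
  · intro v hv hva
    have hvM : v ∈ M := (Finset.mem_insert.1 hv).resolve_left hva
    have h1 := h.deg v (hM hvM) fun e => hz (e ▸ hvM)
    have h2 := hdeg v hvM
    rw [ind_congr (show v ∈ X ↔ v ∈ X ∩ insert a M by simp [hvM])] at h1
    omega
  · rintro t s rfl hs
    have := hsuf s (hs.mono subset_rfl Finset.inter_subset_left subset_rfl)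
    rwa [Nat.zero_add]
  · rintro ⟨c, hc, N, ⟨⟨h1, h2, h3, h4⟩, h5⟩, haN, hD⟩
    have hca : c ≠ a := fun e => h2 (e ▸ haN)
    have hcM := (Finset.mem_insert.1 hc).resolve_left hca
    have hN : ∀ u ∈ M, u ≠ c → u ∈ N := fun u hu huc =>
      (Finset.mem_insert.1 (hD ▸ Finset.mem_insert_of_mem hu)).resolve_left huc
    have hS : ∀ u, u ∈ M → u ∈ X → u ∉ X ∩ insert a M → False := fun u hu hx hn =>
      hn (by simp [hu, hx])
    refine ⟨fun haX => (h5 a haN).1 (by simp [haX]), c, hcM, ?_, ?_, fun u hu huc =>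
      ⟨fun hx => hS u hu hx (h5 u (hN u hu huc)).1, (h5 u (hN u hu huc)).2⟩⟩
    · rcases hX with ⟨y, hy, hyX⟩ | haX
      · by_contra hcX
        exact hS y hy hyX (h5 y (hN y hy fun e => hcX (e ▸ hyX))).1
      · exact absurd (by simp [haX]) (h5 a haN).1
    · obtain ⟨t, ht⟩ := nT
      by_contra hcT
      exact (h5 t (hN t (hT ht) fun e => hcT (e ▸ ht))).2 ht

theorem Red.chain_or_pendant_of_pair {k n : ℕ} {z a c : V} {C X Y M : Finset V} (ih : IHyp G n)
    (hn : C.card = n) (h : Red G k z C X Y) (ha : a ∈ C) (hc : c ∈ C) (hac : a ≠ c)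
    (hM : M ⊆ C) (nM : M.Nonempty) (haM : a ∉ M) (hcM : c ∉ M) (hz : z ∉ M)
    (hcl : ∀ u ∈ M, ∀ w ∈ C, G.Adj u w → w ∈ M ∨ w = a ∨ w = c) (hY : ∀ u ∈ M, u ∉ Y)
    (hX : (∃ x ∈ M, x ∈ X) ∨ a ∈ X) :
    Chain k (Link G C X Y) ∨ a ∉ X ∧ ∃ d ∈ M, d ∈ X ∧
      ∀ u ∈ M, u ≠ d → u ∉ X ∧ ¬ G.Adj c u := by
  have hT : ∀ u, u ∈ nbs G {c} M ↔ u ∈ M ∧ G.Adj c u := fun u => by simp [mem_nbs]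
  have hnl : ∀ b ∈ C, ∀ N, N ⊆ M → N.Nonempty → b ∉ N →
      ¬ ∀ u ∈ N, ∀ w ∈ C, G.Adj u w → w ∈ N ∨ w = b := fun b hb N hN hne hbN hcon => by
    obtain ⟨u, hu, huY⟩ := h.lY b hb N ⟨hN.trans hM, hbN, hne, hcon⟩
    exact hY u (hN hu) huY
  have hpath : ∃ y ∈ Y, ∃ t, PathIn G (C \ insert a M) c y t := by
    by_contra! hcon
    have hcC : c ∈ C \ insert a M := by simp [hc, hcM, hac.symm]
    obtain ⟨u, hu, huY⟩ := h.lY a ha (compIn G (C \ insert a M) c ∪ M) (by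
      refine ⟨Finset.union_subset comp_subset hM, ?_, nM.mono Finset.subset_union_right, ?_⟩
      · rw [Finset.mem_union]
        exact fun h => h.elim (fun h => (comp_mem h).2 (by simp)) haM
      · intro u hu w hw b
        rw [Finset.mem_union] at hu ⊢
        rcases hu with hu | hu
        · rcases comp_adj hu hw b with h | h
          · exact .inl (.inl h)
          · exact (Finset.mem_insert.1 h).symm.imp_left .inr
        · rcases hcl u hu w hw b with h | h | h
          · exact .inl (.inr h)
          · exact .inr h
          · exact .inl (.inl (by rw [h]; exact self_mem_compIn hcC)))
    rcases Finset.mem_union.1 hu with hu | hu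
    · obtain ⟨t, ht⟩ := (Finset.mem_filter.1 hu).2
      exact hcon u huY t ht
    · exact hY u hu huY
  obtain ⟨y, hy, t, ht⟩ := hpath
  refine (h.chain_or_pendant (T := nbs G {c} M) (r := t + 1) ih hn ha hM haM hz nbs_subset ?_ ?_
    ?_ ?_ hX ?_ ⟨c, hc, by simp [hcM, hac.symm]⟩).imp_right ?_
  · by_contra hne
    refine hnl a ha M subset_rfl nM haM fun u hu w hw b => ?_
    rcases hcl u hu w hw b with h | h | rfl
    exacts [.inl h, .inr h, absurd ⟨u, (hT u).2 ⟨hu, b.symm⟩⟩ hne]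
  · intro u hu w hw b
    rcases hcl u hu w hw b with h | h | rfl
    exacts [.inl h, .inr (.inl h), .inr (.inr ((hT u).2 ⟨hu, b.symm⟩))]
  · intro v hv
    have h1 := dg_le_add (G := G) (C := C) (D := insert a M) (E := {c}) (v := v) fun w hw b => by
      rcases hcl v hv w hw b with h | h | h <;> simp [h]
    rw [dg_singleton] at h1
    have h2 : (if G.Adj v c then 1 else 0) = ind (nbs G {c} M) v := by
      unfold ind
      simp only [hT, hv, true_and]
      simp only [G.adj_comm]
    rw [ind_of_notMem (hY v hv)]
    omega
  · refine ⟨⟨a, by simp⟩, fun N hN hne hNc => ?_⟩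
    by_cases haN : a ∈ N
    · have hsub : M ⊆ N := by
        by_contra hMN
        refine hnl c hc (M \ N) Finset.sdiff_subset (Finset.sdiff_nonempty.2 hMN)
          (fun h => hcM (Finset.mem_sdiff.1 h).1) fun u hu w hw b => ?_
        rw [Finset.mem_sdiff] at hu ⊢
        have hwN : w ∉ N := fun h => hu.2 (hNc w h u (by simp [hu.1]) b.symm)
        rcases hcl u hu.1 w hw b with h | rfl | h
        exacts [.inl ⟨h, hwN⟩, absurd haN hwN, .inr h]
      exact Finset.insert_subset haN hsub
    · exfalso
      have hNM : N ⊆ M := fun u hu =>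
        (Finset.mem_insert.1 (hN hu)).resolve_left fun e => haN (e ▸ hu)
      refine hnl c hc N hNM hne (fun h => hcM (hNM h)) fun u hu w hw b => ?_
      rcases hcl u (hNM hu) w hw b with h | h | h
      exacts [.inl (hNc u hu w (by simp [h]) b), .inl (hNc u hu w (by simp [h]) b), .inr h]
  · intro s hs
    have := hs.append (H := C \ insert a M) (Y := Y) (c := c) (t := t) ⟨c, by simp, y, hy, ht⟩
      (fun u hu => ((hT u).1 hu).2.symm) Finset.disjoint_sdiff
    rw [← Nat.add_assoc]
    exact this.mono (Finset.union_subset (Finset.insert_subset ha hM) Finset.sdiff_subset)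
      subset_rfl subset_rfl
  · rintro ⟨haX, d, hd, hdX, -, hrest⟩
    refine ⟨haX, d, hd, hdX, fun u hu hud => ⟨(hrest u hu hud).1, fun b => ?_⟩⟩
    exact (hrest u hu hud).2 ((hT u).2 ⟨hu, b⟩)

theorem Red.chain_of_pair {k n : ℕ} {z a c : V} {C X Y M : Finset V} (ih : IHyp G n)
    (hn : C.card = n) (h : Red G k z C X Y) (ha : a ∈ C) (hc : c ∈ C) (hac : a ≠ c)
    (hM : M ⊆ C) (nM : M.Nonempty) (haM : a ∉ M) (hcM : c ∉ M) (hz : z ∉ M)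
    (hcl : ∀ u ∈ M, ∀ w ∈ C, G.Adj u w → w ∈ M ∨ w = a ∨ w = c) (hY : ∀ u ∈ M, u ∉ Y)
    (haX : a ∈ X) : Chain k (Link G C X Y) :=
  (h.chain_or_pendant_of_pair ih hn ha hc hac hM nM haM hcM hz hcl hY (.inr haX)).resolve_right
    fun h => h.1 haX

theorem Red.chain_of_pair_of_not_adj {k n : ℕ} {z a c : V} {C X Y M : Finset V} (ih : IHyp G n)
    (hn : C.card = n) (h : Red G k z C X Y) (ha : a ∈ C) (hc : c ∈ C) (hac : a ≠ c)
    (hM : M ⊆ C) (haM : a ∉ M) (hcM : c ∉ M) (hz : z ∉ M)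
    (hcl : ∀ u ∈ M, ∀ w ∈ C, G.Adj u w → w ∈ M ∨ w = a ∨ w = c) (hY : ∀ u ∈ M, u ∉ Y)
    (hX : ∃ x ∈ M, x ∈ X) (hna : ∀ u ∈ M, u ∈ X → ¬ G.Adj u a) : Chain k (Link G C X Y) := by
  refine (h.chain_or_pendant_of_pair ih hn ha hc hac hM (hX.imp fun _ h => h.1) haM hcM hz hcl hY
    (.inl hX)).elim id ?_
  rintro ⟨haX, d, hd, hdX, hrest⟩
  by_cases hQ : (M.erase d).Nonempty
  · refine h.chain_of_pair ih hn (hM hd) ha (fun e => haM (e ▸ hd))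
      ((Finset.erase_subset _ _).trans hM) hQ (by simp) (by simp [haM]) (by simp [hz]) ?_
      (fun u hu => hY u (Finset.mem_of_mem_erase hu)) hdX
    intro u hu w hw b
    rw [Finset.mem_erase] at hu
    by_cases hwd : w = d
    · exact .inr (.inl hwd)
    rcases hcl u hu.2 w hw b with h | h | rfl
    · exact .inl (Finset.mem_erase.2 ⟨hwd, h⟩)
    · exact .inr (.inr h)
    · exact absurd b.symm (hrest u hu.2 hu.1).2
  · exfalso
    have hMd : ∀ u ∈ M, u = d := fun u hu => by
      by_contra hud
      exact hQ ⟨u, Finset.mem_erase.2 ⟨hud, hu⟩⟩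
    obtain ⟨u, hu, huY⟩ := h.lY c hc M ⟨hM, hcM, ⟨d, hd⟩, fun u hu w hw b => by
      rcases hcl u hu w hw b with h | rfl | h
      · exact .inl h
      · rw [hMd u hu] at b
        exact absurd b (hna d hd hdX)
      · exact .inr h⟩
    exact hY u hu huY

theorem Red.chain_or_lobe_singleton {k n : ℕ} {z a : V} {C X Y M : Finset V} (ih : IHyp G n)
    (hn : C.card = n) (h : Red G k z C X Y) (ha : a ∈ C) (hM : IsLobe G C a M) (hz : z ∉ M)
    (hC : ∃ x ∈ C, x ∉ M ∧ x ≠ a) :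
    Chain k (Link G C X Y) ∨ a ∉ X ∧ ∃ u ∈ X, M = {u} ∧ G.Adj u a := by
  obtain ⟨hMC, haM, nM, hcl⟩ := hM
  obtain ⟨x, hxC, hxM, hxa⟩ := hC
  have hconn : ConnIn G (insert a M) := by
    have hl : IsLobe G C a (C \ insert a M) := by
      refine ⟨Finset.sdiff_subset, by simp, ⟨x, by simp [hxC, hxM, hxa]⟩, fun u hu w hw b => ?_⟩
      simp only [Finset.mem_sdiff, Finset.mem_insert, not_or] at hu ⊢
      by_contra! hcon
      have hwM : w ∈ M := by tauto
      rcases hcl w hwM u hu.1 b.symm with h | h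
      exacts [hu.2.2 h, hu.2.1 h]
    have := h.conn.sdiff_lobe ha hl
    rwa [Finset.sdiff_sdiff_eq_self (Finset.insert_subset ha hMC)] at this
  refine (h.chain_or_pendant (T := Y ∩ M) (r := 0) ih hn ha hMC haM hz Finset.inter_subset_right
    ?_ ?_ ?_ hconn (.inl ?_) ?_ ⟨x, hxC, by simp [hxM, hxa]⟩).elim .inl ?_
  · obtain ⟨y, hy, hyY⟩ := h.lY a ha M ⟨hMC, haM, nM, hcl⟩
    exact ⟨y, Finset.mem_inter.2 ⟨hyY, hy⟩⟩
  · intro u hu w hw b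
    exact (hcl u hu w hw b).imp_right .inl
  · intro v hv
    rw [ind_congr (show v ∈ Y ↔ v ∈ Y ∩ M by simp [hv])]
    refine Nat.add_le_add_right (dg_mono fun w hw b => ?_) _
    rw [Finset.mem_insert]
    exact (hcl v hv w hw b).symm
  · exact h.lX a ha M ⟨hMC, haM, nM, hcl⟩
  · exact fun s hs => hs.mono (Finset.insert_subset ha hMC) subset_rfl Finset.inter_subset_left
  · rintro ⟨haX, d, hd, hdX, -, hrest⟩
    by_cases hQ : (M.erase d).Nonempty
    · refine .inl (h.chain_of_pair ih hn (hMC hd) ha (fun e => haM (e ▸ hd))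
        ((Finset.erase_subset _ _).trans hMC) hQ (by simp) (by simp [haM]) (by simp [hz]) ?_ ?_ hdX)
      · intro u hu w hw b
        rw [Finset.mem_erase] at hu
        by_cases hwd : w = d
        · exact .inr (.inl hwd)
        rcases hcl u hu.2 w hw b with h | h
        exacts [.inl (Finset.mem_erase.2 ⟨hwd, h⟩), .inr (.inr h)]
      · intro u hu huY
        rw [Finset.mem_erase] at hu
        exact (hrest u hu.2 hu.1).2 (Finset.mem_inter.2 ⟨huY, hu.2⟩)
    · have hMd : M = {d} := Finset.eq_singleton_iff_unique_mem.2 ⟨hd, fun u hu => by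
        by_contra hud
        exact hQ ⟨u, Finset.mem_erase.2 ⟨hud, hu⟩⟩⟩
      obtain ⟨u, hu, w, hw, hwM, b⟩ := h.conn.exists_adj hMC nM ha haM
      rcases hcl u hu w hw b with h' | rfl
      · exact absurd h' hwM
      · rw [hMd, Finset.mem_singleton] at hu
        subst hu
        exact .inr ⟨haX, u, hdX, hMd, b⟩

/-- Vertices of `X` outside `E ∪ A` lose few neighbours when prefixing through `A`. -/
def FullSide (G : SimpleGraph V) (z : V) (C X E A : Finset V) (l : ℕ) : Prop :=
  ∀ v ∈ C, v ∉ E ∪ A → v ≠ z → v ∉ nbs G E C → v ∈ X → dg G v A + 2 ≤ l + ind (nbs G A C) v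

/-- A core `E ∪ A` with many path lengths from `X` to each vertex of `E`, and a fallback family of
path lengths from `X` to each vertex of `A`. -/
structure Core (G : SimpleGraph V) (z : V) (C X E A : Finset V) (L l : ℕ) (P p : ℕ → Prop) :
    Prop where
  subE : E ⊆ C
  subA : A ⊆ C
  disj : Disjoint E A
  neE : E.Nonempty
  posL : 1 ≤ L
  chainP : Chain L P
  linkE : ∀ t, P t → ∀ e ∈ E, Link G (E ∪ A) X {e} t
  lossE : ∀ v ∈ C, v ∉ E ∪ A → v ≠ z →
    ind X v + dg G v A + dg G v E + 1 ≤ L + ind (nbs G E C) v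
  posl : 1 ≤ l
  chainp : Chain l p
  linkA : ∀ t, p t → ∀ a ∈ A, Link G (E ∪ A) X {a} t
  lossA : ∀ v ∈ C, v ∉ E ∪ A → v ≠ z → v ∉ nbs G E C → v ∉ X →
    dg G v A + 1 ≤ l + ind (nbs G A C) v
  opt : FullSide G z C X E A l ∨ ∃ a, A = {a} ∧
    (a ∈ X ∨ (∀ v ∈ C, v ∉ E ∪ A → v ∈ X → ¬ G.Adj v a) ∧ 2 ≤ E.card)

/-- The exceptional outcome for a core: the vertex `c` is the only vertex of `Y` outside the core
and separates, within its component, a set `M` containing `z`. -/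
structure Terminal (G : SimpleGraph V) (z : V) (C Y E A : Finset V) (c : V) (M : Finset V) :
    Prop where
  cY : c ∈ Y
  cE : c ∈ nbs G E C
  cH : c ∉ E ∪ A
  cM : c ∉ M
  zM : z ∈ M
  comp : compIn G (C \ (E ∪ A)) z = insert c M
  av : ∀ u ∈ M, u ∉ Y ∧ u ∉ nbs G E C
  subY : Y ⊆ insert c (E ∪ A)

theorem dg_eq_zero_of_notMem_nbs {C E : Finset V} {v : V} (hv : v ∈ C) (h : v ∉ nbs G E C) :
    dg G v E = 0 := by
  unfold dg
  rw [Finset.card_eq_zero, Finset.filter_eq_empty_iff]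
  exact fun e he a => h (mem_nbs.2 ⟨hv, e, he, a.symm⟩)

theorem dg_comp_le {C E A : Finset V} {y v : V} (hv : v ∈ compIn G (C \ (E ∪ A)) y) :
    dg G v C ≤ dg G v (compIn G (C \ (E ∪ A)) y) + dg G v E + dg G v A := by
  have h1 := dg_le_add (G := G) (C := C) (v := v) fun w hw a => comp_adj hv hw a
  have h2 := dg_le_add (G := G) (C := E ∪ A) (D := E) (E := A) (v := v) fun w hw a =>
    Finset.mem_union.1 hw
  omega

theorem ind_nbs {C D E : Finset V} {v : V} (hv : v ∈ D) (hD : D ⊆ C) :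
    ind (nbs G E C) v = ind (nbs G E D) v :=
  ind_congr (by simp [mem_nbs, hv, hD hv])

theorem comp_eq_of_mem {C : Finset V} {u v : V} (hv : v ∈ C) (h : u ∈ compIn G C v) :
    compIn G C u = compIn G C v := by
  have hsub : compIn G C u ⊆ compIn G C v :=
    compIn_subset_of_closed h fun _ ha _ hb hab => compIn_closed ha hb hab
  refine hsub.antisymm ?_
  exact (connIn_compIn hv).2 _ hsub ⟨u, self_mem_compIn (compIn_subset h)⟩
    fun a ha b hb hab => compIn_closed ha (compIn_subset hb) hab

namespace Core

variable {k n L l : ℕ} {z : V} {C X Y E A : Finset V} {P p : ℕ → Prop}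

theorem chain_of_lobe (ih : IHyp G n) (hn : C.card = n) (h : Red G k z C X Y)
    (K : Core G z C X E A L l P p) {y c : V} {N : Finset V} (hy : y ∈ Y) (hyC : y ∈ C \ (E ∪ A))
    (hc : c ∈ compIn G (C \ (E ∪ A)) y) (hN : IsLobe G (compIn G (C \ (E ∪ A)) y) c N)
    (hav : ∀ u ∈ N, u ∉ nbs G E C ∧ u ∉ Y) (hz : ∃ v ∈ N, v ≠ z)
    (hopt : FullSide G z C X E A l ∨ ∀ u ∈ N, u ∉ X) : Chain k (Link G C X Y) := by
  obtain ⟨v, hv, hvz⟩ := hz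
  have hyD : y ∈ compIn G (C \ (E ∪ A)) y := self_mem_compIn hyC
  have hDc : ConnIn G (compIn G (C \ (E ∪ A)) y) := connIn_compIn hyC
  have hDC : compIn G (C \ (E ∪ A)) y ⊆ C := comp_subset
  have hDH : ∀ u ∈ compIn G (C \ (E ∪ A)) y, u ∉ E ∪ A := fun u hu => (comp_mem hu).2
  have hDa : ∀ u ∈ compIn G (C \ (E ∪ A)) y, ∀ w ∈ C, G.Adj u w →
    w ∈ compIn G (C \ (E ∪ A)) y ∨ w ∈ E ∪ A := fun u hu w hw a => comp_adj hu hw a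
  have hDd := fun u (hu : u ∈ compIn G (C \ (E ∪ A)) y) => dg_comp_le hu
  set D := compIn G (C \ (E ∪ A)) y
  have hvc : v ≠ c := fun e => hN.2.1 (e ▸ hv)
  have hvN : v ∈ D \ {c} := by simp [hN.1 hv, hvc]
  have hl := isLobe_comp (G := G) (hN.1 hv) hvc
  have hsub := hN.comp_subset hv
  have hNc : ConnIn G (compIn G (D \ {c}) v) := connIn_compIn hvN
  have hvN' : v ∈ compIn G (D \ {c}) v := self_mem_compIn hvN
  set N' := compIn G (D \ {c}) v
  have hNC : N' ⊆ C := hl.1.trans hDC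
  have toLobe : ∀ d, ∀ M ⊆ N', (∀ u ∈ M, u ∉ nbs G A N') → ¬ IsLobe G D d M ∨ d ∉ C := by
    intro d M hM hMA
    by_contra! hcon
    obtain ⟨u, hu, huY⟩ := h.lY d hcon.2 M ⟨hM.trans hNC, hcon.1.2.1, hcon.1.2.2.1,
      fun u hu w hw a => by
        rcases hDa u (hcon.1.1 hu) w hw a with h' | h'
        · exact hcon.1.2.2.2 u hu w h' a
        · exfalso
          rcases Finset.mem_union.1 h' with h' | h'
          · exact (hav u (hsub (hM hu))).1 (mem_nbs.2 ⟨hNC (hM hu), w, h', a.symm⟩)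
          · exact hMA u hu (mem_nbs.2 ⟨hM hu, w, h', a.symm⟩)⟩
    exact (hav u (hsub (hM hu))).2 huY
  have hyN : y ∈ D \ N' := Finset.mem_sdiff.2 ⟨hyD, fun hm => (hav y (hsub hm)).2 hy⟩
  obtain ⟨t, ht⟩ := (hDc.sdiff_lobe hc hl).exists_path (Finset.mem_sdiff.2 ⟨hc, hl.2.1⟩) hyN
  have hNE : Disjoint (E ∪ A) N' := Finset.disjoint_left.2 fun u hu hu' => hDH u (hl.1 hu') hu
  refine extend_of_no_bad (n := n) (k := k) (L := l) (r := 1 + t + 1) (z := z) (D := N')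
    (S := nbs G A N') (T := nbs G {c} N') (P := p) (Q := Link G C X Y) ih
    (hn ▸ Finset.card_lt_card ⟨hNC, fun hs => hl.2.1 (hs (hDC hc))⟩) hNc nbs_subset nbs_subset
    ?_ (hl.nbs_nonempty hDc hc) ⟨v, hvN', hvz⟩ ?_ ?_ K.posl K.chainp ?_
  · by_contra hne
    rcases toLobe c N' subset_rfl fun u hu hu' => hne ⟨u, hu'⟩ with h' | h'
    exacts [h' hl, h' (hDC hc)]
  · intro d hd M hM
    rcases toLobe d M hM.1.1 fun u hu => (hM.2 u hu).1 with h' | h'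
    · exact h' (hl.trans hM.1 fun u hu => (hM.2 u hu).2)
    · exact h' (hNC hd)
  · intro u hu huz
    have h1 := h.deg u (hNC hu) huz
    have h2 := hDd u (hl.1 hu)
    have h3 := hl.dg_le hu
    have h4 := dg_eq_zero_of_notMem_nbs (hNC hu) (hav u (hsub hu)).1
    have h5 := ind_of_notMem (hav u (hsub hu)).2
    rw [← ind_nbs (E := A) hu hNC]
    by_cases huX : u ∈ X
    · have := (hopt.resolve_right fun h => h u (hsub hu) huX) u (hNC hu) (hDH u (hl.1 hu)) huz
        (hav u (hsub hu)).1 huX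
      rw [ind_of_mem huX] at h1
      omega
    · have := K.lossA u (hNC hu) (hDH u (hl.1 hu)) huz (hav u (hsub hu)).1 huX
      rw [ind_of_notMem huX] at h1
      omega
  · intro s r hs hr
    have h1 := hr.prepend (K.linkA s hs) (fun u hu => (mem_nbs.1 hu).2) hNE
    have h2 := h1.append (H := D \ N') (Y := Y) (c := c) (t := t) ⟨c, by simp, y, hy, ht⟩
      (fun u hu => (adj_of_mem_nbs_singleton hu).symm) (by
        refine Finset.disjoint_union_left.2 ⟨Finset.disjoint_left.2 fun u hu hu' => ?_,
          Finset.disjoint_sdiff⟩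
        exact hDH u (Finset.mem_sdiff.1 hu').1 hu)
    rw [show s + r + (1 + t + 1) = s + r + 1 + t + 1 by omega]
    exact h2.mono (Finset.union_subset (Finset.union_subset (Finset.union_subset K.subE K.subA)
      hNC) (Finset.sdiff_subset.trans hDC)) subset_rfl subset_rfl

theorem chain_of_not_attached (ih : IHyp G n) (hn : C.card = n) (h : Red G k z C X Y)
    (K : Core G z C X E A L l P p) {y : V} (hy : y ∈ Y) (hyC : y ∈ C \ (E ∪ A))
    (hE : ∀ u ∈ compIn G (C \ (E ∪ A)) y, u ∉ nbs G E C) : Chain k (Link G C X Y) := by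
  have hyD : y ∈ compIn G (C \ (E ∪ A)) y := self_mem_compIn hyC
  have hDc : ConnIn G (compIn G (C \ (E ∪ A)) y) := connIn_compIn hyC
  have hDC : compIn G (C \ (E ∪ A)) y ⊆ C := comp_subset
  have hDH : ∀ u ∈ compIn G (C \ (E ∪ A)) y, u ∉ E ∪ A := fun u hu => (comp_mem hu).2
  have hDa : ∀ u ∈ compIn G (C \ (E ∪ A)) y, ∀ w ∈ C, G.Adj u w →
      w ∈ compIn G (C \ (E ∪ A)) y ∨ w ∈ A := fun u hu w hw a => by
    refine (comp_adj hu hw a).imp_right fun h' => (Finset.mem_union.1 h').resolve_left fun h' => ?_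
    exact hE u hu (mem_nbs.2 ⟨hDC hu, w, h', a.symm⟩)
  have hDd := fun u (hu : u ∈ compIn G (C \ (E ∪ A)) y) => dg_comp_le hu
  set D := compIn G (C \ (E ∪ A)) y
  obtain ⟨e, he⟩ := K.neE
  have heD : e ∉ D := fun h => hDH e h (Finset.mem_union_left _ he)
  rcases K.opt with hopt | ⟨a, rfl, hopt⟩
  · refine extend_of_no_bad (n := n) (k := k) (L := l) (r := 1) (z := z) (D := D)
      (S := nbs G A D) (T := Y ∩ D) (P := p) (Q := Link G C X Y) ih
      (hn ▸ Finset.card_lt_card ⟨hDC, fun hs => heD (hs (K.subE he))⟩) hDc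
      nbs_subset Finset.inter_subset_right ?_ ⟨y, Finset.mem_inter.2 ⟨hy, hyD⟩⟩
      ⟨y, hyD, fun e => h.zY (e ▸ hy)⟩ ?_ ?_ K.posl K.chainp ?_
    · obtain ⟨u, hu, w, hw, hwD, a⟩ := h.conn.exists_adj hDC ⟨y, hyD⟩ (K.subE he) heD
      exact ⟨u, mem_nbs.2 ⟨hu, w, (hDa u hu w hw a).resolve_left hwD, a.symm⟩⟩
    · rintro d hd M ⟨hM, hav⟩
      obtain ⟨u, hu, huY⟩ := h.lY d (hDC hd) M ⟨hM.1.trans hDC, hM.2.1, hM.2.2.1,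
        fun u hu w hw a => by
          rcases hDa u (hM.1 hu) w hw a with h' | h'
          · exact hM.2.2.2 u hu w h' a
          · exact absurd (mem_nbs.2 ⟨hM.1 hu, w, h', a.symm⟩) (hav u hu).1⟩
      exact (hav u hu).2 (Finset.mem_inter.2 ⟨huY, hM.1 hu⟩)
    · intro u hu huz
      have h1 := h.deg u (hDC hu) huz
      have h2 := hDd u hu
      have h4 := dg_eq_zero_of_notMem_nbs (hDC hu) (hE u hu)
      rw [← ind_nbs (E := A) hu hDC, ← ind_congr (show u ∈ Y ↔ u ∈ Y ∩ D by simp [hu])]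
      by_cases huX : u ∈ X
      · have := hopt u (hDC hu) (hDH u hu) huz (hE u hu) huX
        rw [ind_of_mem huX] at h1
        omega
      · have := K.lossA u (hDC hu) (hDH u hu) huz (hE u hu) huX
        rw [ind_of_notMem huX] at h1
        omega
    · intro s r hs hr
      have h1 := hr.prepend (K.linkA s hs) (fun u hu => (mem_nbs.1 hu).2)
        (Finset.disjoint_left.2 fun u hu hu' => hDH u hu' hu)
      exact h1.mono (Finset.union_subset (Finset.union_subset K.subE K.subA) hDC) subset_rfl
        Finset.inter_subset_left
  · have haC : a ∈ C := K.subA (by simp)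
    have haD : a ∉ D := fun h' => hDH a h' (by simp)
    have hea : e ≠ a := fun h' => Finset.disjoint_left.1 K.disj he (by simp [h'])
    have hlD : IsLobe G C a D := ⟨hDC, haD, ⟨y, hyD⟩, fun u hu w hw b =>
      (hDa u hu w hw b).imp_right Finset.mem_singleton.1⟩
    by_cases hz : z ∈ D
    · have hl : IsLobe G C a (C \ insert a D) := by
        refine ⟨Finset.sdiff_subset, by simp, ⟨e, by simp [K.subE he, heD, hea]⟩,
          fun u hu w hw b => ?_⟩
        simp only [Finset.mem_sdiff, Finset.mem_insert, not_or] at hu ⊢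
        by_contra! hcon
        have hwD : w ∈ D := by tauto
        rcases hDa w hwD u hu.1 b.symm with h' | h'
        exacts [hu.2.2 h', hu.2.1 (Finset.mem_singleton.1 h')]
      refine (h.chain_or_lobe_singleton ih hn haC hl (by simp [hz]) ⟨y, hDC hyD, by simp [hyD],
        fun e => haD (e ▸ hyD)⟩).elim id ?_
      rintro ⟨haX, u, -, hu, -⟩
      have hEu : E ⊆ {u} := by
        rw [← hu]
        intro x hx
        have hxD : x ∉ D := fun h' => hDH x h' (Finset.mem_union_left _ hx)
        simp [K.subE hx, hxD,
          show x ≠ a from fun h' => Finset.disjoint_left.1 K.disj hx (by simp [h'])]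
      have := Finset.card_le_card hEu
      have := (hopt.resolve_left haX).2
      simp at *
      omega
    · refine (h.chain_or_lobe_singleton ih hn haC hlD hz ⟨e, K.subE he, heD, hea⟩).elim id ?_
      rintro ⟨haX, u, huX, hu, b⟩
      have huD : u ∈ D := by rw [hu]; simp
      exact absurd b ((hopt.resolve_left haX).1 u (hDC huD) (hDH u huD) huX)

theorem chain_or_insert (ih : IHyp G n) (hn : C.card = n) (h : Red G k z C X Y)
    (K : Core G z C X E A L l P p) {y : V} (hy : y ∈ Y) (hyC : y ∈ C \ (E ∪ A)) :
    Chain k (Link G C X Y) ∨ ∃ M, compIn G (C \ (E ∪ A)) y = insert y M ∧ y ∉ M ∧ z ∈ M ∧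
      (∀ u ∈ M, u ∉ Y ∧ u ∉ nbs G E C) ∧ y ∈ nbs G E C ∧
      ((FullSide G z C X E A l ∨ ∀ u ∈ M, u ∉ X) → M = {z}) := by
  by_cases hch : Chain k (Link G C X Y)
  · exact .inl hch
  have hE : ∃ u ∈ compIn G (C \ (E ∪ A)) y, u ∈ nbs G E C := by
    by_contra! hE
    exact hch (chain_of_not_attached ih hn h K hy hyC hE)
  have hlobe := fun c N => chain_of_lobe (c := c) (N := N) ih hn h K hy hyC
  have hyD : y ∈ compIn G (C \ (E ∪ A)) y := self_mem_compIn hyC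
  have hDc : ConnIn G (compIn G (C \ (E ∪ A)) y) := connIn_compIn hyC
  have hDC : compIn G (C \ (E ∪ A)) y ⊆ C := comp_subset
  have hDH : ∀ u ∈ compIn G (C \ (E ∪ A)) y, u ∉ E ∪ A := fun u hu => (comp_mem hu).2
  have hDa : ∀ u ∈ compIn G (C \ (E ∪ A)) y, ∀ w ∈ C, G.Adj u w →
    w ∈ compIn G (C \ (E ∪ A)) y ∨ w ∈ E ∪ A := fun u hu w hw a => comp_adj hu hw a
  have hDd := fun u (hu : u ∈ compIn G (C \ (E ∪ A)) y) => dg_comp_le hu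
  set D := compIn G (C \ (E ∪ A)) y
  obtain ⟨e, he⟩ := K.neE
  obtain ⟨u, hu, huE⟩ := hE
  have hyz : y ≠ z := fun e => h.zY (e ▸ hy)
  have hbadav : ∀ c M, IsBad G D (nbs G E D) (Y ∩ D) c M → ∀ u ∈ M, u ∉ nbs G E C ∧ u ∉ Y := by
    intro c M hM u hu
    refine ⟨fun h' => (hM.2 u hu).1 (mem_nbs.2 ⟨hM.1.1 hu, (mem_nbs.1 h').2⟩), fun h' => ?_⟩
    exact (hM.2 u hu).2 (Finset.mem_inter.2 ⟨h', hM.1.1 hu⟩)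
  have hfull : ∀ c ∈ D, ∀ M, IsBad G D (nbs G E D) (Y ∩ D) c M → (∃ v ∈ M, v ≠ z) →
      ¬ (FullSide G z C X E A l ∨ ∀ u ∈ M, u ∉ X) := fun c hc M hM hv ho =>
    hch (hlobe c M hc hM.1 (hbadav c M hM) hv ho)
  refine (extend (n := n) (k := k) (L := L) (r := 1) (z := z) (D := D)
    (S := nbs G E D) (T := Y ∩ D) (P := P) (Q := Link G C X Y) ih
    (hn ▸ Finset.card_lt_card ⟨hDC, fun hs =>
      hDH e (hs (K.subE he)) (Finset.mem_union_left _ he)⟩) hDc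
    nbs_subset Finset.inter_subset_right ⟨u, mem_nbs.2 ⟨hu, (mem_nbs.1 huE).2⟩⟩
    ⟨y, Finset.mem_inter.2 ⟨hy, hyD⟩⟩ ⟨y, hyD, hyz⟩ ?_ ?_ K.posL K.chainP ?_).imp_right ?_
  · intro c hc M hM
    by_contra hz
    obtain ⟨w, hw⟩ := hM.1.2.2.1
    have hno := hfull c hc M hM ⟨w, hw, fun e => hz (e ▸ hw)⟩
    push Not at hno
    obtain ⟨a, rfl, hopt⟩ := K.opt.resolve_left hno.1
    have hac : a ≠ c := fun h' => hDH c hc (by simp [h'])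
    have haC : a ∈ C := K.subA (by simp)
    have haM : a ∉ M := fun h' => hDH a (hM.1.1 h') (by simp)
    have hcl : ∀ u ∈ M, ∀ w ∈ C, G.Adj u w → w ∈ M ∨ w = a ∨ w = c := by
      intro u hu w hw b
      rcases hDa u (hM.1.1 hu) w hw b with h' | h'
      · exact (hM.1.2.2.2 u hu w h' b).imp_right .inr
      · rcases Finset.mem_union.1 h' with h' | h'
        · exact absurd (mem_nbs.2 ⟨hDC (hM.1.1 hu), w, h', b.symm⟩) (hbadav c M hM u hu).1
        · exact .inr (.inl (Finset.mem_singleton.1 h'))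
    have hMC := hM.1.1.trans hDC
    have hMY := fun u hu => (hbadav c M hM u hu).2
    rcases hopt with haX | ⟨hna, -⟩
    · exact hch (h.chain_of_pair ih hn haC (hDC hc) hac hMC hM.1.2.2.1 haM hM.1.2.1 hz hcl hMY haX)
    · exact hch (h.chain_of_pair_of_not_adj ih hn haC (hDC hc) hac hMC haM hM.1.2.1 hz hcl hMY
        hno.2 fun u hu huX => hna u (hMC hu) (hDH u (hM.1.1 hu)) huX)
  · intro v hv hvz
    have h1 := h.deg v (hDC hv) hvz
    have h2 := hDd v hv
    have h3 := K.lossE v (hDC hv) (hDH v hv) hvz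
    rw [← ind_nbs (E := E) hv hDC, ← ind_congr (show v ∈ Y ↔ v ∈ Y ∩ D by simp [hv])]
    omega
  · intro s r hs hr
    have h1 := hr.prepend (K.linkE s hs) (fun u hu => (mem_nbs.1 hu).2)
      (Finset.disjoint_left.2 fun u hu hu' => hDH u hu' hu)
    exact h1.mono (Finset.union_subset (Finset.union_subset K.subE K.subA) hDC) subset_rfl
      Finset.inter_subset_left
  · rintro ⟨c, hc, M, hM, hzM, hD⟩
    have hav := hbadav c M hM
    have hyM : y ∉ M := fun h' => (hav y h').2 hy
    have hyc : y = c := (Finset.mem_insert.1 (hD ▸ hyD)).resolve_right hyM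
    subst hyc
    refine ⟨M, hD, hyM, hzM, fun u hu => (hav u hu).symm, ?_, fun ho => ?_⟩
    · rw [hD] at hu
      rcases Finset.mem_insert.1 hu with rfl | hu
      · exact huE
      · exact absurd huE (hav u hu).1
    · refine Finset.eq_singleton_iff_unique_mem.2 ⟨hzM, fun v hv => ?_⟩
      by_contra hvz
      exact hfull y hc M hM ⟨v, hv, hvz⟩ ho

/-- Either the path lengths are found, or `Y` is contained in the core up to one vertex. -/
theorem chain_or_terminal (ih : IHyp G n) (hn : C.card = n) (h : Red G k z C X Y)
    (K : Core G z C X E A L l P p) :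
    Chain k (Link G C X Y) ∨ Y ⊆ E ∪ A ∨ ∃ c M, Terminal G z C Y E A c M ∧
      ((FullSide G z C X E A l ∨ ∀ u ∈ M, u ∉ X) →
        k ≤ L + 1 ∧ ∀ t, P t → Link G C X Y (t + 1)) := by
  by_cases hch : Chain k (Link G C X Y)
  · exact .inl hch
  by_cases hY : Y ⊆ E ∪ A
  · exact .inr (.inl hY)
  obtain ⟨c, hc, hcH⟩ := Finset.not_subset.1 hY
  have hcC : c ∈ C \ (E ∪ A) := Finset.mem_sdiff.2 ⟨h.subY hc, hcH⟩
  obtain ⟨M, hM, hcM, hzM, hav, hcE, hfull⟩ := (chain_or_insert ih hn h K hc hcC).resolve_left hch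
  have hzc : z ∈ compIn G (C \ (E ∪ A)) c := by rw [hM]; exact Finset.mem_insert_of_mem hzM
  refine .inr (.inr ⟨c, M, ⟨hc, hcE, hcH, hcM, hzM, ?_, hav, fun y hy => ?_⟩, fun ho => ⟨?_, ?_⟩⟩)
  · rw [comp_eq_of_mem hcC hzc, hM]
  · by_cases hyH : y ∈ E ∪ A
    · exact Finset.mem_insert_of_mem hyH
    have hyC : y ∈ C \ (E ∪ A) := Finset.mem_sdiff.2 ⟨h.subY hy, hyH⟩
    obtain ⟨M', hM', -, hzM', -⟩ := (chain_or_insert ih hn h K hy hyC).resolve_left hch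
    have hzy : z ∈ compIn G (C \ (E ∪ A)) y := by rw [hM']; exact Finset.mem_insert_of_mem hzM'
    have hyc : y ∈ insert c M := by
      rw [← hM, ← comp_eq_of_mem hcC hzc, comp_eq_of_mem hyC hzy]
      exact self_mem_compIn hyC
    rcases Finset.mem_insert.1 hyc with rfl | hyM
    · simp
    · exact absurd hy (hav y hyM).1
  · have hMz := hfull ho
    have hcz : c ≠ z := fun e => hcM (e ▸ hzM)
    have h1 := h.deg c (h.subY hc) hcz
    have h2 := K.lossE c (h.subY hc) hcH hcz
    have h3 := dg_comp_le (self_mem_compIn (G := G) hcC)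
    have h4 : dg G c (compIn G (C \ (E ∪ A)) c) ≤ 1 := by
      have := dg_mono (G := G) (C := compIn G (C \ (E ∪ A)) c) (D := {z}) (v := c)
        fun w hw a => by
          rw [hM, hMz] at hw
          simpa [a.ne'] using hw
      have := dg_le_card (G := G) (C := {z}) (v := c)
      simp at *
      omega
    rw [ind_of_mem hcE] at h2
    rw [ind_of_mem hc] at h1
    omega
  · intro t ht
    obtain ⟨-, e, he, a⟩ := mem_nbs.1 hcE
    have h1 : Link G {c} {c} {c} 0 := link_singleton
    have h2 := h1.prepend (H := E ∪ A) (X := X) (E := {e}) (t := t) (fun e' he' => by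
      rw [Finset.mem_singleton] at he'; subst he'
      exact K.linkE t ht e' he) (fun u hu => by
        rw [Finset.mem_singleton] at hu; subst hu
        exact ⟨e, by simp, a⟩) (Finset.disjoint_singleton_right.2 hcH)
    exact h2.mono (Finset.union_subset (Finset.union_subset K.subE K.subA)
      (Finset.singleton_subset_iff.2 (h.subY hc))) subset_rfl (Finset.singleton_subset_iff.2 hc)

end Core

theorem exists_mem_ne_ne {K : Finset V} (h : 3 ≤ K.card) (u v : V) : ∃ w ∈ K, w ≠ u ∧ w ≠ v := by
  obtain ⟨w, hw⟩ := Finset.card_pos.1 (show 0 < (K \ {u, v}).card by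
    have := Finset.le_card_sdiff ({u, v} : Finset V) K
    have := Finset.card_le_two (a := u) (b := v)
    omega)
  exact ⟨w, by simp at hw; tauto⟩

theorem pathIn_clique {K : Finset V} {u v : V} {t : ℕ} (hK : G.IsClique K) (hu : u ∈ K)
    (hv : v ∈ K) (huv : u ≠ v) (ht : t + 2 ≤ K.card) : PathIn G K u v (t + 1) := by
  induction t generalizing K u with
  | zero => exact .cons hu (hK hu hv huv) (.nil (Finset.mem_erase.2 ⟨huv.symm, hv⟩))
  | succ t ih =>
    obtain ⟨w, hw, hwu, hwv⟩ := exists_mem_ne_ne (show 3 ≤ K.card by omega) u v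
    refine .cons hu (hK hu hw hwu.symm) (ih (hK.subset (by simp)) (by simp [hw, hwu])
      (by simp [hv, huv.symm]) hwv ?_)
    rw [Finset.card_erase_of_mem hu]
    omega

theorem link_clique {K : Finset V} {e : V} {t : ℕ} (hK : G.IsClique K) (he : e ∈ K)
    (ht : t < K.card) : Link G K K {e} t := by
  cases t with
  | zero => exact ⟨e, he, e, by simp, .nil he⟩
  | succ t =>
    obtain ⟨u, hu, hue⟩ := exists_mem_ne_of_two_le (show 2 ≤ K.card by omega) e
    exact ⟨u, hu, e, by simp, pathIn_clique hK hu he hue (by omega)⟩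

theorem pathIn_bipartite_odd {A B : Finset V} {a b : V} {j : ℕ} (hd : Disjoint A B)
    (h : ∀ a ∈ A, ∀ b ∈ B, G.Adj a b) (ha : a ∈ A) (hb : b ∈ B) (hA : j < A.card)
    (hB : j < B.card) : PathIn G (A ∪ B) b a (2 * j + 1) := by
  induction j generalizing A B b with
  | zero =>
    have hab : a ≠ b := fun e => Finset.disjoint_left.1 hd ha (e ▸ hb)
    exact .cons (by simp [hb]) (h a ha b hb).symm (.nil (by simp [ha, hab]))
  | succ j ih =>
    obtain ⟨a', ha', haa⟩ := exists_mem_ne_of_two_le (show 2 ≤ A.card by omega) a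
    obtain ⟨b', hb', hbb⟩ := exists_mem_ne_of_two_le (show 2 ≤ B.card by omega) b
    have key := ih (A := A.erase a') (B := B.erase b) (b := b')
      (hd.mono (Finset.erase_subset _ _) (Finset.erase_subset _ _))
      (fun x hx y hy => h x (Finset.mem_of_mem_erase hx) y (Finset.mem_of_mem_erase hy))
      (by simp [ha, haa.symm]) (by simp [hb', hbb])
      (by rw [Finset.card_erase_of_mem ha']; omega) (by rw [Finset.card_erase_of_mem hb]; omega)
    have hAB : ∀ x ∈ A, ∀ y ∈ B, x ≠ y := fun x hx y hy e =>
      Finset.disjoint_left.1 hd hx (e ▸ hy)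
    refine .cons (by simp [hb]) (h a' ha' b hb).symm (.cons (by simp [ha', hAB a' ha' b hb])
      (h a' ha' b' hb') (key.mono fun x hx => ?_))
    simp only [Finset.mem_union, Finset.mem_erase] at hx ⊢
    rcases hx with ⟨h1, h2⟩ | ⟨h1, h2⟩
    · exact ⟨h1, hAB x h2 b hb, .inl h2⟩
    · exact ⟨(hAB a' ha' x h2).symm, h1, .inr h2⟩

theorem pathIn_bipartite_even {A B : Finset V} {b b' : V} {j : ℕ} (hd : Disjoint A B)
    (h : ∀ a ∈ A, ∀ b ∈ B, G.Adj a b) (hb : b ∈ B) (hb' : b' ∈ B) (hbb : b ≠ b')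
    (hA : j < A.card) (hB : j + 1 < B.card) : PathIn G (A ∪ B) b b' (2 * j + 2) := by
  obtain ⟨a, ha⟩ := Finset.card_pos.1 (show 0 < A.card by omega)
  have key := pathIn_bipartite_odd (A := B.erase b) (B := A) (a := b') (b := a) (j := j)
    (hd.symm.mono_left (Finset.erase_subset _ _))
    (fun x hx y hy => (h y hy x (Finset.mem_of_mem_erase hx)).symm) (by simp [hb', hbb.symm]) ha
    (by rw [Finset.card_erase_of_mem hb]; omega) hA
  refine .cons (by simp [hb]) (h a ha b hb).symm (key.mono fun x hx => ?_)
  simp only [Finset.mem_union, Finset.mem_erase] at hx ⊢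
  rcases hx with ⟨h1, h2⟩ | h1
  · exact ⟨h1, .inr h2⟩
  · exact ⟨fun e => Finset.disjoint_left.1 hd h1 (e ▸ hb), .inl h1⟩

theorem dg_lt_card {K : Finset V} {v : V} (h : ¬ ∀ w ∈ K, G.Adj v w) : dg G v K < K.card := by
  push Not at h
  obtain ⟨w, hw, hvw⟩ := h
  exact Finset.card_lt_card ⟨Finset.filter_subset _ _,
    fun hs => hvw (Finset.mem_filter.1 (hs hw)).2⟩

theorem dg_self_lt_card {K : Finset V} {v : V} (h : v ∈ K) : dg G v K < K.card :=
  dg_lt_card fun h' => G.loopless.irrefl v (h' v h)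

theorem dg_empty {v : V} : dg G v ∅ = 0 := by simp [dg]

theorem mem_nbs_of_dg_pos {C E : Finset V} {v : V} (hv : v ∈ C) (h : 0 < dg G v E) :
    v ∈ nbs G E C := by
  by_contra hcon
  rw [dg_eq_zero_of_notMem_nbs hv hcon] at h
  exact lt_irrefl _ h

theorem Red.chain_or_subset_clique {k n : ℕ} {z : V} {C X Y : Finset V} (ih : IHyp G n)
    (hn : C.card = n) (h : Red G k z C X Y) {x x' : V} (hx : x ∈ X) (hx' : x' ∈ X)
    (hxx : G.Adj x x') :
    Chain k (Link G C X Y) ∨ ∃ K ⊆ X, G.IsClique K ∧ Y ⊆ K := by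
  obtain ⟨K, hK, hmax⟩ := Finset.exists_max_image
    (X.powerset.filter fun K : Finset V => G.IsClique (K : Set V)) Finset.card
    ⟨∅, by simp [SimpleGraph.IsClique]⟩
  simp only [Finset.mem_filter, Finset.mem_powerset, and_imp] at hK hmax
  obtain ⟨hKX, hKc⟩ := hK
  have h2 : 2 ≤ K.card := by
    have := hmax {x, x'} (by simp [Finset.insert_subset_iff, hx, hx']) (by
      simp [hxx])
    rwa [Finset.card_pair hxx.ne] at this
  have hKC := hKX.trans h.subX
  have core : Core G z C X K ∅ K.card 2 (fun t => t < K.card) (fun _ => True) := by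
    refine ⟨hKC, by simp, by simp, Finset.card_pos.1 (by omega), by omega,
      Chain.interval (a := 0) (by simp), ?_, ?_, by omega, Chain.interval (a := 0) (by simp),
      by simp, ?_, .inl ?_⟩
    · intro t ht e he
      exact (link_clique hKc he ht).mono (by simp) hKX subset_rfl
    · intro v hv hvK hvz
      rw [Finset.union_empty] at hvK
      rw [dg_empty]
      have h3 : ind X v + dg G v K ≤ K.card := by
        by_cases hvX : v ∈ X
        · rw [ind_of_mem hvX]
          have := dg_lt_card (G := G) (K := K) (v := v) fun hcon => by
            have := hmax (insert v K) (Finset.insert_subset hvX hKX) (by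
              rw [Finset.coe_insert, SimpleGraph.isClique_insert]
              exact ⟨hKc, fun w hw _ => hcon w hw⟩)
            rw [Finset.card_insert_of_notMem hvK] at this
            omega
          omega
        · rw [ind_of_notMem hvX]
          have := dg_le_card (G := G) (C := K) (v := v)
          omega
      rcases Nat.eq_zero_or_pos (dg G v K) with h4 | h4
      · have := ind_le_one (X := X) (v := v)
        omega
      · rw [ind_of_mem (mem_nbs_of_dg_pos hv h4)]
        omega
    · intro v _ _ _ _ _
      rw [dg_empty]; omega
    · intro v _ _ _ _ _
      rw [dg_empty]; omega
  rcases core.chain_or_terminal ih hn h with h' | h' | ⟨c, M, hT, -⟩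
  · exact .inl h'
  · exact .inr ⟨K, hKX, hKc, by simpa using h'⟩
  · exfalso
    have hMD : ∀ u ∈ M, u ∈ compIn G (C \ (K ∪ ∅)) z := fun u hu => by
      rw [hT.comp]; exact Finset.mem_insert_of_mem hu
    obtain ⟨u, hu, huY⟩ := h.lY c (h.subY hT.cY) M ⟨fun u hu => (comp_mem (hMD u hu)).1, hT.cM,
      ⟨z, hT.zM⟩, fun u hu w hw a => by
        rcases comp_adj (hMD u hu) hw a with h' | h'
        · rw [hT.comp] at h'
          exact (Finset.mem_insert.1 h').symm
        · rw [Finset.union_empty] at h'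
          exact absurd (mem_nbs.2 ⟨(comp_mem (hMD u hu)).1, w, h', a.symm⟩) (hT.av u hu).2⟩
    exact (hT.av u hu).1 huY

theorem Red.chain_of_clique {k n : ℕ} {z : V} {C K : Finset V} (ih : IHyp G n)
    (hn : C.card = n) (h : Red G k z C K K) (hK : G.IsClique K) : Chain k (Link G C K K) := by
  have h2 := h.cardX
  have hlow : Chain K.card (Link G C K K) := Chain.interval (a := 0) fun t ht => by
    obtain ⟨e, he⟩ := Finset.card_pos.1 (show 0 < K.card by omega)
    exact (link_clique hK he (by simpa using ht)).mono h.subX subset_rfl (by simpa using he)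
  by_cases hk : k ≤ K.card
  · exact hlow.le hk
  by_cases hv : ∃ v ∈ C, v ∉ K ∧ v ≠ z
  · obtain ⟨v, hvC, hvK, hvz⟩ := hv
    have hvD : v ∈ compIn G (C \ K) v := self_mem_compIn (by simp [hvC, hvK])
    have hDc : ConnIn G (compIn G (C \ K) v) := connIn_compIn (by simp [hvC, hvK])
    have hDC : compIn G (C \ K) v ⊆ C := comp_subset
    have hDK : ∀ u ∈ compIn G (C \ K) v, u ∉ K := fun u hu => (comp_mem hu).2
    have hDa : ∀ u ∈ compIn G (C \ K) v, ∀ w ∈ C, G.Adj u w →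
      w ∈ compIn G (C \ K) v ∨ w ∈ K := fun u hu w hw a => comp_adj hu hw a
    set D := compIn G (C \ K) v
    obtain ⟨e, he⟩ := Finset.card_pos.1 (show 0 < K.card by omega)
    have hatt : ∀ y ∈ K, ∃ e ∈ K, e ≠ y ∧ ∃ u ∈ D, G.Adj e u := by
      intro y hy
      by_contra! hcon
      obtain ⟨u, hu, huK⟩ := h.lX y (h.subX hy) D ⟨hDC, fun h' => hDK y h' hy, ⟨v, hvD⟩,
        fun u hu w hw a => by
          refine (hDa u hu w hw a).imp_right fun hwK => ?_
          by_contra hwy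
          exact hcon w hwK hwy u hu a.symm⟩
      exact hDK u hu huK
    obtain ⟨y, hy, -, y', hy', hyy⟩ := hatt e he
    obtain ⟨e', he', hey, u, hu, heu⟩ := hatt y hy
    have hKe : insert y (K.erase y) = K := Finset.insert_erase hy
    refine extend_of_no_bad (n := n) (k := k) (L := K.card - 1) (r := 2) (z := z) (D := D)
      (S := nbs G (K.erase y) D) (T := nbs G {y} D) (P := fun t => t < K.card - 1)
      (Q := Link G C K K) ih
      (hn ▸ Finset.card_lt_card ⟨hDC, fun hs => hDK e (hs (h.subX he)) he⟩) hDc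
      nbs_subset nbs_subset ⟨u, mem_nbs.2 ⟨hu, e', by simp [he', hey], heu⟩⟩
      ⟨y', mem_nbs.2 ⟨hy', y, by simp, hyy⟩⟩ ⟨v, hvD, hvz⟩ ?_ ?_ (by omega)
      (Chain.interval (a := 0) (by simp)) ?_
    · rintro d hd M ⟨hM, hav⟩
      obtain ⟨u, hu, huK⟩ := h.lX d (hDC hd) M ⟨hM.1.trans hDC, hM.2.1, hM.2.2.1,
        fun u hu w hw a => by
          rcases hDa u (hM.1 hu) w hw a with h' | h'
          · exact hM.2.2.2 u hu w h' a
          · by_cases hwy : w = y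
            · exact absurd (mem_nbs.2 ⟨hM.1 hu, w, by simp [hwy], a.symm⟩) (hav u hu).2
            · exact absurd (mem_nbs.2 ⟨hM.1 hu, w, by simp [hwy, h'], a.symm⟩) (hav u hu).1⟩
      exact hDK u (hM.1 hu) huK
    · intro w hw hwz
      have h1 := h.deg w (hDC hw) hwz
      rw [ind_of_notMem (hDK w hw)] at h1
      have h3 := dg_le_add (G := G) (C := C) (v := w) fun x hx a => hDa w hw x hx a
      have h4 := dg_le_add (G := G) (C := K) (D := K.erase y) (E := {y}) (v := w) fun x hx a => by
        by_cases hxy : x = y <;> simp [hxy, hx]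
      have h5 := dg_le_card (G := G) (C := K.erase y) (v := w)
      rw [Finset.card_erase_of_mem hy] at h5
      have h6 : dg G w {y} ≤ ind (nbs G {y} D) w := by
        rcases Nat.eq_zero_or_pos (dg G w {y}) with h7 | h7
        · omega
        · rw [ind_of_mem (mem_nbs_of_dg_pos hw h7)]
          exact dg_le_card.trans (by simp)
      rcases Nat.eq_zero_or_pos (dg G w (K.erase y)) with h7 | h7
      · omega
      · rw [ind_of_mem (mem_nbs_of_dg_pos hw h7)]
        omega
    · intro t s ht hs
      have h1 := hs.prepend (H := K.erase y) (X := K.erase y) (t := t) (fun e he =>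
        link_clique (hK.subset (by simp)) he (by rwa [Finset.card_erase_of_mem hy]))
        (fun u hu => (mem_nbs.1 hu).2)
        (Finset.disjoint_left.2 fun u hu hu' => hDK u hu' (Finset.mem_of_mem_erase hu))
      have h2 := h1.append (link_singleton (G := G) (c := y))
        (fun u hu => (adj_of_mem_nbs_singleton hu).symm) (by
          simp only [Finset.disjoint_singleton_right, Finset.mem_union, Finset.mem_erase]
          exact fun h' => h'.elim (fun h' => h'.1 rfl) fun h' => hDK y h' hy)
      rw [show t + s + 2 = t + s + 1 + 0 + 1 by omega]
      exact h2.mono (Finset.union_subset (Finset.union_subset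
        ((Finset.erase_subset _ _).trans h.subX) hDC) (by simpa using h.subX hy))
        (Finset.erase_subset _ _) (by simpa using hy)
  · push Not at hv
    have hz : ∀ w ∈ K, dg G w C ≤ dg G w K + dg G w {z} := fun w hw =>
      dg_le_add fun x hx a => by
        by_cases hxK : x ∈ K
        · exact .inl hxK
        · simp [hv x hx hxK]
    have hadj : ∀ w ∈ K, k ≤ K.card + 1 ∧ G.Adj w z := by
      intro w hw
      have h1 := h.deg w (h.subX hw) fun e => h.zX (e ▸ hw)
      have h3 := hz w hw
      have h4 := dg_self_lt_card (G := G) hw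
      rw [ind_of_mem hw] at h1
      rw [dg_singleton] at h3
      split_ifs at h3 with h5
      · exact ⟨by omega, h5⟩
      · omega
    obtain ⟨e, he⟩ := Finset.card_pos.1 (show 0 < K.card by omega)
    have hzC : z ∈ C := by
      by_contra hzC
      have h1 := h.deg e (h.subX he) fun e' => h.zX (e' ▸ he)
      have h3 := dg_mono (G := G) (C := C) (D := K) (v := e) fun x hx a => by
        by_contra hxK
        exact hzC (hv x hx hxK ▸ hx)
      have h4 := dg_self_lt_card (G := G) he
      rw [ind_of_mem he] at h1
      omega
    have hKz : G.IsClique (insert z K : Finset V) := by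
      rw [Finset.coe_insert, SimpleGraph.isClique_insert]
      exact ⟨hK, fun w hw _ => (hadj w hw).2.symm⟩
    obtain ⟨e', he', hee⟩ := exists_mem_ne_of_two_le h2 e
    refine Chain.le (k := K.card + 1) (Chain.interval (a := 0) fun t ht => ?_) (hadj e he).1
    cases t with
    | zero => exact ⟨e, he, e, he, .nil (h.subX he)⟩
    | succ t =>
      refine ⟨e', he', e, he, ?_⟩
      rw [Nat.zero_add]
      refine (pathIn_clique hKz (by simp [he']) (by simp [he]) hee ?_).mono
        (Finset.insert_subset hzC h.subX)
      rw [Finset.card_insert_of_notMem h.zX]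
      omega

/-- The path lengths exist as soon as `X` spans an edge. -/
theorem Red.chain_of_adj {k n : ℕ} {z : V} {C X Y : Finset V} (ih : IHyp G n)
    (hn : C.card = n) (h : Red G k z C X Y) {x x' : V} (hx : x ∈ X) (hx' : x' ∈ X)
    (hxx : G.Adj x x') : Chain k (Link G C X Y) := by
  rcases h.chain_or_subset_clique ih hn hx hx' hxx with h' | ⟨K, hKX, hK, hYK⟩
  · exact h'
  obtain ⟨y, hy, y', hy', hyy⟩ := Finset.one_lt_card.1 (show 1 < Y.card from h.cardY)
  rcases h.symm.chain_or_subset_clique ih hn hy hy' (hK (hYK hy) (hYK hy') hyy) with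
    h' | ⟨K', hKY, -, hXK⟩
  · exact h'.link_symm
  have hXY : X = Y := (hXK.trans hKY).antisymm (hYK.trans hKX)
  subst hXY
  exact h.chain_of_clique ih hn (hK.subset (by simpa using hYK))

theorem Chain.zero_skip {k : ℕ} {P : ℕ → Prop} (h0 : P 0) (h : ∀ i < k, P (2 + i)) :
    Chain (k + 1) P := by
  refine ⟨fun i => if i = 0 then 0 else i + 1, fun i hi => ?_, fun i hi => ?_⟩
  · dsimp only
    split_ifs with h1
    · exact h0
    · rw [show i + 1 = 2 + (i - 1) by omega]
      exact h _ (by omega)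
  · rcases Nat.eq_zero_or_pos i with rfl | h1
    · simp
    · simp [h1.ne']

theorem dg_le_ind_nbs {C E : Finset V} {v : V} (hv : v ∈ C) {m : ℕ} (h : dg G v E ≤ m) :
    dg G v E ≤ m * ind (nbs G E C) v := by
  rcases Nat.eq_zero_or_pos (dg G v E) with h1 | h1
  · omega
  · rw [ind_of_mem (mem_nbs_of_dg_pos hv h1)]
    omega

theorem dg_eq_zero_of_indep {X E : Finset V} {v : V} (hX : ∀ x ∈ X, ∀ x' ∈ X, ¬ G.Adj x x')
    (hE : E ⊆ X) (hv : v ∈ X) : dg G v E = 0 := by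
  unfold dg
  rw [Finset.card_eq_zero, Finset.filter_eq_empty_iff]
  exact fun e he => hX v hv e (hE he)

/-- A clique of `C` which meets `X` or `Y`, of the largest possible size. -/
structure IsMaxClique (G : SimpleGraph V) (C X Y K : Finset V) : Prop where
  sub : K ⊆ C
  clique : G.IsClique K
  three : 3 ≤ K.card
  max : ∀ K' ⊆ C, G.IsClique (K' : Set V) → (∃ v ∈ K', v ∈ X ∨ v ∈ Y) → K'.card ≤ K.card

theorem IsMaxClique.symm {C X Y K : Finset V} (h : IsMaxClique G C X Y K) :
    IsMaxClique G C Y X K :=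
  ⟨h.sub, h.clique, h.three, fun K' h1 h2 h3 => h.max K' h1 h2 (by simpa only [or_comm] using h3)⟩

theorem IsMaxClique.not_complete {C X Y K : Finset V} (h : IsMaxClique G C X Y K) {b b' v : V}
    (hb : b ∈ K) (hb'C : b' ∈ C) (hbX : b' ∈ X) (hadj : ∀ w ∈ K.erase b, G.Adj w b') (hv : v ∈ C)
    (hvK : v ∉ K.erase b) (hvb : G.Adj v b') : dg G v (K.erase b) < (K.erase b).card := by
  refine dg_lt_card fun hcon => ?_
  have hb' : b' ∉ K.erase b := fun h' => G.loopless.irrefl _ (hadj _ h')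
  have hvn : v ∉ insert b' (K.erase b) := by
    rw [Finset.mem_insert, not_or]
    exact ⟨hvb.ne, hvK⟩
  have := h.max (insert v (insert b' (K.erase b))) (Finset.insert_subset hv
    (Finset.insert_subset hb'C ((Finset.erase_subset _ _).trans h.sub))) (by
      rw [Finset.coe_insert, SimpleGraph.isClique_insert, Finset.coe_insert,
        SimpleGraph.isClique_insert]
      refine ⟨⟨h.clique.subset (by simp), fun w hw _ => (hadj w hw).symm⟩, fun w hw _ => ?_⟩
      rcases hw with rfl | hw
      exacts [hvb, hcon w hw]) ⟨b', by simp, .inl hbX⟩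
  rw [Finset.card_insert_of_notMem hvn, Finset.card_insert_of_notMem hb',
    Finset.card_erase_of_mem hb] at this
  have := h.three
  omega

theorem Red.chain_or_eq_pair {k n : ℕ} {z b b' : V} {C X Y K : Finset V} (ih : IHyp G n)
    (hn : C.card = n) (h : Red G k z C X Y) (hX : ∀ x ∈ X, ∀ x' ∈ X, ¬ G.Adj x x')
    (hY : ∀ y ∈ Y, ∀ y' ∈ Y, ¬ G.Adj y y') (hK : IsMaxClique G C X Y K) (hb : b ∈ K)
    (hbX : b ∈ X) (hb'X : b' ∈ X) (hbb : b' ≠ b) (hadj : ∀ w ∈ K.erase b, G.Adj w b') :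
    Chain k (Link G C X Y) ∨ Y = {b, b'} := by
  have hcard := Finset.card_erase_of_mem hb
  have h3 := hK.three
  have hK0 : K.erase b ⊆ C := (Finset.erase_subset _ _).trans hK.sub
  have hbC := h.subX hbX
  have hb'C := h.subX hb'X
  have hadj' : ∀ w ∈ K.erase b, G.Adj w b := fun w hw =>
    hK.clique (Finset.mem_of_mem_erase hw) hb (Finset.ne_of_mem_erase hw)
  have hb'K : b' ∉ K.erase b := fun h' => G.loopless.irrefl _ (hadj _ h')
  have hAX : ({b, b'} : Finset V) ⊆ X := by simp [Finset.insert_subset_iff, hbX, hb'X]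
  have hKU : K ⊆ K.erase b ∪ {b, b'} := fun x hx => by
    by_cases hxb : x = b <;> simp [hxb, hx]
  have core : Core G z C X (K.erase b) {b, b'} K.card 2 (fun t => 1 ≤ t ∧ t ≤ K.card)
      (fun t => t = 0 ∨ t = 2) := by
    refine ⟨hK0, hAX.trans h.subX, ?_, Finset.card_pos.1 (by omega), by omega,
      Chain.interval (a := 1) (by omega), ?_, ?_, by omega, Chain.evens (a := 0) (by omega), ?_,
      ?_, .inl ?_⟩
    · simp [hb'K]
    · rintro t ⟨ht1, ht⟩ e he
      obtain ⟨t, rfl⟩ := Nat.exists_eq_add_of_le' ht1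
      rcases Nat.lt_or_ge (t + 1) K.card with ht2 | ht2
      · exact ⟨b, hbX, e, by simp, (pathIn_clique hK.clique hb (Finset.mem_of_mem_erase he)
          (Finset.ne_of_mem_erase he).symm (by omega)).mono hKU⟩
      · obtain ⟨w, hw, hwe⟩ := exists_mem_ne_of_two_le (show 2 ≤ (K.erase b).card by omega) e
        refine ⟨b', hb'X, e, by simp, .cons (by simp) (hadj w hw).symm ?_⟩
        obtain ⟨s, rfl⟩ : ∃ s, t = s + 1 := ⟨t - 1, by omega⟩
        refine (pathIn_clique hK.clique (Finset.mem_of_mem_erase hw) (Finset.mem_of_mem_erase he)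
          hwe (by omega)).mono fun x hx => Finset.mem_erase.2 ⟨fun e => ?_, hKU hx⟩
        exact hb'K (Finset.mem_erase.2 ⟨hbb, e ▸ hx⟩)
    · intro v hv hvH hvz
      have hvK : v ∉ K.erase b := fun h' => hvH (Finset.mem_union_left _ h')
      have h1 := dg_le_card (G := G) (C := {b, b'}) (v := v)
      have h2 := dg_le_card (G := G) (C := K.erase b) (v := v)
      have h4 := dg_le_ind_nbs hv h2
      have h5 := ind_le_one (X := nbs G (K.erase b) C) (v := v)
      rw [Finset.card_pair hbb.symm] at h1
      by_cases hvX : v ∈ X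
      · rw [ind_of_mem hvX, dg_eq_zero_of_indep hX hAX hvX]
        interval_cases ind (nbs G (K.erase b) C) v <;> omega
      · rw [ind_of_notMem hvX]
        have h6 : 0 < dg G v {b, b'} → dg G v (K.erase b) < (K.erase b).card := by
          intro h6
          obtain ⟨-, w, hw, hvw⟩ := mem_nbs.1 (mem_nbs_of_dg_pos hv h6)
          rw [Finset.mem_insert, Finset.mem_singleton] at hw
          rcases hw with rfl | rfl
          exacts [hK.not_complete hb hbC hbX hadj' hv hvK hvw.symm,
            hK.not_complete hb hb'C hb'X hadj hv hvK hvw.symm]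
        interval_cases ind (nbs G (K.erase b) C) v <;> omega
    · rintro t ht a ha
      rcases ht with rfl | rfl
      · exact ⟨a, hAX ha, a, by simp, .nil (Finset.mem_union_right _ ha)⟩
      · obtain ⟨w, hw⟩ := Finset.card_pos.1 (show 0 < (K.erase b).card by omega)
        have hp : ∀ a a', a ∈ ({b, b'} : Finset V) → a' ∈ ({b, b'} : Finset V) → a' ≠ a →
            G.Adj w a → G.Adj w a' → Link G (K.erase b ∪ {b, b'}) X {a} 2 := by
          intro a a' ha ha' hne hwa hwa'
          refine ⟨a', hAX ha', a, by simp, .cons (Finset.mem_union_right _ ha') hwa'.symm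
            (.cons ?_ hwa (.nil ?_))⟩
          · exact Finset.mem_erase.2 ⟨hwa'.ne, Finset.mem_union_left _ hw⟩
          · exact Finset.mem_erase.2 ⟨hwa.ne', Finset.mem_erase.2
              ⟨hne.symm, Finset.mem_union_right _ ha⟩⟩
        rw [Finset.mem_insert, Finset.mem_singleton] at ha
        rcases ha with rfl | rfl
        · exact hp a b' (by simp) (by simp) hbb (hadj' w hw) (hadj w hw)
        · exact hp a b (by simp) (by simp) hbb.symm (hadj w hw) (hadj' w hw)
    · intro v hv hvH hvz hvE hvX
      have h1 := dg_le_card (G := G) (C := {b, b'}) (v := v)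
      rw [Finset.card_pair hbb.symm] at h1
      have h4 := dg_le_ind_nbs hv h1
      have h5 := ind_le_one (X := nbs G {b, b'} C) (v := v)
      omega
    · intro v hv hvH hvz hvE hvX
      rw [dg_eq_zero_of_indep hX hAX hvX]
      omega
  have hsubp : Y ⊆ K.erase b ∪ {b, b'} → Y = {b, b'} := by
    intro hYs
    refine Finset.eq_of_subset_of_card_le (fun y hy => ?_) ?_
    · by_contra hyA
      have hyK := (Finset.mem_union.1 (hYs hy)).resolve_right hyA
      obtain ⟨y', hy', hyy⟩ := exists_mem_ne_of_two_le h.cardY y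
      refine hY y hy y' hy' ?_
      rcases Finset.mem_union.1 (hYs hy') with h' | h'
      · exact hK.clique (Finset.mem_of_mem_erase hyK) (Finset.mem_of_mem_erase h') hyy.symm
      · rw [Finset.mem_insert, Finset.mem_singleton] at h'
        rcases h' with rfl | rfl
        exacts [hadj' y hyK, hadj y hyK]
    · rw [Finset.card_pair hbb.symm]
      exact h.cardY
  rcases core.chain_or_terminal ih hn h with h' | h' | ⟨c, M, hT, ho⟩
  · exact .inl h'
  · exact .inr (hsubp h')
  · obtain ⟨hk, hl⟩ := ho (core.opt.imp_right fun ⟨a, ha, _⟩ => absurd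
      (congrArg Finset.card ha) (by rw [Finset.card_pair hbb.symm]; simp))
    left
    obtain ⟨y, hy, hyc⟩ := exists_mem_ne_of_two_le h.cardY c
    have hyH := (Finset.mem_insert.1 (hT.subY hy)).resolve_left hyc
    rcases Finset.mem_union.1 hyH with hyE | hyA
    · refine (Chain.interval (a := 1) (k := K.card + 1) fun i hi => ?_).le hk
      cases i with
      | zero => exact ⟨b, hbX, y, hy, .cons hbC (hadj' y hyE).symm
          (.nil (Finset.mem_erase.2 ⟨(hadj' y hyE).ne, h.subY hy⟩))⟩
      | succ i =>
        rw [Nat.add_comm 1 (i + 1)]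
        exact hl (i + 1) ⟨by omega, by omega⟩
    · refine (Chain.zero_skip (k := K.card) ⟨y, hAX hyA, y, hy, .nil (h.subY hy)⟩
        fun i hi => ?_).le hk
      rw [show 2 + i = (i + 1) + 1 by omega]
      exact hl _ ⟨by omega, by omega⟩

theorem Red.chain_or_terminal_of_clique {k n : ℕ} {z b : V} {C X Y K : Finset V} (ih : IHyp G n)
    (hn : C.card = n) (h : Red G k z C X Y) (hX : ∀ x ∈ X, ∀ x' ∈ X, ¬ G.Adj x x')
    (hY : ∀ y ∈ Y, ∀ y' ∈ Y, ¬ G.Adj y y') (hK : IsMaxClique G C X Y K) (hb : b ∈ K)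
    (hbX : b ∈ X) (hno : ∀ b' ∈ X, b' ≠ b → ¬ ∀ w ∈ K.erase b, G.Adj w b') :
    Chain k (Link G C X Y) ∨ ∃ y ∈ Y, y ∈ K ∧ y ≠ b ∧
      ∃ c M, Terminal G z C Y (K.erase b) {b} c M := by
  have hcard := Finset.card_erase_of_mem hb
  have h3 := hK.three
  have hK0 : K.erase b ⊆ C := (Finset.erase_subset _ _).trans hK.sub
  have hbC := h.subX hbX
  have hadj' : ∀ w ∈ K.erase b, G.Adj w b := fun w hw =>
    hK.clique (Finset.mem_of_mem_erase hw) hb (Finset.ne_of_mem_erase hw)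
  have hKU : K.erase b ∪ {b} = K := by
    rw [Finset.union_comm, ← Finset.insert_eq, Finset.insert_erase hb]
  have hdb : ∀ v, dg G v {b} ≤ 1 := fun v => dg_le_card.trans (by simp)
  have core : Core G z C X (K.erase b) {b} (K.card - 1) 1 (fun t => 1 ≤ t ∧ t < K.card)
      (fun t => t = 0) := by
    refine ⟨hK0, by simpa using hbC, by simp, Finset.card_pos.1 (by omega), by omega,
      Chain.interval (a := 1) (by omega), ?_, ?_, le_rfl, Chain.interval (a := 0) (by omega), ?_,
      ?_, .inr ⟨b, rfl, .inl hbX⟩⟩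
    · rintro t ⟨ht1, ht⟩ e he
      obtain ⟨t, rfl⟩ := Nat.exists_eq_add_of_le' ht1
      exact ⟨b, hbX, e, by simp, (pathIn_clique hK.clique hb (Finset.mem_of_mem_erase he)
          (Finset.ne_of_mem_erase he).symm (by omega)).mono hKU.ge⟩
    · intro v hv hvH hvz
      have hvK : v ∉ K.erase b := fun h' => hvH (Finset.mem_union_left _ h')
      have hvb : v ≠ b := fun h' => hvH (Finset.mem_union_right _ (by simp [h']))
      have h1 := hdb v
      have h2 := dg_le_card (G := G) (C := K.erase b) (v := v)
      have h4 := dg_le_ind_nbs hv h2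
      have h5 := ind_le_one (X := nbs G (K.erase b) C) (v := v)
      by_cases hvX : v ∈ X
      · rw [ind_of_mem hvX, dg_eq_zero_of_indep hX (by simpa using hbX) hvX]
        have := dg_lt_card (G := G) (K := K.erase b) (v := v) fun hcon =>
          hno v hvX hvb fun w hw => (hcon w hw).symm
        interval_cases ind (nbs G (K.erase b) C) v <;> omega
      · rw [ind_of_notMem hvX]
        have h6 : 0 < dg G v {b} → dg G v (K.erase b) < (K.erase b).card := by
          intro h6
          obtain ⟨-, w, hw, hvw⟩ := mem_nbs.1 (mem_nbs_of_dg_pos hv h6)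
          rw [Finset.mem_singleton] at hw
          subst hw
          exact hK.not_complete hb hbC hbX hadj' hv hvK hvw.symm
        interval_cases ind (nbs G (K.erase b) C) v <;> omega
    · rintro t rfl a ha
      rw [Finset.mem_singleton] at ha
      subst ha
      exact ⟨a, hbX, a, by simp, .nil (by simp)⟩
    · intro v hv hvH hvz hvE hvX
      have h4 := dg_le_ind_nbs hv (hdb v)
      omega
  rcases core.chain_or_terminal ih hn h with h' | h' | ⟨c, M, hT, -⟩
  · exact .inl h'
  · exfalso
    obtain ⟨y, hy, y', hy', hyy⟩ := Finset.one_lt_card.1 (show 1 < Y.card from h.cardY)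
    rw [hKU] at h'
    exact hY y hy y' hy' (hK.clique (h' hy) (h' hy') hyy)
  · obtain ⟨y, hy, hyc⟩ := exists_mem_ne_of_two_le h.cardY c
    have hYs := hT.subY
    have hcH := hT.cH
    have hcomp := hT.comp
    rw [hKU] at hYs hcH hcomp
    have hyK := (Finset.mem_insert.1 (hYs hy)).resolve_left hyc
    by_cases hyb : y = b
    · subst hyb
      left
      have hMD : ∀ u ∈ M, u ∈ compIn G (C \ K) z := fun u hu => by
        rw [hcomp]; exact Finset.mem_insert_of_mem hu
      have hcy : y ≠ c := fun e => hcH (e ▸ hyK)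
      obtain ⟨w, hw⟩ := Finset.card_pos.1 (show 0 < (K.erase y).card by omega)
      have hwK := Finset.mem_of_mem_erase hw
      refine h.chain_of_pair ih hn (M := C \ (insert y (insert c M))) hbC (h.subY hT.cY) hcy
        Finset.sdiff_subset ⟨w, ?_⟩ (by simp) (by simp) (by simp [hT.zM]) ?_ ?_ hbX
      · simp only [Finset.mem_sdiff, Finset.mem_insert, not_or]
        exact ⟨hK.sub hwK, Finset.ne_of_mem_erase hw, fun e => hcH (e ▸ hwK),
          fun hwM => (comp_mem (hMD w hwM)).2 hwK⟩
      · intro u hu w hw a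
        simp only [Finset.mem_sdiff, Finset.mem_insert, not_or] at hu ⊢
        by_contra! hcon
        have hwM : w ∈ M := by tauto
        rcases comp_adj (hMD w hwM) hu.1 a.symm with h' | h'
        · rw [hcomp, Finset.mem_insert] at h'
          tauto
        · exact (hT.av w hwM).2 (mem_nbs.2 ⟨hw, u, Finset.mem_erase.2 ⟨hu.2.1, h'⟩, a⟩)
      · intro u hu huY
        simp only [Finset.mem_sdiff, Finset.mem_insert, not_or] at hu
        have huK := (Finset.mem_insert.1 (hYs huY)).resolve_left hu.2.2.1
        exact hY u huY y hy (hK.clique huK hyK hu.2.1)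
    · exact .inr ⟨y, hy, hyK, hyb, c, M, hT⟩

theorem Red.chain_of_pair_eq {k n : ℕ} {z b b' v : V} {C : Finset V} (ih : IHyp G n)
    (hn : C.card = n) (h : Red G k z C {b, b'} {b, b'}) (hbb : b' ≠ b)
    (hv : v ∈ C) (hvX : v ∉ ({b, b'} : Finset V)) (hvz : v ≠ z) :
    Chain k (Link G C {b, b'} {b, b'}) := by
  have hbC : b ∈ C := h.subX (by simp)
  have hb'C : b' ∈ C := h.subX (by simp)
  have hvC : v ∈ C \ {b, b'} := Finset.mem_sdiff.2 ⟨hv, hvX⟩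
  have hvD : v ∈ compIn G (C \ {b, b'}) v := self_mem_compIn hvC
  have hDc : ConnIn G (compIn G (C \ {b, b'}) v) := connIn_compIn hvC
  have hDC : compIn G (C \ {b, b'}) v ⊆ C := comp_subset
  have hDK : ∀ u ∈ compIn G (C \ {b, b'}) v, u ∉ ({b, b'} : Finset V) := fun u hu => (comp_mem hu).2
  have hDa : ∀ u ∈ compIn G (C \ {b, b'}) v, ∀ w ∈ C, G.Adj u w →
    w ∈ compIn G (C \ {b, b'}) v ∨ w ∈ ({b, b'} : Finset V) := fun u hu w hw a => comp_adj hu hw a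
  set D := compIn G (C \ {b, b'}) v
  have hbD : b ∉ D := fun h' => hDK b h' (by simp)
  have hb'D : b' ∉ D := fun h' => hDK b' h' (by simp)
  have hne : ∀ e e', e ∈ C → e ∉ D → ({b, b'} : Finset V) = {e, e'} → (nbs G {e'} D).Nonempty := by
    intro e e' he heD hee
    by_contra hcon
    obtain ⟨u, hu, huK⟩ := h.lX e he D ⟨hDC, heD, ⟨v, hvD⟩, fun u hu w hw a => by
      refine (hDa u hu w hw a).imp_right fun hwK => ?_
      rw [hee, Finset.mem_insert, Finset.mem_singleton] at hwK
      refine hwK.resolve_right fun hwe => hcon ⟨u, mem_nbs.2 ⟨hu, w, by simp [hwe], a.symm⟩⟩⟩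
    exact hDK u hu huK
  refine extend_of_no_bad (n := n) (k := k) (L := 1) (r := 2) (z := z) (D := D)
    (S := nbs G {b} D) (T := nbs G {b'} D) (P := fun t => t = 0)
    (Q := Link G C {b, b'} {b, b'}) ih
    (hn ▸ Finset.card_lt_card ⟨hDC, fun hs => hbD (hs hbC)⟩) hDc
    nbs_subset nbs_subset (hne b' b hb'C hb'D (Finset.pair_comm _ _)) (hne b b' hbC hbD rfl)
    ⟨v, hvD, hvz⟩ ?_ ?_ le_rfl (Chain.interval (a := 0) (by omega)) ?_
  · rintro d hd M ⟨hM, hav⟩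
    obtain ⟨u, hu, huK⟩ := h.lX d (hDC hd) M ⟨hM.1.trans hDC, hM.2.1, hM.2.2.1,
      fun u hu w hw a => by
        rcases hDa u (hM.1 hu) w hw a with h' | h'
        · exact hM.2.2.2 u hu w h' a
        · exfalso
          rw [Finset.mem_insert, Finset.mem_singleton] at h'
          rcases h' with rfl | rfl
          · exact (hav u hu).1 (mem_nbs.2 ⟨hM.1 hu, w, by simp, a.symm⟩)
          · exact (hav u hu).2 (mem_nbs.2 ⟨hM.1 hu, w, by simp, a.symm⟩)⟩
    exact hDK u (hM.1 hu) huK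
  · intro w hw hwz
    have h1 := h.deg w (hDC hw) hwz
    rw [ind_of_notMem (hDK w hw)] at h1
    have h3 := dg_le_add (G := G) (C := C) (v := w) fun x hx a => hDa w hw x hx a
    have h4 := dg_le_add (G := G) (C := {b, b'}) (D := {b}) (E := {b'}) (v := w) fun x hx a => by
      simpa using hx
    have h5 := dg_le_ind_nbs (E := {b}) hw (dg_le_card (G := G) (C := {b}) (v := w))
    have h6 := dg_le_ind_nbs (E := {b'}) hw (dg_le_card (G := G) (C := {b'}) (v := w))
    simp only [Finset.card_singleton] at h5 h6
    omega
  · rintro t s rfl hs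
    have h1 := hs.prepend (H := {b}) (X := {b}) (E := {b}) (t := 0) (fun e he => by
      rw [Finset.mem_singleton] at he; subst he; exact link_singleton)
      (fun u hu => (mem_nbs.1 hu).2) (by simpa using hbD)
    have h2 := h1.append (link_singleton (G := G) (c := b'))
      (fun u hu => (adj_of_mem_nbs_singleton hu).symm) (by
        simp [hbb, hb'D])
    rw [show 0 + s + 2 = 0 + s + 1 + 0 + 1 by omega]
    exact h2.mono (Finset.union_subset (Finset.union_subset (by simpa using hbC) hDC)
      (by simpa using hb'C)) (by simp) (by simp)

theorem Red.chain_of_maxClique {k n : ℕ} {z b : V} {C X Y K : Finset V} (ih : IHyp G n)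
    (hn : C.card = n) (h : Red G k z C X Y) (hX : ∀ x ∈ X, ∀ x' ∈ X, ¬ G.Adj x x')
    (hY : ∀ y ∈ Y, ∀ y' ∈ Y, ¬ G.Adj y y') (hK : IsMaxClique G C X Y K) (hb : b ∈ K)
    (hbX : b ∈ X) : Chain k (Link G C X Y) := by
  have key : ∀ {b : V} {X Y : Finset V}, Red G k z C X Y → (∀ x ∈ X, ∀ x' ∈ X, ¬ G.Adj x x') →
      (∀ y ∈ Y, ∀ y' ∈ Y, ¬ G.Adj y y') → IsMaxClique G C X Y K → b ∈ K → b ∈ X →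
      Chain k (Link G C X Y) ∨ (∃ b' ∈ X, b' ≠ b ∧ Y = {b, b'}) ∨ ∃ y ∈ Y, y ∈ K ∧ y ≠ b ∧
      ∃ c M, Terminal G z C Y (K.erase b) {b} c M := by
    intro b X Y h hX hY hK hb hbX
    by_cases hno : ∃ b' ∈ X, b' ≠ b ∧ ∀ w ∈ K.erase b, G.Adj w b'
    · obtain ⟨b', hb'X, hbb, hadj⟩ := hno
      exact (h.chain_or_eq_pair ih hn hX hY hK hb hbX hb'X hbb hadj).imp_right fun h' =>
        .inl ⟨b', hb'X, hbb, h'⟩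
    · push Not at hno
      refine (h.chain_or_terminal_of_clique ih hn hX hY hK hb hbX fun b' h1 h2 h3 => ?_).imp_right
        .inr
      obtain ⟨w, hw, hwb⟩ := hno b' h1 h2
      exact hwb (h3 w hw)
  have hXK : ∀ x ∈ X, x ∈ K → x = b := fun x hx hxK => by
    by_contra hne
    exact hX x hx b hbX (hK.clique hxK hb hne)
  rcases key h hX hY hK hb hbX with h' | ⟨b', hb'X, hbb, rfl⟩ | ⟨y, hy, hyK, hyb, c, M, hT⟩
  · exact h'
  · rcases key h.symm hY hX hK.symm hb (by simp) with h' | ⟨b'', hb''X, hbb', rfl⟩ |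
      ⟨x, hx, hxK, hxb, -⟩
    · exact h'.link_symm
    · have hb'' : b'' = b' := by simpa [hbb'] using hb''X
      subst hb''
      obtain ⟨v, hv, hvb, hvz⟩ := exists_mem_ne_ne hK.three b z
      refine h.chain_of_pair_eq ih hn hbb (hK.sub hv) ?_ hvz
      rw [Finset.mem_insert, not_or]
      refine ⟨hvb, fun h' => hvb (hXK v ?_ hv)⟩
      rw [Finset.mem_singleton.1 h']
      simp
    · exact absurd (hXK x hx hxK) hxb
  · rcases key h.symm hY hX hK.symm hyK hy with h' | ⟨y', -, -, rfl⟩ | ⟨x, -, -, -, c', M', hT'⟩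
    · exact h'.link_symm
    · exact absurd (hXK y (by simp) hyK) hyb
    · exfalso
      have hKU : ∀ b ∈ K, K.erase b ∪ {b} = K := fun b hb => by
        rw [Finset.union_comm, ← Finset.insert_eq, Finset.insert_erase hb]
      have hcomp := hT.comp
      have hcomp' := hT'.comp
      rw [hKU b hb] at hcomp
      rw [hKU y hyK, hcomp] at hcomp'
      have hMD : ∀ u ∈ M, u ∈ compIn G (C \ K) z := fun u hu => by
        rw [hcomp]; exact Finset.mem_insert_of_mem hu
      by_cases hcc : c' = c
      · subst hcc
        have hMM : M = M' := by
          rw [← Finset.erase_insert hT.cM, hcomp', Finset.erase_insert hT'.cM]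
        subst hMM
        obtain ⟨u, hu, huY⟩ := h.lY c' (h.subY hT.cY) M ⟨fun u hu => comp_subset (hMD u hu), hT.cM,
          ⟨z, hT.zM⟩, fun u hu w hw a => by
            rcases comp_adj (hMD u hu) hw a with h' | h'
            · rw [hcomp] at h'
              exact (Finset.mem_insert.1 h').symm
            · exfalso
              have huC := comp_subset (hMD u hu)
              by_cases hwb : w = b
              · subst hwb
                exact (hT'.av u hu).2 (mem_nbs.2 ⟨huC, w, by simp [h', hyb.symm], a.symm⟩)
              · exact (hT.av u hu).2 (mem_nbs.2 ⟨huC, w, by simp [h', hwb], a.symm⟩)⟩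
        exact (hT.av u hu).1 huY
      · have hc'M : c' ∈ M := by
          have : c' ∈ insert c M := by rw [hcomp']; simp
          exact (Finset.mem_insert.1 this).resolve_left hcc
        obtain ⟨hc'C, e, he, a⟩ := mem_nbs.1 hT'.cE
        by_cases heb : e = b
        · exact hX e (heb ▸ hbX) c' hT'.cY a
        · exact (hT.av c' hc'M).2
            (mem_nbs.2 ⟨hc'C, e, by simp [heb, Finset.mem_of_mem_erase he], a⟩)

/-- The path lengths exist as soon as some triangle meets `X` or `Y`. -/
theorem Red.chain_of_triangle {k n : ℕ} {z : V} {C X Y K : Finset V} (ih : IHyp G n)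
    (hn : C.card = n) (h : Red G k z C X Y) (hX : ∀ x ∈ X, ∀ x' ∈ X, ¬ G.Adj x x')
    (hY : ∀ y ∈ Y, ∀ y' ∈ Y, ¬ G.Adj y y') (hKC : K ⊆ C) (hK : G.IsClique (K : Set V))
    (h3 : 3 ≤ K.card) (hm : ∃ v ∈ K, v ∈ X ∨ v ∈ Y) : Chain k (Link G C X Y) := by
  obtain ⟨K', hK', hmax⟩ := Finset.exists_max_image
    (C.powerset.filter fun K : Finset V => G.IsClique (K : Set V) ∧ ∃ v ∈ K, v ∈ X ∨ v ∈ Y)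
    Finset.card ⟨K, by simp only [Finset.mem_filter, Finset.mem_powerset]; exact ⟨hKC, hK, hm⟩⟩
  simp only [Finset.mem_filter, Finset.mem_powerset, and_imp] at hK' hmax
  obtain ⟨h1, h2, v, hv, hvXY⟩ := hK'
  have hM : IsMaxClique G C X Y K' := ⟨h1, h2, h3.trans (hmax K hKC hK hm), hmax⟩
  rcases hvXY with hvX | hvY
  · exact h.chain_of_maxClique ih hn hX hY hM hv hvX
  · exact (h.symm.chain_of_maxClique ih hn hY hX hM.symm hv hvY).link_symm

/-- The vertices of `X` adjacent to all of `A`. -/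
noncomputable def cnbs (G : SimpleGraph V) (X A : Finset V) : Finset V :=
  X.filter fun x => ∀ a ∈ A, G.Adj a x

theorem mem_cnbs {X A : Finset V} {x : V} : x ∈ cnbs G X A ↔ x ∈ X ∧ ∀ a ∈ A, G.Adj a x :=
  Finset.mem_filter

theorem cnbs_subset {X A : Finset V} : cnbs G X A ⊆ X := Finset.filter_subset _ _

/-- No edge and no triangle of `C` at a vertex of `X` other than edges leaving `X`. -/
structure IsSparse (G : SimpleGraph V) (C X : Finset V) : Prop where
  indep : ∀ x ∈ X, ∀ x' ∈ X, ¬ G.Adj x x'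
  tri : ∀ x ∈ X, ∀ u ∈ C, ∀ w ∈ C, G.Adj x u → G.Adj x w → ¬ G.Adj u w

theorem IsSparse.dg_eq_zero {C X A B : Finset V} {v : V} (h : IsSparse G C X) (hA : A ⊆ C)
    (hB : B ⊆ X) (hAB : ∀ a ∈ A, ∀ b ∈ B, G.Adj a b) (hv : v ∈ C) (hvB : 0 < dg G v B) :
    dg G v A = 0 := by
  obtain ⟨-, b, hb, hbv⟩ := mem_nbs.1 (mem_nbs_of_dg_pos hv hvB)
  unfold dg
  rw [Finset.card_eq_zero, Finset.filter_eq_empty_iff]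
  exact fun a ha => h.tri b (hB hb) v hv a (hA ha) hbv (hAB a ha b hb).symm

/-- A largest set `A` with more common neighbours in `X` than elements. -/
structure IsMaxJoin (G : SimpleGraph V) (C X A : Finset V) : Prop where
  sub : A ⊆ C
  notMem : ∀ a ∈ A, a ∉ X
  lt : A.card < (cnbs G X A).card
  max : ∀ A' ⊆ C, (∀ a ∈ A', a ∉ X) → A'.card < (cnbs G X A').card → A'.card ≤ A.card

theorem exists_isMaxJoin {C X : Finset V} (h : X.Nonempty) : ∃ A, IsMaxJoin G C X A := by
  obtain ⟨A, hA, hmax⟩ := Finset.exists_max_image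
    (C.powerset.filter fun A => (∀ a ∈ A, a ∉ X) ∧ A.card < (cnbs G X A).card) Finset.card
    ⟨∅, by
      simp only [Finset.mem_filter, Finset.mem_powerset]
      exact ⟨by simp, by simp, by simpa [cnbs, Finset.card_pos] using h⟩⟩
  simp only [Finset.mem_filter, Finset.mem_powerset, and_imp] at hA hmax
  exact ⟨A, hA.1, hA.2.1, hA.2.2, hmax⟩

namespace IsMaxJoin

variable {C X A : Finset V}

theorem adj (_ : IsMaxJoin G C X A) : ∀ a ∈ A, ∀ b ∈ cnbs G X A, G.Adj a b :=
  fun a ha _ hb => (mem_cnbs.1 hb).2 a ha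

theorem disjoint (h : IsMaxJoin G C X A) : Disjoint A (cnbs G X A) :=
  Finset.disjoint_left.2 fun a ha ha' => h.notMem a ha (cnbs_subset ha')

theorem cnbs_insert {v : V} : cnbs G X (insert v A) = (cnbs G X A).filter fun w => G.Adj v w := by
  ext x
  simp only [mem_cnbs, Finset.mem_filter, Finset.mem_insert, forall_eq_or_imp]
  tauto

theorem dg_le (h : IsMaxJoin G C X A) {v : V} (hv : v ∈ C) (hvA : v ∉ A) (hvX : v ∉ X) :
    dg G v (cnbs G X A) ≤ A.card + 1 := by
  by_contra! hcon
  have hc := Finset.card_insert_of_notMem hvA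
  have := h.max (insert v A) (Finset.insert_subset hv h.sub)
    (fun a ha => by
      rcases Finset.mem_insert.1 ha with rfl | ha
      exacts [hvX, h.notMem a ha]) (by
      rw [cnbs_insert, hc]
      exact hcon)
  omega

theorem dg_lt (_ : IsMaxJoin G C X A) {v : V} (hv : v ∈ X) (hvB : v ∉ cnbs G X A) :
    dg G v A < A.card :=
  dg_lt_card fun hcon => hvB (mem_cnbs.2 ⟨hv, fun a ha => (hcon a ha).symm⟩)

theorem exists_core {z : V} (h : IsMaxJoin G C X A) (hX : IsSparse G C X) (hXC : X ⊆ C) :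
    ∃ l p, Core G z C X (cnbs G X A) A (A.card + 1) l (fun t => ∃ i ≤ A.card, t = 2 * i) p ∧
      (A.card ≠ 1 → FullSide G z C X (cnbs G X A) A l) := by
  have hlt := h.lt
  have hd := h.disjoint
  have hAB := h.adj
  have hBX : cnbs G X A ⊆ X := cnbs_subset
  have hlossE : ∀ v ∈ C, v ∉ cnbs G X A ∪ A → v ≠ z →
      ind X v + dg G v A + dg G v (cnbs G X A) + 1 ≤ A.card + 1 + ind (nbs G (cnbs G X A) C) v := by
    intro v hv hvH hvz
    rw [Finset.mem_union, not_or] at hvH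
    by_cases hvX : v ∈ X
    · rw [ind_of_mem hvX, dg_eq_zero_of_indep hX.indep hBX hvX]
      have := h.dg_lt hvX hvH.1
      omega
    · rw [ind_of_notMem hvX]
      have h1 := h.dg_le hv hvH.2 hvX
      have h2 := dg_le_card (G := G) (C := A) (v := v)
      rcases Nat.eq_zero_or_pos (dg G v (cnbs G X A)) with h3 | h3
      · omega
      · rw [hX.dg_eq_zero h.sub hBX hAB hv h3, ind_of_mem (mem_nbs_of_dg_pos hv h3)]
        omega
  have hlinkE : ∀ t, (∃ i ≤ A.card, t = 2 * i) → ∀ e ∈ cnbs G X A,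
      Link G (cnbs G X A ∪ A) X {e} t := by
    rintro t ⟨i, hi, rfl⟩ e he
    cases i with
    | zero => exact ⟨e, hBX he, e, by simp, .nil (Finset.mem_union_left _ he)⟩
    | succ i =>
      obtain ⟨e', he', hee⟩ :=
        exists_mem_ne_of_two_le (show 2 ≤ (cnbs G X A).card by omega) e
      refine ⟨e', hBX he', e, by simp, ?_⟩
      rw [Finset.union_comm]
      exact pathIn_bipartite_even hd hAB he' he hee (by omega) (by omega)
  have hlossA : ∀ l, A.card ≤ l → 1 ≤ l → ∀ v ∈ C, dg G v A + 1 ≤ l + ind (nbs G A C) v := by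
    intro l hl hl1 v hv
    have h1 := dg_le_card (G := G) (C := A) (v := v)
    have h2 := dg_le_ind_nbs hv h1
    have h3 := ind_le_one (X := nbs G A C) (v := v)
    interval_cases ind (nbs G A C) v <;> omega
  have hlinkA : ∀ i < A.card, ∀ a ∈ A, Link G (cnbs G X A ∪ A) X {a} (1 + 2 * i) := by
    intro i hi a ha
    obtain ⟨b, hb⟩ := Finset.card_pos.1 (show 0 < (cnbs G X A).card by omega)
    refine ⟨b, hBX hb, a, by simp, ?_⟩
    rw [Finset.union_comm, Nat.add_comm]
    exact pathIn_bipartite_odd hd hAB ha hb hi (by omega)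
  have mk : ∀ l p, A.card ≤ l → 1 ≤ l → Chain l p →
      (∀ t, p t → ∀ a ∈ A, Link G (cnbs G X A ∪ A) X {a} t) →
      (FullSide G z C X (cnbs G X A) A l ∨ ∃ a, A = {a} ∧
      (a ∈ X ∨ (∀ v ∈ C, v ∉ cnbs G X A ∪ A → v ∈ X → ¬ G.Adj v a) ∧ 2 ≤ (cnbs G X A).card)) →
      Core G z C X (cnbs G X A) A (A.card + 1) l (fun t => ∃ i ≤ A.card, t = 2 * i) p :=
    fun l p h1 h2 h3 h4 h5 => ⟨hBX.trans hXC, h.sub, hd.symm, Finset.card_pos.1 (by omega),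
      by omega, Chain.evens (a := 0) (fun i hi => ⟨i, by omega, by omega⟩), hlinkE, hlossE, h2, h3,
      h4, fun v hv _ _ _ _ => hlossA l h1 h2 v hv, h5⟩
  obtain h0 | h1 | h2 : A.card = 0 ∨ A.card = 1 ∨ 2 ≤ A.card := by omega
  · have hA := Finset.card_eq_zero.1 h0
    have hfull : FullSide G z C X (cnbs G X A) A 1 := fun v hv hvH _ _ hvX =>
      absurd (Finset.mem_union_left _ (mem_cnbs.2 ⟨hvX, by simp [hA]⟩)) hvH
    exact ⟨1, fun t => t = 0, mk 1 _ (by omega) le_rfl (Chain.interval (a := 0) (by omega))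
      (by simp [hA]) (.inl hfull), fun _ => hfull⟩
  · obtain ⟨a, rfl⟩ := Finset.card_eq_one.1 h1
    refine ⟨1, fun t => t = 1, mk 1 _ h1.le le_rfl (Chain.interval (a := 1) (by omega))
      ?_ (.inr ⟨a, rfl, .inr ⟨?_, by omega⟩⟩), fun h => absurd h1 h⟩
    · rintro t rfl a ha
      exact hlinkA 0 (by simp) a ha
    · intro v hv hvH hvX hva
      exact hvH (Finset.mem_union_left _ (mem_cnbs.2 ⟨hvX, by simpa using hva.symm⟩))
  · have hfull : FullSide G z C X (cnbs G X A) A A.card := fun v hv hvH _ _ hvX => by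
      rw [Finset.mem_union, not_or] at hvH
      have h3 := h.dg_lt hvX hvH.1
      rcases Nat.eq_zero_or_pos (dg G v A) with h4 | h4
      · omega
      · rw [ind_of_mem (mem_nbs_of_dg_pos hv h4)]
        omega
    refine ⟨A.card, fun t => ∃ i < A.card, t = 1 + 2 * i, mk _ _ le_rfl (by omega)
      (Chain.evens (a := 1) fun i hi => ⟨i, hi, rfl⟩) ?_ (.inl hfull), fun _ => hfull⟩
    rintro t ⟨i, hi, rfl⟩ a ha
    exact hlinkA i hi a ha

theorem chain_or_terminal {k n : ℕ} {z : V} {Y : Finset V} (ih : IHyp G n) (hn : C.card = n)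
    (h : Red G k z C X Y) (hX : IsSparse G C X) (hA : IsMaxJoin G C X A) :
    Chain k (Link G C X Y) ∨ Y ⊆ cnbs G X A ∪ A ∨ ∃ c M, Terminal G z C Y (cnbs G X A) A c M ∧
      ((A.card ≠ 1 ∨ ∀ u ∈ M, u ∉ X) →
        k ≤ A.card + 2 ∧ ∀ i ≤ A.card, Link G C X Y (2 * i + 1)) := by
  obtain ⟨l, p, hcore, hfull⟩ := hA.exists_core (z := z) hX h.subX
  rcases hcore.chain_or_terminal ih hn h with h' | h' | ⟨c, M, hT, ho⟩
  · exact .inl h'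
  · exact .inr (.inl h')
  · refine .inr (.inr ⟨c, M, hT, fun h' => ?_⟩)
    obtain ⟨h1, h2⟩ := ho (h'.imp_left hfull)
    exact ⟨h1, fun i hi => h2 _ ⟨i, hi, rfl⟩⟩

end IsMaxJoin

theorem Chain.zero_odds {k : ℕ} {P : ℕ → Prop} (h0 : P 0) (h : ∀ i < k, P (2 * i + 1)) :
    Chain (k + 1) P := by
  refine ⟨fun i => 2 * i - 1, fun i hi => ?_, fun i hi => by dsimp only; omega⟩
  cases i with
  | zero => exact h0
  | succ i => exact h i (by omega)

/-- If `X` and `Y` meet, a terminal outcome on one side gives the path lengths. -/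
theorem Red.chain_of_terminal {k n : ℕ} {z c y₀ : V} {C X Y A A' M : Finset V} (ih : IHyp G n)
    (hn : C.card = n) (h : Red G k z C X Y) (hX : IsSparse G C X) (hY : IsSparse G C Y)
    (hA : IsMaxJoin G C X A) (hA' : IsMaxJoin G C Y A') (hyX : y₀ ∈ X) (hyY : y₀ ∈ Y)
    (hT : Terminal G z C Y (cnbs G X A) A c M)
    (ho : (A.card ≠ 1 ∨ ∀ u ∈ M, u ∉ X) →
        k ≤ A.card + 2 ∧ ∀ i ≤ A.card, Link G C X Y (2 * i + 1)) : Chain k (Link G C X Y) := by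
  have hshort : ∀ {m}, (k ≤ m + 2 ∧ ∀ i ≤ m, Link G C X Y (2 * i + 1)) →
      Chain k (Link G C X Y) := fun {m} ⟨hk, hl⟩ =>
    (Chain.zero_odds (k := m + 1) ⟨y₀, hyX, y₀, hyY, .nil (h.subX hyX)⟩
      fun i hi => hl i (by omega)).le hk
  by_cases hfull : A.card ≠ 1 ∨ ∀ u ∈ M, u ∉ X
  · exact hshort (ho hfull)
  push Not at hfull
  obtain ⟨-, u, huM, huX⟩ := hfull
  have huY := (hT.av u huM).1
  have key : ∀ {X Y A c M}, IsSparse G C X → IsSparse G C Y → IsMaxJoin G C X A → y₀ ∈ X → y₀ ∈ Y →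
      Terminal G z C Y (cnbs G X A) A c M → y₀ ∈ cnbs G X A ∧ Y ⊆ insert c (cnbs G X A) := by
    intro X Y A c M hX hY hA hyX hyY hT
    obtain ⟨-, e, he, hec⟩ := mem_nbs.1 hT.cE
    have hy : y₀ ∈ cnbs G X A := by
      rcases Finset.mem_insert.1 (hT.subY hyY) with rfl | h'
      · exact absurd hec (hX.indep e (cnbs_subset he) y₀ hyX)
      · exact (Finset.mem_union.1 h').resolve_right fun h' => hA.notMem y₀ h' hyX
    refine ⟨hy, fun y hyY' => ?_⟩
    rcases Finset.mem_insert.1 (hT.subY hyY') with rfl | h'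
    · simp
    · refine Finset.mem_insert_of_mem ((Finset.mem_union.1 h').resolve_right fun h' => ?_)
      exact hY.indep y hyY' y₀ hyY (hA.adj y h' y₀ hy)
  obtain ⟨hyB, hYs⟩ := key hX hY hA hyX hyY hT
  rcases IsMaxJoin.chain_or_terminal ih hn h.symm hY hA' with h' | h' | ⟨c', M', hT', ho'⟩
  · exact h'.link_symm
  · exfalso
    have hu := (Finset.mem_union.1 (h' huX)).resolve_left fun h' => huY (cnbs_subset h')
    have hy := (Finset.mem_union.1 (h' hyX)).resolve_right fun h' => hA'.notMem y₀ h' hyY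
    exact hX.indep u huX y₀ hyX (hA'.adj u hu y₀ hy)
  · obtain ⟨-, hXs⟩ := key hY hX hA' hyY hyX hT'
    have huc : u = c' := (Finset.mem_insert.1 (hXs huX)).resolve_right fun h' =>
      huY (cnbs_subset h')
    obtain ⟨-, w, hw, hwc⟩ := mem_nbs.1 hT'.cE
    have hwc' : w = c := (Finset.mem_insert.1 (hYs (cnbs_subset hw))).resolve_right fun h' =>
      hX.indep w (cnbs_subset h') c' hT'.cY hwc
    by_cases hfull' : A'.card ≠ 1 ∨ ∀ u ∈ M', u ∉ Y
    · obtain ⟨h1, h2⟩ := ho' hfull'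
      exact hshort ⟨h1, fun i hi => (h2 i hi).symm⟩
    · exfalso
      push Not at hfull'
      obtain ⟨-, v, hvM, hvY⟩ := hfull'
      have hvc : v = c := (Finset.mem_insert.1 (hYs hvY)).resolve_right fun h' =>
        (hT'.av v hvM).1 (cnbs_subset h')
      have hvD : v ∈ compIn G (C \ (cnbs G Y A' ∪ A')) z := by
        rw [hT'.comp]; exact Finset.mem_insert_of_mem hvM
      exact (comp_mem hvD).2 (Finset.mem_union_left _ (hvc ▸ hwc' ▸ hw))

theorem Red.chain_or_eq {k n : ℕ} {z : V} {C X Y A A' : Finset V} (ih : IHyp G n)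
    (hn : C.card = n) (h : Red G k z C X Y) (hX : IsSparse G C X) (hY : IsSparse G C Y)
    (hA : IsMaxJoin G C X A) (hA' : IsMaxJoin G C Y A') :
    Chain k (Link G C X Y) ∨ X = Y ∧ cnbs G X A = X := by
  have hx := IsMaxJoin.chain_or_terminal ih hn h hX hA
  have hy := IsMaxJoin.chain_or_terminal ih hn h.symm hY hA'
  by_cases hXY : ∃ y ∈ X, y ∈ Y
  · obtain ⟨y, hyX, hyY⟩ := hXY
    rcases hx with h' | hx | ⟨c, M, hT, ho⟩
    · exact .inl h'
    · rcases hy with h' | hy | ⟨c, M, hT, ho⟩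
      · exact .inl h'.link_symm
      · right
        have key : ∀ {X Y A}, IsSparse G C Y → IsMaxJoin G C X A → y ∈ X → y ∈ Y →
            Y ⊆ cnbs G X A ∪ A → Y ⊆ cnbs G X A := by
          intro X Y A hY hA hyX hyY hYs v hv
          refine (Finset.mem_union.1 (hYs hv)).resolve_right fun hvA => ?_
          have hyB := (Finset.mem_union.1 (hYs hyY)).resolve_right fun h' => hA.notMem y h' hyX
          exact hY.indep v hv y hyY (hA.adj v hvA y hyB)
        have h1 := key hY hA hyX hyY hx
        have h2 := key hX hA' hyY hyX hy
        have h3 : X = Y := (h2.trans cnbs_subset).antisymm (h1.trans cnbs_subset)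
        exact ⟨h3, cnbs_subset.antisymm (by rwa [← h3] at h1)⟩
      · exact .inl (h.symm.chain_of_terminal ih hn hY hX hA' hA hyY hyX hT ho).link_symm
    · exact .inl (h.chain_of_terminal ih hn hX hY hA hA' hyX hyY hT ho)
  · push Not at hXY
    have hlt := hA.lt
    have hlt' := hA'.lt
    have hB := Finset.card_le_card (cnbs_subset (G := G) (X := X) (A := A))
    have hB' := Finset.card_le_card (cnbs_subset (G := G) (X := Y) (A := A'))
    have aux : ∀ {X Y A : Finset V}, (∀ v ∈ X, v ∉ Y) → Y ⊆ cnbs G X A ∪ A → Y.card ≤ A.card :=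
      fun hXY hs => Finset.card_le_card fun v hv =>
        (Finset.mem_union.1 (hs hv)).resolve_left fun h' => hXY v (cnbs_subset h') hv
    have auxT : ∀ {X Y A c M}, (∀ v ∈ X, v ∉ Y) → Terminal G z C Y (cnbs G X A) A c M →
        Y ⊆ insert c A ∧ (insert c A).card ≤ A.card + 1 := fun hXY hT =>
      ⟨fun v hv => by
        rcases Finset.mem_insert.1 (hT.subY hv) with rfl | h'
        · simp
        · exact Finset.mem_insert_of_mem ((Finset.mem_union.1 h').resolve_left fun h' =>
            hXY v (cnbs_subset h') hv), Finset.card_insert_le _ _⟩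
    have hYX : ∀ v ∈ Y, v ∉ X := fun v hv hv' => hXY v hv' hv
    rcases hx with h' | hx | ⟨c, M, hT, -⟩
    · exact .inl h'
    · have h1 := aux hXY hx
      rcases hy with h' | hy | ⟨c', M', hT', -⟩
      · exact .inl h'.link_symm
      · have h2 := aux hYX hy
        omega
      · obtain ⟨h2, h3⟩ := auxT hYX hT'
        have := Finset.card_le_card h2
        omega
    · obtain ⟨h1, h3⟩ := auxT hXY hT
      have h5 := Finset.card_le_card h1
      rcases hy with h' | hy | ⟨c', M', hT', -⟩
      · exact .inl h'.link_symm
      · have h2 := aux hYX hy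
        omega
      · exfalso
        obtain ⟨h2, h4⟩ := auxT hYX hT'
        have h6 := Finset.card_le_card h2
        have e1 : Y = insert c A := Finset.eq_of_subset_of_card_le h1 (by omega)
        have e2 : X = insert c' A' := Finset.eq_of_subset_of_card_le h2 (by omega)
        have e3 : cnbs G X A = X := Finset.eq_of_subset_of_card_le cnbs_subset (by omega)
        have e4 : cnbs G Y A' = Y := Finset.eq_of_subset_of_card_le cnbs_subset (by omega)
        have key : ∀ {X Y A c M}, Terminal G z C Y (cnbs G X A) A c M → cnbs G X A = X →
            Y = insert c A → ∀ u ∈ M, u ∈ C ∧ ∀ w ∈ C, G.Adj u w → w ∈ M ∨ w ∈ Y := by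
          intro X Y A c M hT e3 e1 u hu
          have huD : u ∈ compIn G (C \ (cnbs G X A ∪ A)) z := by
            rw [hT.comp]; exact Finset.mem_insert_of_mem hu
          refine ⟨comp_subset huD, fun w hw a => ?_⟩
          rcases comp_adj huD hw a with h' | h'
          · rw [hT.comp] at h'
            rcases Finset.mem_insert.1 h' with rfl | h'
            exacts [.inr hT.cY, .inl h']
          · rcases Finset.mem_union.1 h' with h' | h'
            · exact absurd (mem_nbs.2 ⟨comp_subset huD, w, h', a.symm⟩) (hT.av u hu).2
            · exact .inr (e1 ▸ Finset.mem_insert_of_mem h')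
        have k1 := key hT e3 e1
        have k2 := key hT' e4 e2
        refine hT.cM (Finset.mem_inter.1 (h.conn.2 (M ∩ M') (fun u hu =>
          (k1 u (Finset.mem_inter.1 hu).1).1) ⟨z, Finset.mem_inter.2 ⟨hT.zM, hT'.zM⟩⟩
          (fun u hu w hw a => ?_) (h.subY hT.cY))).1
        obtain ⟨hu1, hu2⟩ := Finset.mem_inter.1 hu
        refine Finset.mem_inter.2 ⟨((k1 u hu1).2 w hw a).resolve_right fun h' => ?_,
          ((k2 u hu2).2 w hw a).resolve_right fun h' => ?_⟩
        · exact (hT'.av u hu2).2 (mem_nbs.2 ⟨(k1 u hu1).1, w, e4.symm ▸ h', a.symm⟩)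
        · exact (hT.av u hu1).2 (mem_nbs.2 ⟨(k1 u hu1).1, w, e3.symm ▸ h', a.symm⟩)

/-- A set `A` complete to the sparse set `B`, such that no other vertex sees too much of `B`. -/
structure IsJoin (G : SimpleGraph V) (z : V) (C B A : Finset V) : Prop where
  sparse : IsSparse G C B
  sub : A ⊆ C
  adj : ∀ a ∈ A, ∀ b ∈ B, G.Adj a b
  card : A.card + 2 ≤ B.card
  dg_le : ∀ v ∈ C, v ∉ B ∪ A → dg G v B ≤ A.card + 2
  dg_le' : ∀ v ∈ C, v ∉ B ∪ A → (∃ b ∈ B, ¬ G.Adj v b) → dg G v B ≤ A.card + 1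

namespace IsJoin

variable {k n : ℕ} {z w : V} {C B A : Finset V}

theorem disjoint (hJ : IsJoin G z C B A) : Disjoint A B :=
  Finset.disjoint_left.2 fun a ha hb => G.loopless.irrefl a (hJ.adj a ha a hb)

theorem link_odd (hJ : IsJoin G z C B A) {b a : V} {j : ℕ} (hj : j < A.card)
    (ha : a ∈ A) : Link G (A ∪ B.erase b) B {a} (1 + 2 * j) := by
  have h1 := hJ.card
  have h2 := Finset.pred_card_le_card_erase (s := B) (a := b)
  obtain ⟨b', hb'⟩ := Finset.card_pos.1 (show 0 < (B.erase b).card by omega)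
  refine ⟨b', Finset.mem_of_mem_erase hb', a, by simp, ?_⟩
  rw [Nat.add_comm]
  exact pathIn_bipartite_odd (hJ.disjoint.mono_right (Finset.erase_subset _ _))
    (fun a ha b hb => hJ.adj a ha b (Finset.mem_of_mem_erase hb)) ha hb' hj (by omega)

theorem link_even (hJ : IsJoin G z C B A) {b b' : V} {j : ℕ} (hj : j ≤ A.card) (hb' : b' ∈ B)
    (hbb : b' ≠ b) : Link G (A ∪ B.erase b) {b'} B (2 * j) := by
  have h1 := hJ.card
  have h2 := Finset.pred_card_le_card_erase (s := B) (a := b)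
  have hb'' : b' ∈ B.erase b := Finset.mem_erase.2 ⟨hbb, hb'⟩
  cases j with
  | zero => exact ⟨b', by simp, b', hb', .nil (Finset.mem_union_right _ hb'')⟩
  | succ j =>
    obtain ⟨x, hx, hxb, hxb'⟩ := exists_mem_ne_ne (show 3 ≤ B.card by omega) b b'
    refine ⟨b', by simp, x, hx, ?_⟩
    exact pathIn_bipartite_even (hJ.disjoint.mono_right (Finset.erase_subset _ _))
      (fun a ha b hb => hJ.adj a ha b (Finset.mem_of_mem_erase hb)) hb''
      (Finset.mem_erase.2 ⟨hxb, hx⟩) hxb'.symm (by omega) (by omega)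

theorem dg_lobe_le (hJ : IsJoin G z C B A) {v : V} (hv : v ∈ C) (hvB : 0 < dg G v B) :
    dg G v A = 0 :=
  hJ.sparse.dg_eq_zero hJ.sub subset_rfl hJ.adj hv hvB

theorem chain_of_lobe (ih : IHyp G n) (hn : C.card = n) (h : Red G k z C B B)
    (hJ : IsJoin G z C B A) (hw : w ∈ C \ (B ∪ A)) {c u₀ v : V} {M : Finset V}
    (hc : c ∈ compIn G (C \ (B ∪ A)) w) (hu₀ : u₀ ∈ nbs G B (compIn G (C \ (B ∪ A)) w))
    (hM : IsLobe G (compIn G (C \ (B ∪ A)) w) c M) (hav : ∀ u ∈ M, u ∉ nbs G B C)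
    (hv : v ∈ M) (hvz : v ≠ z) : Chain k (Link G C B B) := by
  have hDc : ConnIn G (compIn G (C \ (B ∪ A)) w) := connIn_compIn hw
  have hDC : compIn G (C \ (B ∪ A)) w ⊆ C := comp_subset
  have hDH : ∀ u ∈ compIn G (C \ (B ∪ A)) w, u ∉ B ∪ A := fun u hu => (comp_mem hu).2
  have hDa : ∀ u ∈ compIn G (C \ (B ∪ A)) w, ∀ x ∈ C, G.Adj u x →
    x ∈ compIn G (C \ (B ∪ A)) w ∨ x ∈ B ∪ A := fun u hu x hx a => comp_adj hu hx a
  have hDd := fun u (hu : u ∈ compIn G (C \ (B ∪ A)) w) => dg_comp_le hu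
  set D := compIn G (C \ (B ∪ A)) w
  have hvc : v ≠ c := fun e => hM.2.1 (e ▸ hv)
  have hvN : v ∈ D \ {c} := by simp [hM.1 hv, hvc]
  have hl := isLobe_comp (G := G) (hM.1 hv) hvc
  have hsub := hM.comp_subset hv
  have hNc : ConnIn G (compIn G (D \ {c}) v) := connIn_compIn hvN
  have hvN' : v ∈ compIn G (D \ {c}) v := self_mem_compIn hvN
  set N := compIn G (D \ {c}) v
  have hNC : N ⊆ C := hl.1.trans hDC
  have toLobe : ∀ d, ∀ M' ⊆ N, (∀ u ∈ M', u ∉ nbs G A N) → ¬ IsLobe G D d M' ∨ d ∉ C := by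
    intro d M' hM' hMA
    by_contra! hcon
    obtain ⟨u, hu, huY⟩ := h.lY d hcon.2 M' ⟨hM'.trans hNC, hcon.1.2.1, hcon.1.2.2.1,
      fun u hu x hx a => by
        rcases hDa u (hcon.1.1 hu) x hx a with h' | h'
        · exact hcon.1.2.2.2 u hu x h' a
        · exfalso
          rcases Finset.mem_union.1 h' with h' | h'
          · exact hav u (hsub (hM' hu)) (mem_nbs.2 ⟨hNC (hM' hu), x, h', a.symm⟩)
          · exact hMA u hu (mem_nbs.2 ⟨hM' hu, x, h', a.symm⟩)⟩
    exact hDH u (hl.1 (hM' hu)) (Finset.mem_union_left _ huY)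
  have hS : (nbs G A N).Nonempty := by
    by_contra hne
    rcases toLobe c N subset_rfl fun u hu hu' => hne ⟨u, hu'⟩ with h' | h'
    exacts [h' hl, h' (hDC hc)]
  have hApos : 0 < A.card := by
    obtain ⟨u, hu⟩ := hS
    obtain ⟨-, a, ha, -⟩ := mem_nbs.1 hu
    exact Finset.card_pos.2 ⟨a, ha⟩
  obtain ⟨hu₀D, b, hb, hbu⟩ := mem_nbs.1 hu₀
  have huN : u₀ ∈ D \ N := Finset.mem_sdiff.2 ⟨hu₀D, fun hm =>
    hav u₀ (hsub hm) (mem_nbs.2 ⟨hDC hu₀D, b, hb, hbu⟩)⟩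
  obtain ⟨t, ht⟩ := (hDc.sdiff_lobe hc hl).exists_path (Finset.mem_sdiff.2 ⟨hc, hl.2.1⟩) huN
  have hbD : b ∉ D := fun h' => hDH b h' (Finset.mem_union_left _ hb)
  have hH : ∀ u ∈ A ∪ B.erase b, u ∈ B ∪ A := fun u hu => by
    rcases Finset.mem_union.1 hu with h' | h'
    exacts [Finset.mem_union_right _ h', Finset.mem_union_left _ (Finset.mem_of_mem_erase h')]
  have hHC : A ∪ B.erase b ⊆ C := Finset.union_subset hJ.sub
    ((Finset.erase_subset _ _).trans h.subX)
  refine extend_of_no_bad (n := n) (k := k) (L := A.card) (r := 1 + (t + 0 + 1) + 1) (z := z)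
    (D := N) (S := nbs G A N) (T := nbs G {c} N) (P := fun t => ∃ i < A.card, t = 1 + 2 * i)
    (Q := Link G C B B) ih
    (hn ▸ Finset.card_lt_card ⟨hNC, fun hs => hl.2.1 (hs (hDC hc))⟩) hNc nbs_subset nbs_subset
    hS (hl.nbs_nonempty hDc hc) ⟨v, hvN', hvz⟩ ?_ ?_ hApos
    (Chain.evens (a := 1) fun i hi => ⟨i, hi, rfl⟩) ?_
  · intro d hd M' hM'
    rcases toLobe d M' hM'.1.1 fun u hu => (hM'.2 u hu).1 with h' | h'
    · exact h' (hl.trans hM'.1 fun u hu => (hM'.2 u hu).2)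
    · exact h' (hNC hd)
  · intro u hu huz
    have h1 := h.deg u (hNC hu) huz
    have h2 := hDd u (hl.1 hu)
    have h3 := hl.dg_le hu
    have h4 := dg_eq_zero_of_notMem_nbs (hNC hu) (hav u (hsub hu))
    have h5 : ind B u = 0 := ind_of_notMem fun h' => hDH u (hl.1 hu) (Finset.mem_union_left _ h')
    have h6 := dg_le_card (G := G) (C := A) (v := u)
    have h7 := dg_le_ind_nbs hu h6
    have h8 := ind_le_one (X := nbs G A N) (v := u)
    have h9 : dg G u A + 1 ≤ A.card + ind (nbs G A N) u := by
      interval_cases ind (nbs G A N) u <;> omega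
    omega
  · rintro s r ⟨i, hi, rfl⟩ hr
    have h1 := hr.prepend (fun e he => hJ.link_odd (b := b) hi he) (fun u hu => (mem_nbs.1 hu).2)
      (Finset.disjoint_left.2 fun u hu hu' => hDH u (hl.1 hu') (hH u hu))
    have hsuf : Link G ((D \ N) ∪ {b}) {c} B (t + 0 + 1) := Link.append
      ⟨c, by simp, u₀, Finset.mem_singleton_self u₀, ht⟩
      (link_singleton.mono subset_rfl subset_rfl (by simpa using hb))
      (fun u hu => by rw [Finset.mem_singleton] at hu; exact hu ▸ hbu.symm)
      (by simp [hbD])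
    have h2 := h1.append hsuf
      (fun u hu => (adj_of_mem_nbs_singleton hu).symm) (by
        refine Finset.disjoint_left.2 fun u hu hu' => ?_
        rcases Finset.mem_union.1 hu with hu | hu <;> rcases Finset.mem_union.1 hu' with hu' | hu'
        · exact hDH u (Finset.mem_sdiff.1 hu').1 (hH u hu)
        · rw [Finset.mem_singleton] at hu'
          subst hu'
          exact (Finset.mem_union.1 hu).elim
            (fun h' => Finset.disjoint_left.1 hJ.disjoint h' hb) (by simp)
        · exact (Finset.mem_sdiff.1 hu').2 hu
        · rw [Finset.mem_singleton] at hu'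
          exact hbD (hu' ▸ hl.1 hu))
    rw [show 1 + 2 * i + r + (1 + (t + 0 + 1) + 1) = 1 + 2 * i + r + 1 + (t + 0 + 1) + 1 by omega]
    refine h2.mono (Finset.union_subset (Finset.union_subset hHC hNC)
      (Finset.union_subset (Finset.sdiff_subset.trans hDC) ?_)) subset_rfl subset_rfl
    simpa using h.subX hb

/-- A component attached to at least two vertices of `B`. -/
theorem chain_of_two (ih : IHyp G n) (hn : C.card = n) (h : Red G k z C B B)
    (hJ : IsJoin G z C B A) (hw : w ∈ C \ (B ∪ A)) (hwz : w ≠ z) {b₁ b₂ : V} (hb₁ : b₁ ∈ B)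
    (hb₂ : b₂ ∈ B) (hbb : b₁ ≠ b₂) (h₁ : (nbs G {b₁} (compIn G (C \ (B ∪ A)) w)).Nonempty)
    (h₂ : (nbs G {b₂} (compIn G (C \ (B ∪ A)) w)).Nonempty) :
    Chain k (Link G C B B) ∨ k ≤ dg G w B := by
  have hwD : w ∈ compIn G (C \ (B ∪ A)) w := self_mem_compIn hw
  have hDc : ConnIn G (compIn G (C \ (B ∪ A)) w) := connIn_compIn hw
  have hDC : compIn G (C \ (B ∪ A)) w ⊆ C := comp_subset
  have hDH : ∀ u ∈ compIn G (C \ (B ∪ A)) w, u ∉ B ∪ A := fun u hu => (comp_mem hu).2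
  have hDd := fun u (hu : u ∈ compIn G (C \ (B ∪ A)) w) => dg_comp_le hu
  have hlobe := fun c u₀ v M => chain_of_lobe (c := c) (u₀ := u₀) (v := v) (M := M) ih hn h hJ hw
  set D := compIn G (C \ (B ∪ A)) w
  by_cases hch : Chain k (Link G C B B)
  · exact .inl hch
  obtain ⟨u₁, hu₁⟩ := h₁
  have hu₁D := nbs_subset hu₁
  have hb₁u := adj_of_mem_nbs_singleton hu₁
  have hbC := h.subX hb₁
  have hbad : ∀ c ∈ D, ∀ M, IsBad G D (nbs G (B.erase b₂) D) (nbs G {b₂} D) c M →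
      (∀ u ∈ M, u ∉ nbs G B C) ∧ ∀ v ∈ M, v = z := by
    intro c hc M hM
    have hav : ∀ u ∈ M, u ∉ nbs G B C := by
      intro u hu hu'
      obtain ⟨-, b, hb, a⟩ := mem_nbs.1 hu'
      by_cases hbb : b = b₂
      · exact (hM.2 u hu).2 (mem_nbs.2 ⟨hM.1.1 hu, b, by simp [hbb], a⟩)
      · exact (hM.2 u hu).1 (mem_nbs.2 ⟨hM.1.1 hu, b, by simp [hbb, hb], a⟩)
    refine ⟨hav, fun v hv => ?_⟩
    by_contra hvz
    exact hch (hlobe c u₁ v M hc (mem_nbs.2 ⟨hu₁D, b₁, hb₁, hb₁u⟩) hM.1 hav hv hvz)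
  refine (extend (n := n) (k := k) (L := A.card + 1) (r := 2) (z := z) (D := D)
    (S := nbs G (B.erase b₂) D) (T := nbs G {b₂} D) (P := fun t => ∃ i ≤ A.card, t = 2 * i)
    (Q := Link G C B B) ih
    (hn ▸ Finset.card_lt_card ⟨hDC, fun hs => hDH b₁ (hs hbC) (Finset.mem_union_left _ hb₁)⟩) hDc
    nbs_subset nbs_subset ⟨u₁, mem_nbs.2 ⟨hu₁D, b₁, by simp [hbb, hb₁], hb₁u⟩⟩
    h₂ ⟨w, hwD, hwz⟩ ?_ ?_ (by omega)
    (Chain.evens (a := 0) fun i hi => ⟨i, by omega, by omega⟩) ?_).imp_right ?_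
  · intro c hc M hM
    obtain ⟨v, hv⟩ := hM.1.2.2.1
    exact (hbad c hc M hM).2 v hv ▸ hv
  · intro v hv hvz
    have h1 := h.deg v (hDC hv) hvz
    have h2 := hDd v hv
    have h3 : ind B v = 0 := ind_of_notMem fun h' => hDH v hv (Finset.mem_union_left _ h')
    have h4 := dg_le_card (G := G) (C := A) (v := v)
    have h5 := hJ.dg_le v (hDC hv) (hDH v hv)
    suffices dg G v A + dg G v B ≤
      A.card + ind (nbs G (B.erase b₂) D) v + ind (nbs G {b₂} D) v by omega
    rcases Nat.eq_zero_or_pos (dg G v B) with h6 | h6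
    · omega
    rw [hJ.dg_lobe_le (hDC hv) h6]
    have h7 := dg_le_add (G := G) (C := B) (D := B.erase b₂) (E := {b₂}) (v := v) fun x hx a => by
      by_cases hxb : x = b₂ <;> simp [hxb, hx]
    by_cases h8 : G.Adj v b₂
    · rw [ind_of_mem (show v ∈ nbs G {b₂} D from mem_nbs.2 ⟨hv, b₂, by simp, h8.symm⟩)]
      rcases Nat.eq_zero_or_pos (dg G v (B.erase b₂)) with h9 | h9
      · have := dg_le_card (G := G) (C := {b₂}) (v := v)
        rw [Finset.card_singleton] at this
        omega
      · rw [ind_of_mem (mem_nbs_of_dg_pos hv h9)]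
        omega
    · have h9 := hJ.dg_le' v (hDC hv) (hDH v hv) ⟨b₂, hb₂, h8⟩
      rw [dg_singleton, if_neg h8] at h7
      rw [ind_of_mem (mem_nbs_of_dg_pos hv (show 0 < dg G v (B.erase b₂) by omega))]
      omega
  · rintro t s ⟨i, hi, rfl⟩ ⟨u, hu, v, hv, p⟩
    obtain ⟨-, b, hb, hbu⟩ := mem_nbs.1 hu
    obtain ⟨hbb', hb⟩ := Finset.mem_erase.1 hb
    have hbD : b ∉ D := fun h' => hDH b h' (Finset.mem_union_left _ hb)
    have h1 : Link G ({b} ∪ D) {b} {v} (0 + s + 1) :=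
      Link.prepend (E := {b}) (S := {u}) (fun e he => by
        rw [Finset.mem_singleton] at he; subst he; exact link_singleton)
        ⟨u, by simp, v, by simp, p⟩ (fun u' hu' => ⟨b, by simp, by
          rw [Finset.mem_singleton] at hu'; exact hu' ▸ hbu⟩) (by simpa using hbD)
    have h2 := h1.append (hJ.link_even (b := b) hi hb₂ hbb'.symm) (fun u hu => by
      rw [Finset.mem_singleton] at hu
      exact hu ▸ (adj_of_mem_nbs_singleton hv).symm) (by
        refine Finset.disjoint_left.2 fun x hx hx' => ?_
        rcases Finset.mem_union.1 hx with hx | hx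
        · rw [Finset.mem_singleton] at hx
          subst hx
          exact (Finset.mem_union.1 hx').elim
            (fun h' => Finset.disjoint_left.1 hJ.disjoint h' hb) (by simp)
        · refine hDH x hx (Finset.mem_union.2 ((Finset.mem_union.1 hx').symm.imp_left
            Finset.mem_of_mem_erase)))
    rw [show 2 * i + s + 2 = 0 + s + 1 + 2 * i + 1 by omega]
    exact h2.mono (Finset.union_subset (Finset.union_subset (by simpa using h.subX hb) hDC)
      (Finset.union_subset hJ.sub ((Finset.erase_subset _ _).trans h.subX)))
      (by simpa using hb) subset_rfl
  · rintro ⟨c, hc, M, hM, hzM, hD⟩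
    obtain ⟨hav, hMz⟩ := hbad c hc M hM
    have hwc : w = c := (Finset.mem_insert.1 (hD ▸ hwD)).resolve_right fun h' => hwz (hMz w h')
    subst hwc
    have huw : u₁ = w := (Finset.mem_insert.1 (hD ▸ hu₁D)).resolve_right fun h' =>
      hav u₁ h' (mem_nbs.2 ⟨hDC hu₁D, b₁, hb₁, hb₁u⟩)
    subst huw
    have h1 := h.deg u₁ (hDC hwD) hwz
    have h2 := hDd u₁ hwD
    have h3 : ind B u₁ = 0 := ind_of_notMem fun h' => hDH u₁ hwD (Finset.mem_union_left _ h')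
    rw [hJ.dg_lobe_le (hDC hwD)
      (Finset.card_pos.2 ⟨b₁, Finset.mem_filter.2 ⟨hb₁, hb₁u.symm⟩⟩)] at h2
    have h4 := dg_mono (G := G) (C := D) (D := {z}) (v := u₁) fun x hx a => by
      rw [hD] at hx
      rcases Finset.mem_insert.1 hx with rfl | hx
      · exact absurd a (G.loopless.irrefl _)
      · simpa using hMz x hx
    have h5 := dg_le_card (G := G) (C := {z}) (v := u₁)
    rw [Finset.card_singleton] at h5
    omega

/-- A component attached to only one vertex of `B`. -/
theorem chain_of_one (ih : IHyp G n) (hn : C.card = n) (h : Red G k z C B B)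
    (hJ : IsJoin G z C B A) (hw : w ∈ C \ (B ∪ A)) (hwz : w ≠ z) {b : V} (hb : b ∈ B)
    (h₁ : (nbs G {b} (compIn G (C \ (B ∪ A)) w)).Nonempty)
    (h₂ : ∀ u ∈ compIn G (C \ (B ∪ A)) w, ∀ b' ∈ B, G.Adj u b' → b' = b) :
    Chain k (Link G C B B) := by
  have hwD : w ∈ compIn G (C \ (B ∪ A)) w := self_mem_compIn hw
  have hDc : ConnIn G (compIn G (C \ (B ∪ A)) w) := connIn_compIn hw
  have hDC : compIn G (C \ (B ∪ A)) w ⊆ C := comp_subset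
  have hDH : ∀ u ∈ compIn G (C \ (B ∪ A)) w, u ∉ B ∪ A := fun u hu => (comp_mem hu).2
  have hDa : ∀ u ∈ compIn G (C \ (B ∪ A)) w, ∀ x ∈ C, G.Adj u x →
    x ∈ compIn G (C \ (B ∪ A)) w ∨ x ∈ A ∨ x = b := fun u hu x hx a =>
      (comp_adj hu hx a).imp_right fun h' => (Finset.mem_union.1 h').symm.imp_right fun h' =>
        h₂ u hu x h' a
  have hDd := fun u (hu : u ∈ compIn G (C \ (B ∪ A)) w) => dg_comp_le hu
  set D := compIn G (C \ (B ∪ A)) w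
  have hbC := h.subX hb
  have hbD : b ∉ D := fun h' => hDH b h' (Finset.mem_union_left _ hb)
  have hDB : ∀ u ∈ D, u ∉ B := fun u hu h' => hDH u hu (Finset.mem_union_left _ h')
  have hS : (nbs G A D).Nonempty := by
    by_contra hne
    obtain ⟨u, hu, huB⟩ := h.lX b hbC D ⟨hDC, hbD, ⟨w, hwD⟩, fun u hu x hx a =>
      (hDa u hu x hx a).imp_right fun h' => h'.resolve_left fun hxA =>
        hne ⟨u, mem_nbs.2 ⟨hu, x, hxA, a.symm⟩⟩⟩
    exact hDB u hu huB
  have hApos : 0 < A.card := by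
    obtain ⟨u, hu⟩ := hS
    obtain ⟨-, a, ha, -⟩ := mem_nbs.1 hu
    exact Finset.card_pos.2 ⟨a, ha⟩
  refine extend_of_no_bad (n := n) (k := k) (L := A.card) (r := 2) (z := z)
    (D := D) (S := nbs G A D) (T := nbs G {b} D) (P := fun t => ∃ i < A.card, t = 1 + 2 * i)
    (Q := Link G C B B) ih
    (hn ▸ Finset.card_lt_card ⟨hDC, fun hs => hbD (hs hbC)⟩) hDc nbs_subset nbs_subset
    hS h₁ ⟨w, hwD, hwz⟩ ?_ ?_ hApos
    (Chain.evens (a := 1) fun i hi => ⟨i, hi, rfl⟩) ?_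
  · rintro c hc M ⟨hM, hav⟩
    obtain ⟨u, hu, huB⟩ := h.lX c (hDC hc) M ⟨hM.1.trans hDC, hM.2.1, hM.2.2.1,
      fun u hu x hx a => by
        rcases hDa u (hM.1 hu) x hx a with h' | h' | rfl
        · exact hM.2.2.2 u hu x h' a
        · exact absurd (mem_nbs.2 ⟨hM.1 hu, x, h', a.symm⟩) (hav u hu).1
        · exact absurd (mem_nbs.2 ⟨hM.1 hu, x, by simp, a.symm⟩) (hav u hu).2⟩
    exact hDB u (hM.1 hu) huB
  · intro v hv hvz
    have h1 := h.deg v (hDC hv) hvz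
    have h2 := hDd v hv
    have h3 : ind B v = 0 := ind_of_notMem (hDB v hv)
    have h4 := dg_le_card (G := G) (C := A) (v := v)
    have h5 := dg_mono (G := G) (C := B) (D := {b}) (v := v) fun x hx a => by
      simpa using h₂ v hv x hx a
    have h6 := dg_le_ind_nbs (G := G) (E := {b}) hv (dg_le_card (G := G) (C := {b}) (v := v))
    rw [Finset.card_singleton] at h6
    rcases Nat.eq_zero_or_pos (dg G v B) with h7 | h7
    · have h8 := dg_le_ind_nbs hv h4
      have h9 := ind_le_one (X := nbs G A D) (v := v)
      interval_cases ind (nbs G A D) v <;> omega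
    · rw [hJ.dg_lobe_le (hDC hv) h7] at h2
      omega
  · rintro t s ⟨i, hi, rfl⟩ hs
    have hH : ∀ u ∈ A ∪ B.erase b, u ∉ D ∧ u ≠ b := fun u hu => by
      rcases Finset.mem_union.1 hu with h' | h'
      · exact ⟨fun hu => hDH u hu (Finset.mem_union_right _ h'),
          fun e => Finset.disjoint_left.1 hJ.disjoint h' (e ▸ hb)⟩
      · exact ⟨fun hu => hDB u hu (Finset.mem_of_mem_erase h'), Finset.ne_of_mem_erase h'⟩
    have h1 := hs.prepend (fun e he => hJ.link_odd (b := b) hi he) (fun u hu => (mem_nbs.1 hu).2)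
      (Finset.disjoint_left.2 fun u hu => (hH u hu).1)
    have h2 := h1.append (link_singleton (G := G) (c := b))
      (fun u hu => (adj_of_mem_nbs_singleton hu).symm) (by
        rw [Finset.disjoint_singleton_right, Finset.mem_union, not_or]
        exact ⟨fun h' => (hH b h').2 rfl, hbD⟩)
    rw [show 1 + 2 * i + s + 2 = 1 + 2 * i + s + 1 + 0 + 1 by omega]
    exact h2.mono (Finset.union_subset (Finset.union_subset (Finset.union_subset hJ.sub
      ((Finset.erase_subset _ _).trans h.subX)) hDC) (by simpa using hbC))
      subset_rfl (by simpa using hb)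

end IsJoin

theorem Red.chain_of_cnbs_eq {k n : ℕ} {z : V} {C B A : Finset V} (ih : IHyp G n)
    (hn : C.card = n) (h : Red G k z C B B) (hB : IsSparse G C B) (hA : IsMaxJoin G C B A)
    (hAB : cnbs G B A = B) : Chain k (Link G C B B) := by
  have hlt := hA.lt
  have hadj := hA.adj
  have hd := hA.disjoint
  have hdg := fun v hv hvA hvX => hA.dg_le (v := v) hv hvA hvX
  rw [hAB] at hlt hadj hd hdg
  have h2 := h.cardX
  by_cases hk : k ≤ A.card + 1
  · refine (Chain.evens (a := 0) (k := A.card + 1) fun i hi => ?_).le hk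
    rw [Nat.zero_add]
    cases i with
    | zero =>
      obtain ⟨b, hb⟩ := Finset.card_pos.1 (show 0 < B.card by omega)
      exact ⟨b, hb, b, hb, .nil (h.subX hb)⟩
    | succ i =>
      obtain ⟨b, hb, b', hb', hbb⟩ := Finset.one_lt_card.1 (show 1 < B.card by omega)
      exact ⟨b, hb, b', hb', (pathIn_bipartite_even hd hadj hb hb' hbb (by omega)
        (by omega)).mono (Finset.union_subset hA.sub h.subX)⟩
  obtain ⟨A₀, hA₀, hc₀⟩ := Finset.exists_subset_card_eq (s := A) (n := min A.card (B.card - 2))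
    (min_le_left _ _)
  have hcase : A₀ = A ∧ A.card + 2 ≤ B.card ∨ A.card + 1 = B.card ∧ A₀.card + 1 = A.card := by
    rcases Nat.lt_or_ge (A.card + 1) B.card with h' | h'
    · exact .inl ⟨Finset.eq_of_subset_of_card_le hA₀ (by omega), h'⟩
    · exact .inr ⟨by omega, by omega⟩
  have hdg₀ : ∀ v ∈ C, v ∉ B ∪ A₀ → dg G v B ≤ A.card + 1 := by
    intro v hv hvH
    rw [Finset.mem_union, not_or] at hvH
    rcases hcase with ⟨rfl, -⟩ | ⟨h', -⟩
    · exact hdg v hv hvH.2 hvH.1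
    · exact dg_le_card.trans h'.ge
  have hJ : IsJoin G z C B A₀ := by
    refine ⟨hB, hA₀.trans hA.sub, fun a ha => hadj a (hA₀ ha), by omega, fun v hv hvH => ?_,
      fun v hv hvH hvb => ?_⟩
    · have := hdg₀ v hv hvH
      omega
    · rcases hcase with ⟨rfl, -⟩ | ⟨h', h''⟩
      · exact hdg₀ v hv hvH
      · have := dg_lt_card fun h' => hvb.elim fun b hb => hb.2 (h' b hb.1)
        omega
  have hdeg : ∀ b ∈ B, ∃ w ∈ C \ (B ∪ A₀), G.Adj b w ∧
      (A.card + 1 = B.card → w ≠ z) := by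
    intro b hb
    have h1 := h.deg b (h.subX hb) fun e => h.zX (e ▸ hb)
    rw [ind_of_mem hb] at h1
    have h3 := dg_le_add (G := G) (C := C) (D := C \ (B ∪ A₀)) (E := A₀) (v := b) fun x hx a => by
      have : x ∉ B := fun hx' => hB.indep b hb x hx' a
      by_cases hxA : x ∈ A₀ <;> simp [hxA, hx, this]
    have h4 := dg_le_card (G := G) (C := A₀) (v := b)
    by_cases h5 : A.card + 1 = B.card
    · have h6 : 2 ≤ dg G b (C \ (B ∪ A₀)) := by omega
      obtain ⟨w, hw, hwz⟩ := exists_mem_ne_of_two_le h6 z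
      obtain ⟨hw, a⟩ := Finset.mem_filter.1 hw
      exact ⟨w, hw, a, fun _ => hwz⟩
    · obtain ⟨w, hw⟩ := Finset.card_pos.1 (show 0 < dg G b (C \ (B ∪ A₀)) by omega)
      obtain ⟨hw, a⟩ := Finset.mem_filter.1 hw
      exact ⟨w, hw, a, fun h' => absurd h' h5⟩
  obtain ⟨b, hb, w, hw, hbw, hwz⟩ : ∃ b ∈ B, ∃ w ∈ C \ (B ∪ A₀), G.Adj b w ∧ w ≠ z := by
    by_contra! hcon
    have hz : ∀ b ∈ B, z ∈ C \ (B ∪ A₀) ∧ G.Adj b z ∧ A.card + 1 ≠ B.card := fun b hb => by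
      obtain ⟨w, hw, a, h'⟩ := hdeg b hb
      have := hcon b hb w hw a
      subst this
      exact ⟨hw, a, fun e => h' e rfl⟩
    obtain ⟨b, hb⟩ := Finset.card_pos.1 (show 0 < B.card by omega)
    obtain ⟨hzC, -, h5⟩ := hz b hb
    obtain ⟨hzC, hzH⟩ := Finset.mem_sdiff.1 hzC
    have h6 := hdg₀ z hzC hzH
    have h7 : dg G z B = B.card := by
      unfold dg
      rw [Finset.filter_true_of_mem fun b hb => (hz b hb).2.1.symm]
    omega
  have hwD : w ∈ compIn G (C \ (B ∪ A₀)) w := self_mem_compIn hw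
  have hne : (nbs G {b} (compIn G (C \ (B ∪ A₀)) w)).Nonempty :=
    ⟨w, mem_nbs.2 ⟨hwD, b, by simp, hbw⟩⟩
  by_cases hone : ∀ u ∈ compIn G (C \ (B ∪ A₀)) w, ∀ b' ∈ B, G.Adj u b' → b' = b
  · exact hJ.chain_of_one ih hn h hw hwz hb hne hone
  · push Not at hone
    obtain ⟨u, hu, b', hb', a, hbb⟩ := hone
    refine (hJ.chain_of_two ih hn h hw hwz hb hb' hbb.symm hne
      ⟨u, mem_nbs.2 ⟨hu, b', by simp, a.symm⟩⟩).elim id fun h' => ?_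
    obtain ⟨hwC, hwH⟩ := Finset.mem_sdiff.1 hw
    have := hdg₀ w hwC hwH
    omega

theorem Red.chain {k n : ℕ} {z : V} {C X Y : Finset V} (ih : IHyp G n)
    (hn : C.card = n) (h : Red G k z C X Y) : Chain k (Link G C X Y) := by
  by_cases hch : Chain k (Link G C X Y)
  · exact hch
  have hX : ∀ x ∈ X, ∀ x' ∈ X, ¬ G.Adj x x' := fun x hx x' hx' a =>
    hch (h.chain_of_adj ih hn hx hx' a)
  have hY : ∀ y ∈ Y, ∀ y' ∈ Y, ¬ G.Adj y y' := fun y hy y' hy' a =>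
    hch (h.symm.chain_of_adj ih hn hy hy' a).link_symm
  have htri : ∀ x ∈ C, x ∈ X ∨ x ∈ Y → ∀ u ∈ C, ∀ w ∈ C, G.Adj x u → G.Adj x w →
      ¬ G.Adj u w := by
    intro x hxC hx u hu w hw a b c
    refine hch (h.chain_of_triangle ih hn hX hY (K := {x, u, w})
      (by simp [Finset.insert_subset_iff, hxC, hu, hw]) ?_ ?_ ⟨x, by simp, hx⟩)
    · simp [SimpleGraph.isClique_insert, a, b, c]
    · exact (Finset.card_eq_three.2 ⟨x, u, w, a.ne, b.ne, c.ne, rfl⟩).ge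
  have hsX : IsSparse G C X := ⟨hX, fun x hx => htri x (h.subX hx) (.inl hx)⟩
  have hsY : IsSparse G C Y := ⟨hY, fun y hy => htri y (h.subY hy) (.inr hy)⟩
  have h1 := h.cardX
  have h2 := h.cardY
  obtain ⟨A, hA⟩ := exists_isMaxJoin (G := G) (C := C) (X := X) (Finset.card_pos.1 (by omega))
  obtain ⟨A', hA'⟩ := exists_isMaxJoin (G := G) (C := C) (X := Y) (Finset.card_pos.1 (by omega))
  rcases h.chain_or_eq ih hn hsX hsY hA hA' with h' | ⟨rfl, h'⟩
  · exact h'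
  · exact h.chain_of_cnbs_eq ih hn hsX hA h'

theorem iHyp (n : ℕ) : IHyp G n := by
  induction n using Nat.strong_induction_on with
  | _ n ih =>
    intro k z C X Y hC h
    exact h.chain_of_red (ih _ hC) rfl fun k z C' X Y hn h => h.chain (ih _ hC) hn

/-- Two attachment sets of a set of minimum degree about `k` are joined by paths of `k` lengths,
consecutive ones differing by at most two. -/
theorem Inst.chain {k : ℕ} {z : V} {C X Y : Finset V} (h : Inst G k z C X Y) :
    Chain k (Link G C X Y) :=
  iHyp (C.card + 1) k z C X Y (Nat.lt_succ_self _) h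

theorem PathIn.hasCycleLength {C : Finset V} {u v : V} {n : ℕ} (h : PathIn G C u v (n + 2))
    (a : G.Adj v u) : HasCycleLength G (n + 3) := by
  obtain ⟨p, hp, -, hl⟩ := h.exists_walk
  refine ⟨v, .cons a p, ?_, by simp [hl]⟩
  rw [Walk.cons_isCycle_iff]
  refine ⟨hp, fun he => ?_⟩
  rw [Sym2.eq_swap] at he
  have := hp.length_eq_one_of_mem_edges he
  omega

theorem Chain.exists_mem_window {k L : ℕ} {P : ℕ → Prop} (h : Chain k P) (hk : 1 ≤ k)
    (hL : 2 ≤ L) : ∃ m, ∀ i, i + 1 < k + L → ∃ n, P n ∧ n ≤ m + i ∧ m + i < n + L := by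
  obtain ⟨f, hf, hs⟩ := h
  have key : ∀ j < k, f 0 + j ≤ f j ∧
      ∀ i, f 0 + i < f j + L → ∃ n, P n ∧ n ≤ f 0 + i ∧ f 0 + i < n + L := by
    intro j
    induction j with
    | zero => exact fun hj => ⟨le_rfl, fun i hi => ⟨f 0, hf 0 hj, by omega, hi⟩⟩
    | succ j ih =>
      intro hj
      obtain ⟨h1, h2⟩ := ih (by omega)
      have h3 := hs j hj
      refine ⟨by omega, fun i hi => ?_⟩
      by_cases h4 : f 0 + i < f j + L
      · exact h2 i h4
      · exact ⟨f (j + 1), hf _ hj, by omega, hi⟩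
  obtain ⟨h1, h2⟩ := key (k - 1) (by omega)
  exact ⟨f 0, fun i hi => h2 i (by omega)⟩

/-- Deleting at most one vertex does not disconnect `G`. -/
def NoCut (G : SimpleGraph V) : Prop :=
  ∀ (c : V) (M : Finset V), c ∉ M → M.Nonempty → (∀ u ∈ M, ∀ w, G.Adj u w → w ∈ M ∨ w = c) →
    ∀ w, w ∈ M ∨ w = c

theorem KConnected.noCut (h : KConnected G 2) : NoCut G := by
  intro c M hc ⟨m, hm⟩ hM w
  by_cases hw : w = c
  · exact .inr hw
  have hconn := h.2 {c} (Set.finite_singleton c) (by simp)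
  have hmc : m ≠ c := fun e => hc (e ▸ hm)
  obtain ⟨p⟩ := hconn.preconnected ⟨m, by simpa using hmc⟩ ⟨w, by simpa using hw⟩
  suffices ∀ x y : ({c}ᶜ : Set V), (G.induce ({c}ᶜ : Set V)).Walk x y →
      (x : V) ∈ M → (y : V) ∈ M from
    .inl (this _ _ p hm)
  intro x y p
  induction p with
  | nil => exact id
  | @cons x y z a p ih =>
    intro hx
    exact ih ((hM x hx y a).resolve_right y.2)

theorem pathIn_three {D : Finset V} {p q r s : V} (hp : p ∈ D) (hq : q ∈ D) (hr : r ∈ D)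
    (hs : s ∈ D) (hpq : G.Adj p q) (hqr : G.Adj q r) (hrs : G.Adj r s) (hpr : p ≠ r) (hps : p ≠ s)
    (hqs : q ≠ s) : PathIn G D p s 3 := by
  refine .cons hp hpq (.cons ?_ hqr (.cons ?_ hrs (.nil ?_))) <;> simp only [Finset.mem_erase]
  · exact ⟨hpq.ne', hq⟩
  · exact ⟨hqr.ne', hpr.symm, hr⟩
  · exact ⟨hrs.ne', hqs.symm, hps.symm, hs⟩

theorem pathIn_two {D : Finset V} {p q r : V} (hp : p ∈ D) (hq : q ∈ D) (hr : r ∈ D)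
    (hpq : G.Adj p q) (hqr : G.Adj q r) (hpr : p ≠ r) : PathIn G D p r 2 := by
  refine .cons hp hpq (.cons ?_ hqr (.nil ?_)) <;> simp only [Finset.mem_erase]
  · exact ⟨hpq.ne', hq⟩
  · exact ⟨hqr.ne', hpr.symm, hr⟩

theorem pathIn_one {D : Finset V} {p q : V} (hp : p ∈ D) (hq : q ∈ D) (hpq : G.Adj p q) :
    PathIn G D p q 1 :=
  .cons hp hpq (.nil (Finset.mem_erase.2 ⟨hpq.ne', hq⟩))

variable [Fintype V]

theorem NoCut.exists_attached (h : NoCut G) {H : Finset V} (hH : 2 ≤ H.card) {w g : V}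
    (hw : w ∉ H) (hg : g ∈ H) :
    ∃ x ∈ H, x ≠ g ∧ ∃ u ∈ compIn G (Finset.univ \ H) w, G.Adj x u := by
  by_contra! hcon
  obtain ⟨x, hx, hxg⟩ := exists_mem_ne_of_two_le hH g
  rcases h g (compIn G (Finset.univ \ H) w) (fun hg' => (comp_mem hg').2 hg)
    ⟨w, self_mem_compIn (by simp [hw])⟩ (fun u hu y a => by
      rcases comp_adj hu (Finset.mem_univ y) a with h' | h'
      · exact .inl h'
      · exact .inr (by_contra fun hne => hcon y h' hne u hu a.symm)) x with h' | h'
  · exact (comp_mem h').2 hx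
  · exact hxg h'

/-- If a component outside `H` attaches to `X` and `Y`, and every vertex of `X` is joined to every
vertex of `Y` inside `H` by paths of `l + 2` consecutive lengths, then there are `k` cycles of
consecutive lengths as soon as vertices outside `H` lose at most `l` in degree. -/
theorem NoCut.consec_of_attached (h : NoCut G) {H X Y : Finset V} {w : V} {k l a : ℕ}
    (hdeg : ∀ v, k ≤ dg G v Finset.univ) (hw : w ∉ H) (hXH : X ⊆ H)
    (hatt : ∀ x ∈ H, ∀ u ∈ compIn G (Finset.univ \ H) w, G.Adj x u → x ∈ X ∪ Y)
    (hX : ∃ x ∈ X, ∃ u ∈ compIn G (Finset.univ \ H) w, G.Adj x u)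
    (hY : ∃ y ∈ Y, ∃ u ∈ compIn G (Finset.univ \ H) w, G.Adj y u)
    (hdX : ∀ v ∉ H, dg G v X ≤ l + 1) (hdY : ∀ v ∉ H, dg G v Y ≤ l + 1)
    (hdXY : ∀ v ∉ H, dg G v (X ∪ Y) ≤ l + 2) (hl : l + 2 ≤ k)
    (hp : ∀ x ∈ X, ∀ y ∈ Y, ∀ i < l + 2, PathIn G H x y (a + 1 + i)) : HasConsecCycles G k := by
  set C := compIn G (Finset.univ \ H) w with hC
  have hCH : ∀ u ∈ C, u ∉ H := fun u hu => (comp_mem hu).2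
  obtain ⟨x₀, hx₀, u₀, hu₀, a₀⟩ := hX
  obtain ⟨y₀, hy₀, u₁, hu₁, a₁⟩ := hY
  have hwC : w ∈ C := self_mem_compIn (by simp [hw])
  have hadj : ∀ u ∈ C, ∀ y, G.Adj u y → y ∈ C ∨ y ∈ X ∪ Y := fun u hu y b =>
    (comp_adj hu (Finset.mem_univ y) b).imp_right fun h' => hatt y h' u hu b.symm
  have hI : Inst G (k - l - 1) x₀ C (nbs G X C) (nbs G Y C) :=
    { conn := connIn_compIn (by simp [hw])
      subX := nbs_subset
      subY := nbs_subset
      neX := ⟨u₀, mem_nbs.2 ⟨hu₀, x₀, hx₀, a₀⟩⟩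
      neY := ⟨u₁, mem_nbs.2 ⟨hu₁, y₀, hy₀, a₁⟩⟩
      lobe := fun c hc M hM => by
        rcases h c M hM.1.2.1 hM.1.2.2.1 (fun u hu y b => by
          have hu' := hM.1.1 hu
          rcases hadj u hu' y b with h' | h'
          · exact hM.1.2.2.2 u hu y h' b
          rcases Finset.mem_union.1 h' with h' | h'
          · exact absurd (mem_nbs.2 ⟨hu', y, h', b.symm⟩) (hM.2 u hu).1
          · exact absurd (mem_nbs.2 ⟨hu', y, h', b.symm⟩) (hM.2 u hu).2) x₀ with h' | h'
        · exact hCH _ (hM.1.1 h') (hXH hx₀)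
        · exact hCH c hc (h' ▸ hXH hx₀)
      deg := fun v hv _ => by
        have h1 := hdeg v
        have h2 := dg_le_add (G := G) (C := Finset.univ) fun y _ => hadj v hv y
        have h3 := dg_le_add (G := G) (v := v) fun y (hy : y ∈ X ∪ Y) _ => Finset.mem_union.1 hy
        have h4 := dg_le_ind_nbs hv (hdX v (hCH v hv))
        have h5 := dg_le_ind_nbs hv (hdY v (hCH v hv))
        have h6 := hdXY v (hCH v hv)
        have h7 := ind_le_one (X := nbs G X C) (v := v)
        have h8 := ind_le_one (X := nbs G Y C) (v := v)
        interval_cases ind (nbs G X C) v <;> interval_cases ind (nbs G Y C) v <;> omega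
      nz := ⟨w, hwC, fun e => hw (e ▸ hXH hx₀)⟩ }
  obtain ⟨m, hm⟩ := hI.chain.exists_mem_window (L := l + 2) (by omega) (by omega)
  refine ⟨m + a + 3, fun i hi => ?_⟩
  obtain ⟨n, ⟨u, hu, v, hv, p⟩, h1, h2⟩ := hm i (by omega)
  obtain ⟨-, x, hx, hxu⟩ := mem_nbs.1 hu
  obtain ⟨-, y, hy, hyv⟩ := mem_nbs.1 hv
  have q := p.append hyv.symm (hp x hx y hy (m + i - n) (by omega)).symm
    (Finset.disjoint_left.2 hCH)
  rw [show n + (a + 1 + (m + i - n)) + 1 = (m + a + i) + 2 by omega] at q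
  rw [show m + a + 3 + i = m + a + i + 3 by omega]
  exact q.hasCycleLength hxu

theorem consec_of_clique {k : ℕ} {K : Finset V} (h : NoCut G) (hdeg : ∀ v, k ≤ dg G v Finset.univ)
    (hcard : k + 2 ≤ Fintype.card V) (hK : G.IsClique K) (h4 : 4 ≤ K.card) :
    HasConsecCycles G k := by
  obtain ⟨H, hH, hmax⟩ := Finset.exists_max_image
    (Finset.univ.filter fun K : Finset V => G.IsClique K) Finset.card ⟨K, by simpa using hK⟩
  simp only [Finset.mem_filter, Finset.mem_univ, true_and] at hH hmax
  have hH4 : 4 ≤ H.card := h4.trans (hmax K hK)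
  by_cases hks : k + 2 ≤ H.card
  · obtain ⟨x, hx, y, hy, hxy⟩ := Finset.one_lt_card.1 (show 1 < H.card by omega)
    refine ⟨3, fun i hi => ?_⟩
    rw [Nat.add_comm]
    exact (pathIn_clique (t := i + 1) hH hx hy hxy (by omega)).hasCycleLength
      (hH hy hx hxy.symm)
  obtain ⟨w, -, hw⟩ := Finset.exists_mem_notMem_of_card_lt_card (s := H) (t := Finset.univ)
    (by rw [Finset.card_univ]; omega)
  obtain ⟨g, hg⟩ := Finset.card_pos.1 (show 0 < H.card by omega)
  obtain ⟨x, hx, -, u, hu, a⟩ := h.exists_attached (by omega) hw hg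
  obtain ⟨y, hy, hyx, v, hv, b⟩ := h.exists_attached (by omega) hw hx
  obtain ⟨x', hx', hxx, hxy⟩ := exists_mem_ne_ne (show 3 ≤ H.card by omega) x y
  have hXH : ({x, x'} : Finset V) ⊆ H := by
    intro t ht
    rcases Finset.mem_insert.1 ht with rfl | ht
    · exact hx
    · rwa [Finset.mem_singleton.1 ht]
  have hX2 : ({x, x'} : Finset V).card = 2 := Finset.card_pair hxx.symm
  have hY : (H \ {x, x'}).card = H.card - 2 := by rw [Finset.card_sdiff_of_subset hXH, hX2]
  refine h.consec_of_attached (X := {x, x'}) (Y := H \ {x, x'}) (l := H.card - 3) (a := 0) hdeg hw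
    hXH (fun t ht _ _ _ => ?_) ⟨x, by simp, u, hu, a⟩
    ⟨y, by simp [hy, hyx, hxy.symm], v, hv, b⟩ (fun v _ => ?_) (fun v _ => ?_) (fun v hv => ?_)
    (by omega) fun p hp q hq i hi => ?_
  · rwa [Finset.union_sdiff_of_subset hXH]
  · exact dg_le_card.trans (by omega)
  · exact dg_le_card.trans (by omega)
  · rw [Finset.union_sdiff_of_subset hXH]
    have := dg_lt_card (G := G) (K := H) (v := v) fun hall => by
      have := hmax (insert v H) (by
        rw [Finset.coe_insert]
        exact hH.insert fun t ht _ => hall t ht)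
      rw [Finset.card_insert_of_notMem hv] at this
      omega
    omega
  · rw [Nat.zero_add, Nat.add_comm]
    refine pathIn_clique hH (hXH hp) (Finset.mem_sdiff.1 hq).1 (fun e => ?_) (by omega)
    exact (Finset.mem_sdiff.1 hq).2 (e ▸ hp)

theorem consec_of_triangle {k : ℕ} (h : NoCut G) (hdeg : ∀ v, k ≤ dg G v Finset.univ)
    (hk : 2 ≤ k) (hcard : k + 2 ≤ Fintype.card V)
    (hK : ∀ b c a d, G.Adj b c → G.Adj a b → G.Adj a c → G.Adj d b → G.Adj d c → a = d)
    {T : Finset V} (hT : G.IsNClique 3 T) : HasConsecCycles G k := by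
  have hT3 := hT.card_eq
  obtain ⟨w, -, hw⟩ := Finset.exists_mem_notMem_of_card_lt_card (s := T) (t := Finset.univ)
    (by rw [Finset.card_univ]; omega)
  obtain ⟨g, hg⟩ := Finset.card_pos.1 (show 0 < T.card by omega)
  obtain ⟨x, hx, -, u, hu, a⟩ := h.exists_attached (by omega) hw hg
  obtain ⟨y, hy, hyx, v, hv, b⟩ := h.exists_attached (by omega) hw hx
  have hYe : (T.erase x).card = 2 := by rw [Finset.card_erase_of_mem hx, hT3]
  have hdY : ∀ v ∉ T, dg G v (T.erase x) ≤ 0 + 1 := fun v hv => by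
    have := dg_lt_card (G := G) (K := T.erase x) (v := v) fun hall => hv <| by
      obtain ⟨p, q, hpq, he⟩ := Finset.card_eq_two.1 hYe
      have hp : p ∈ T.erase x := he ▸ Finset.mem_insert_self _ _
      have hq : q ∈ T.erase x := he ▸ Finset.mem_insert_of_mem (Finset.mem_singleton_self _)
      obtain ⟨hpx, hpT⟩ := Finset.mem_erase.1 hp
      obtain ⟨hqx, hqT⟩ := Finset.mem_erase.1 hq
      exact hK p q v x (hT.1 hpT hqT hpq) (hall p hp) (hall q hq) (hT.1 hx hpT hpx.symm)
        (hT.1 hx hqT hqx.symm) ▸ hx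
    omega
  have hXY : {x} ∪ T.erase x = T := by
    rw [← Finset.insert_eq, Finset.insert_erase hx]
  have hdX : ∀ v, dg G v {x} ≤ 0 + 1 := fun v => dg_le_card
  refine h.consec_of_attached (X := {x}) (Y := T.erase x) (l := 0) (a := 0) hdeg hw
    (Finset.singleton_subset_iff.2 hx) (fun t ht _ _ _ => hXY.symm ▸ ht)
    ⟨x, by simp, u, hu, a⟩ ⟨y, by simp [hy, hyx], v, hv, b⟩ (fun v _ => hdX v) hdY
    (fun v hv => ?_) hk fun p hp q hq i hi => ?_
  · have h1 := dg_le_add (G := G) (v := v) fun y (hy : y ∈ {x} ∪ T.erase x) _ =>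
      Finset.mem_union.1 hy
    have h2 := hdX v
    have h3 := hdY v hv
    omega
  · rw [Finset.mem_singleton] at hp
    rw [Finset.mem_erase] at hq
    rw [Nat.zero_add, Nat.add_comm, hp]
    exact pathIn_clique hT.1 hx hq.2 hq.1.symm (by omega)

theorem consec_of_diamond {k : ℕ} (h : NoCut G) (hdeg : ∀ v, k ≤ dg G v Finset.univ)
    (hcard : k + 2 ≤ Fintype.card V) (hK : ∀ K : Finset V, G.IsClique K → K.card ≤ 3)
    {b c a d : V} (hbc : G.Adj b c) (hab : G.Adj a b) (hac : G.Adj a c) (hdb : G.Adj d b)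
    (hdc : G.Adj d c) (had : a ≠ d) : HasConsecCycles G k := by
  obtain ⟨H, hH⟩ : ∃ H : Finset V, H = {b, c, a, d} := ⟨_, rfl⟩
  have hmem : ∀ t, t ∈ H ↔ t = b ∨ t = c ∨ t = a ∨ t = d := by simp [hH]
  have hb : b ∈ H := by simp [hH]
  have hc : c ∈ H := by simp [hH]
  have ha : a ∈ H := by simp [hH]
  have hd : d ∈ H := by simp [hH]
  by_cases hk : k ≤ 2
  · refine ⟨3, fun i hi => ?_⟩
    obtain rfl | rfl : i = 0 ∨ i = 1 := by omega
    · exact (pathIn_two hb hc ha hbc hac.symm hab.ne').hasCycleLength hab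
    · exact (pathIn_three ha hb hd hc hab hdb.symm hdc had hac.ne hbc.ne).hasCycleLength hac.symm
  have hH4 : H.card ≤ 4 := hH ▸ Finset.card_le_four
  have hH2 : 2 ≤ H.card := Finset.one_lt_card.2 ⟨b, hb, c, hc, hbc.ne⟩
  obtain ⟨w, -, hw⟩ := Finset.exists_mem_notMem_of_card_lt_card (s := H) (t := Finset.univ)
    (by rw [Finset.card_univ]; omega)
  have hatt := fun g => h.exists_attached (g := g) hH2 hw
  have hpath : ∀ p q r s, p ∈ H → q ∈ H → r ∈ H → s ∈ H → G.Adj p q → G.Adj r p → G.Adj r q →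
      G.Adj s p → G.Adj s q → r ≠ s → ∀ i < 1 + 2, PathIn G H p r (0 + 1 + i) := by
    intro p q r s hp hq hr hs hpq hrp hrq hsp hsq hrs i hi
    obtain rfl | rfl | rfl : i = 0 ∨ i = 1 ∨ i = 2 := by omega
    · exact pathIn_one hp hr hrp.symm
    · exact pathIn_two hp hq hr hpq hrq.symm hrp.ne'
    · exact pathIn_three hp hs hq hr hsp.symm hsq hrq.symm hpq.ne hrp.ne' hrs.symm
  have hone : ∀ x v : V, dg G v {x} ≤ 0 + 1 := fun _ _ => dg_le_card
  have hpair : ∀ x y v : V, dg G v {x, y} ≤ 2 := fun _ _ _ => dg_le_card.trans Finset.card_le_two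
  by_cases h₁ : ∃ t ∈ ({b, c} : Finset V), ∃ u ∈ compIn G (Finset.univ \ H) w, G.Adj t u
  · by_cases h₂ : ∃ t ∈ ({a, d} : Finset V), ∃ u ∈ compIn G (Finset.univ \ H) w, G.Adj t u
    · have he : ({b, c} ∪ {a, d} : Finset V) = H := by
        rw [hH, Finset.insert_union, ← Finset.insert_eq]
      refine h.consec_of_attached (l := 1) (a := 0) hdeg hw (fun t ht => ?_)
        (fun t ht _ _ _ => ?_) h₁ h₂ (fun v _ => hpair b c v) (fun v _ => hpair a d v)
        (fun v hv => ?_) (by omega) fun p hp q hq => ?_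
      · simp only [Finset.mem_insert, Finset.mem_singleton] at ht
        rcases ht with rfl | rfl <;> assumption
      · rwa [he]
      · rw [he]
        have := dg_lt_card (G := G) (K := H) (v := v) fun hall => by
          have h3 : G.IsNClique 3 {b, c, a} := is3Clique_triple_iff.2 ⟨hbc, hab.symm, hac.symm⟩
          have h4 := h3.insert (a := v) fun t ht => hall t (by
            simp only [Finset.mem_insert, Finset.mem_singleton] at ht
            rcases ht with rfl | rfl | rfl <;> assumption)
          have := hK _ h4.1
          rw [h4.card_eq] at this
          omega
        omega
      · simp only [Finset.mem_insert, Finset.mem_singleton] at hp hq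
        rcases hp with rfl | rfl <;> rcases hq with rfl | rfl
        · exact hpath _ c _ d hb hc ha hd hbc hab hac hdb hdc had
        · exact hpath _ c _ a hb hc hd ha hbc hdb hdc hab hac had.symm
        · exact hpath _ b _ d hc hb ha hd hbc.symm hac hab hdc hdb had
        · exact hpath _ b _ a hc hb hd ha hbc.symm hdc hdb hac hab had.symm
    · push Not at h₂
      have hcase : ∀ t ∈ H, ∀ u ∈ compIn G (Finset.univ \ H) w, G.Adj t u → t = b ∨ t = c := by
        intro t ht u hu e
        rcases (hmem t).1 ht with rfl | rfl | rfl | rfl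
        · exact .inl rfl
        · exact .inr rfl
        · exact absurd e (h₂ _ (by simp) u hu)
        · exact absurd e (h₂ _ (by simp) u hu)
      obtain ⟨x, hx, hxc, u, hu, e⟩ := hatt c hc
      obtain ⟨y, hy, hyb, v, hv, f⟩ := hatt b hb
      obtain rfl := (hcase x hx u hu e).resolve_right hxc
      obtain rfl := (hcase y hy v hv f).resolve_left hyb
      refine h.consec_of_attached (X := {x}) (Y := {y}) (l := 0) (a := 0) hdeg hw (by simpa)
        (fun t ht u hu e => by simpa using hcase t ht u hu e) ⟨x, by simp, u, hu, e⟩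
        ⟨y, by simp, v, hv, f⟩ (fun v _ => hone _ v) (fun v _ => hone _ v)
        (fun v _ => hpair x y v) (by omega) fun p hp q hq i hi => ?_
      rw [Finset.mem_singleton] at hp hq
      subst hp hq
      obtain rfl | rfl : i = 0 ∨ i = 1 := by omega
      · exact pathIn_one hb hc hbc
      · exact pathIn_two hb ha hc hab.symm hac hbc.ne
  · push Not at h₁
    have hcase : ∀ t ∈ H, ∀ u ∈ compIn G (Finset.univ \ H) w, G.Adj t u → t = a ∨ t = d := by
      intro t ht u hu e
      rcases (hmem t).1 ht with rfl | rfl | rfl | rfl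
      · exact absurd e (h₁ _ (by simp) u hu)
      · exact absurd e (h₁ _ (by simp) u hu)
      · exact .inl rfl
      · exact .inr rfl
    obtain ⟨x, hx, hxd, u, hu, e⟩ := hatt d hd
    obtain ⟨y, hy, hya, v, hv, f⟩ := hatt a ha
    obtain rfl := (hcase x hx u hu e).resolve_right hxd
    obtain rfl := (hcase y hy v hv f).resolve_left hya
    refine h.consec_of_attached (X := {x}) (Y := {y}) (l := 0) (a := 1) hdeg hw (by simpa)
      (fun t ht u hu e => by simpa using hcase t ht u hu e) ⟨x, by simp, u, hu, e⟩
      ⟨y, by simp, v, hv, f⟩ (fun v _ => hone _ v) (fun v _ => hone _ v)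
      (fun v _ => hpair x y v) (by omega) fun p hp q hq i hi => ?_
    rw [Finset.mem_singleton] at hp hq
    subst hp hq
    obtain rfl | rfl : i = 0 ∨ i = 1 := by omega
    · exact pathIn_two ha hb hd hab hdb.symm had
    · exact pathIn_three ha hb hc hd hab hbc hdc.symm hac.ne had hdb.ne'

end

/-- Gao–Huo–Ma: a 2-connected graph with a triangle, minimum degree at least `k ≥ 2`
and order at least `k + 2` contains `k` cycles of consecutive lengths. -/
theorem consec_cycles_of_triangle {V : Type*} [Fintype V] (G : SimpleGraph V) (k : ℕ)
    (hk : 2 ≤ k) (h2 : KConnected G 2) (htri : ¬ G.CliqueFree 3)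
    (hdeg : ∀ v, k ≤ (G.neighborSet v).ncard) (hcard : k + 2 ≤ Nat.card V) :
    HasConsecCycles G k := by
  classical
  have hdeg' : ∀ v, k ≤ dg G v Finset.univ := fun v => by
    have := hdeg v
    rwa [show G.neighborSet v = ((Finset.univ.filter (G.Adj v) : Finset V) : Set V) by ext; simp,
      Set.ncard_coe_finset] at this
  rw [Nat.card_eq_fintype_card] at hcard
  have hcut := h2.noCut
  by_cases hK : ∀ K : Finset V, G.IsClique K → K.card ≤ 3
  swap
  · push Not at hK
    obtain ⟨K, hK, h4⟩ := hK
    exact consec_of_clique hcut hdeg' hcard hK h4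
  by_cases hd : ∀ b c a d, G.Adj b c → G.Adj a b → G.Adj a c → G.Adj d b → G.Adj d c → a = d
  swap
  · push Not at hd
    obtain ⟨b, c, a, d, hbc, hab, hac, hdb, hdc, had⟩ := hd
    exact consec_of_diamond hcut hdeg' hcard hK hbc hab hac hdb hdc had
  unfold CliqueFree at htri
  push Not at htri
  obtain ⟨T, hT⟩ := htri
  exact consec_of_triangle hcut hdeg' hk hcard hd hT
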